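/- arXiv:2505.06130 — 3 statements merged into one kernel-verified Lean document; each statement's English description precedes it below -/
import Mathlib

section
/- Let k, l, m ≥ 2 be integers and let r be a unit in ℤ/lcm(k,l,m)ℤ. Then every group is (k,l,m,r)-quasi-Burnside if and only if 1/k + 1/l + 1/m ≥ 1 or r ∈ {1, -1} in ℤ/lcm(k,l,m)ℤ. -/
/-!
Sufficiency. For `r = ±1` the triples `(x, y, z)` and `(x⁻¹, x y⁻¹ x⁻¹, z⁻¹)` with `x y z = 1`
do the job. If `1/k + 1/l + 1/m ≥ 1`, then up to permuting the exponents the only cases with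
further units are `(2,2,m)`, `(2,3,4)` and `(2,3,5)`. They are settled by words in the dihedral,
octahedral and icosahedral groups: for example, in the last two cases `y ~ y⁻¹` and `z ~ z⁻¹`.
See `tripleProp_of_one_le`.

Necessity. Let `1/k + 1/l + 1/m < 1`. The universal cover `Cover` of `SU(1,1)` contains conjugates
`X, Y, Z` of the lifted rotations by `π/k`, `π/l`, `π/m` (half the rotation angle on the disc) with
`X Y Z = T`, where `T`, the lifted rotation by `π`, is central (`Cover.exists_triangle`: a
hyperbolic triangle with angles `π/k`, `π/l`, `π/m`). Hence `X^k = Y^l = Z^m = X Y Z = T`.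

In a plain triangle group the exponents of `X, Y, Z` are only known modulo `k, l, m`. To control
them together, the property is applied to `(Cover × ℤ³)/N`, where `N` is generated by the central
elements `(T,k,0,0)`, `(T,0,l,0)`, `(T,0,0,m)`, `(T,1,1,1)`, and to the images of `(X,1,0,0)`,
`(Y,0,1,0)`, `(Z,0,0,1)`. Reading the resulting relation coordinate by coordinate yields one
integer `e` congruent to `r` modulo each of `k`, `l`, `m`, such that some conjugates of
`X^e, Y^e, Z^e` have product `T^e` (`exists_exponent`).

Finally, such an `e` satisfies `e ≤ 1` (`Cover.exponent_le_one`): remove from the three rotations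
their integral multiples of `π`, leaving angles in `(0, π)`. The lifted angle of the product of two
such conjugates, if that product is a rotation by at least `π` about the origin, is at most the sum
of the two angles (`Cover.angle_of_mul_eq_rot`), and this bounds the area `e(1 - 1/k - 1/l - 1/m)`.
Inverting the relation gives `-e ≤ 1`, and `e ≠ 0` since `r` is a unit. So `e = ±1`, and
`r = ±1` modulo `lcm(k,l,m)`.
-/

/-- A group `G` is `(k,l,m,r)`-quasi-Burnside (with `r` a unit of `ZMod n`, where
`n = lcm(k,l,m)`): for every integer representative `ρ` of `r` and all `x, y, z ∈ G`
with `x * y = z` and `x^k = y^l = z^m = 1`, there exist `x', y', z'` with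
`x' * y' = z'`, `x' ~ x^ρ`, `y' ~ y^ρ`, `z' ~ z^ρ`. -/
def IsQuasiBurnsideWith (k l m n : ℕ) (r : (ZMod n)ˣ) (G : Type*) [Group G] : Prop :=
  ∀ ρ : ℤ, ((ρ : ZMod n) = (r : ZMod n)) →
    ∀ x y z : G, x * y = z → x ^ k = 1 → y ^ l = 1 → z ^ m = 1 →
      ∃ x' y' z' : G, x' * y' = z' ∧
        IsConj (x ^ ρ) x' ∧ IsConj (y ^ ρ) y' ∧ IsConj (z ^ ρ) z'

universe u

/-! ### Spherical and Euclidean triples -/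

/-- The symmetric form of the quasi-Burnside property for a fixed representative `ρ`: triples with
`x * y * z = 1` in place of `x * y = z`, so that the three exponents can be permuted. -/
def TripleProp (k l m : ℕ) (ρ : ℤ) (G : Type*) [Group G] : Prop :=
  ∀ x y z : G, x * y * z = 1 → x ^ k = 1 → y ^ l = 1 → z ^ m = 1 →
    ∃ x' y' z' : G, x' * y' * z' = 1 ∧
      IsConj (x ^ ρ) x' ∧ IsConj (y ^ ρ) y' ∧ IsConj (z ^ ρ) z'

section Triples
variable {G : Type*} [Group G] {k l m : ℕ} {ρ : ℤ}

theorem isConj_inv {a b : G} (h : IsConj a b) : IsConj a⁻¹ b⁻¹ := by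
  obtain ⟨c, rfl⟩ := isConj_iff.mp h
  exact isConj_iff.mpr ⟨c, by group⟩

theorem isConj_zpow {a b : G} (h : IsConj a b) (n : ℤ) : IsConj (a ^ n) (b ^ n) := by
  obtain ⟨c, rfl⟩ := isConj_iff.mp h
  exact isConj_iff.mpr ⟨c, by simp [conj_zpow]⟩

theorem TripleProp.rotate (h : TripleProp k l m ρ G) : TripleProp l m k ρ G := by
  intro x y z hxyz hx hy hz
  obtain ⟨x', y', z', h1, h2, h3, h4⟩ := h z x y
    (by rw [mul_assoc]; exact mul_eq_one_iff_eq_inv.mpr (eq_inv_of_mul_eq_one_right hxyz)) hz hx hy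
  refine ⟨y', z', x', ?_, h3, h4, h2⟩
  have h5 : x' = (y' * z')⁻¹ := eq_inv_of_mul_eq_one_left (by rw [← mul_assoc]; exact h1)
  rw [h5, mul_inv_cancel]

theorem TripleProp.swap (h : TripleProp k l m ρ G) : TripleProp k m l ρ G := by
  intro x y z hxyz hx hy hz
  obtain ⟨x', y', z', h1, h2, h3, h4⟩ := h x (y * z * y⁻¹) y
    (by rw [← hxyz]; group) hx (by rw [conj_pow, hz]; group) hy
  refine ⟨x', y' * z' * y'⁻¹, y', ?_, h2, ?_, ?_⟩
  · rw [← h1]; group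
  · exact h4.trans (isConj_iff.mpr ⟨y', rfl⟩)
  · refine IsConj.trans ?_ h3
    rw [conj_zpow]
    exact isConj_iff.mpr ⟨y, rfl⟩

theorem TripleProp.toQuasi (h : TripleProp k l m ρ G) {x y z : G} (hxyz : x * y = z)
    (hx : x ^ k = 1) (hy : y ^ l = 1) (hz : z ^ m = 1) :
    ∃ x' y' z' : G, x' * y' = z' ∧
        IsConj (x ^ ρ) x' ∧ IsConj (y ^ ρ) y' ∧ IsConj (z ^ ρ) z' := by
  obtain ⟨x', y', z', h1, h2, h3, h4⟩ := h x y z⁻¹ (by rw [hxyz]; group) hx hy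
    (by rw [inv_pow, hz, inv_one])
  refine ⟨x', y', z'⁻¹, eq_inv_of_mul_eq_one_left h1, h2, h3, ?_⟩
  simpa using isConj_inv h4

theorem zpow_eq_of_dvd {x : G} (hx : x ^ k = 1) {s : ℤ} (h : (k : ℤ) ∣ ρ - s) :
    x ^ ρ = x ^ s := by
  obtain ⟨q, hq⟩ := h
  have : ρ = k * q + s := by linarith
  rw [this, zpow_add, zpow_mul, zpow_natCast, hx, one_zpow, one_mul]

theorem tripleProp_of_one (h1 : (k : ℤ) ∣ ρ - 1) (h2 : (l : ℤ) ∣ ρ - 1) (h3 : (m : ℤ) ∣ ρ - 1) :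
    TripleProp k l m ρ G := by
  intro x y z hxyz hx hy hz
  refine ⟨x, y, z, hxyz, ?_, ?_, ?_⟩
  · rw [zpow_eq_of_dvd hx h1, zpow_one]
  · rw [zpow_eq_of_dvd hy h2, zpow_one]
  · rw [zpow_eq_of_dvd hz h3, zpow_one]

theorem tripleProp_of_neg_one (h1 : (k : ℤ) ∣ ρ + 1) (h2 : (l : ℤ) ∣ ρ + 1)
    (h3 : (m : ℤ) ∣ ρ + 1) : TripleProp k l m ρ G := by
  intro x y z hxyz hx hy hz
  refine ⟨x⁻¹, x * y⁻¹ * x⁻¹, z⁻¹, ?_, ?_, ?_, ?_⟩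
  · have : z = (x * y)⁻¹ := eq_inv_of_mul_eq_one_right hxyz
    rw [this]; group
  · rw [zpow_eq_of_dvd hx (s := -1) (by simpa using h1), zpow_neg_one]
  · rw [zpow_eq_of_dvd hy (s := -1) (by simpa using h2), zpow_neg_one]
    exact isConj_iff.mpr ⟨x, rfl⟩
  · rw [zpow_eq_of_dvd hz (s := -1) (by simpa using h3), zpow_neg_one]

/-- For involutions `x, y`, conjugating `y` by a power of `y * x` turns `x * y` into its odd powers. -/
theorem tripleProp_dihedral (hρ : ¬ (2 : ℤ) ∣ ρ) : TripleProp 2 2 m ρ G := by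
  intro x y z hxyz hx hy hz
  obtain ⟨n, rfl⟩ : Odd ρ := by rw [← Int.not_even_iff_odd, even_iff_two_dvd]; exact hρ
  have hx' : x⁻¹ = x := inv_eq_of_mul_eq_one_left (by rw [← sq, hx])
  have hy' : y⁻¹ = y := inv_eq_of_mul_eq_one_left (by rw [← sq, hy])
  have hz' : z = (x * y)⁻¹ := eq_inv_of_mul_eq_one_right hxyz
  refine ⟨x, (y * x) ^ n * y * ((y * x) ^ n)⁻¹, z ^ (2 * n + 1), ?_, ?_, ?_, IsConj.refl _⟩
  · have h1 : ((y * x) ^ n)⁻¹ = (x * y) ^ n := by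
      rw [← inv_zpow, mul_inv_rev, hx', hy']
    have h2 : x * (y * x) ^ n = (x * y) ^ n * x := by
      have : y * x = x⁻¹ * (x * y) * x := by group
      have h3 := conj_zpow (a := x⁻¹) (b := x * y) (i := n)
      rw [inv_inv] at h3
      rw [this, h3]; group
    have h4 : x * ((y * x) ^ n * y * ((y * x) ^ n)⁻¹) = (x * y) ^ (2 * n + 1) := by
      rw [h1, ← mul_assoc, ← mul_assoc, h2, mul_assoc ((x * y) ^ n), ← zpow_add_one,
        ← zpow_add]
      congr 1; ring
    rw [h4, hz', inv_zpow, mul_inv_cancel]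
  · rw [zpow_eq_of_dvd hx (s := 1) (by simp), zpow_one]
  · rw [zpow_eq_of_dvd hy (s := 1) (by simp), zpow_one]
    exact isConj_iff.mpr ⟨_, rfl⟩

set_option linter.unusedSimpArgs false in
/-- Under the octahedral relations, `y` and `x * y` are conjugate to their inverses.
Here `Y` is `y⁻¹`; a letter of its own makes `simp` rewrite words in `x, y, Y` towards normal forms. -/
theorem words_two_three_four {x y Y : G} (xx : x * x = 1) (yY : y * Y = 1) (yy : y * y = Y)
    (hz : (x * y) ^ 4 = 1) : IsConj y Y ∧ IsConj (x * y) (Y * x) := by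
  have Yy : Y * y = 1 := by rw [mul_eq_one_iff_eq_inv] at yY ⊢; rw [yY]; simp
  have YY : Y * Y = y := by
    calc Y * Y = Y * (y * y) := by rw [yy]
      _ = y := by rw [← mul_assoc, Yy, one_mul]
  have xx' (w : G) : x * (x * w) = w := by rw [← mul_assoc, xx, one_mul]
  have yY' (w : G) : y * (Y * w) = w := by rw [← mul_assoc, yY, one_mul]
  have Yy' (w : G) : Y * (y * w) = w := by rw [← mul_assoc, Yy, one_mul]
  have yy' (w : G) : y * (y * w) = Y * w := by rw [← mul_assoc, yy]
  have YY' (w : G) : Y * (Y * w) = y * w := by rw [← mul_assoc, YY]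
  -- the relation `(x * y) ^ 4 = 1`, cut in the middle, as a rewriting rule; primed versions carry
  -- a tail because words are associated to the right
  have r1 : x * (y * (x * y)) = Y * (x * (Y * x)) := by
    calc x * (y * (x * y)) = (x * y) ^ 4 * (Y * (x * (Y * x))) := by
          simp only [pow_succ, pow_zero, one_mul, mul_assoc, xx', yY', xx, yY, mul_one]
      _ = _ := by rw [hz, one_mul]
  have r1' (w : G) : x * (y * (x * (y * w))) = Y * (x * (Y * (x * w))) := by
    have := congrArg (· * w) r1
    simpa only [mul_assoc] using this
  have iY : Y⁻¹ = y := inv_eq_of_mul_eq_one_right Yy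
  have iy : y⁻¹ = Y := inv_eq_of_mul_eq_one_right yY
  have ix : x⁻¹ = x := inv_eq_of_mul_eq_one_right xx
  constructor
  · refine isConj_iff.mpr ⟨x * y * x * Y * x, ?_⟩
    simp only [mul_inv_rev, ix, iy, iY, mul_assoc, r1', r1, xx', yY', yy', YY', Yy', xx, yY, Yy,
      yy, YY, mul_one]
  · refine isConj_iff.mpr ⟨y * x * Y, ?_⟩
    have r2 : x * (Y * (x * Y)) = y * (x * (y * x)) := by
      have := congrArg (fun w => x * (w * x)) r1
      simpa only [mul_assoc, xx', yY', Yy', xx, yY, Yy, mul_one] using this.symm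
    simp only [mul_inv_rev, ix, iy, iY, mul_assoc, r2, xx', yY', yy', YY', Yy', xx, yY, Yy,
      yy, YY, mul_one]

set_option linter.unusedSimpArgs false in
/-- Under the icosahedral relations, `y` and `x * y` are conjugate to their inverses, and the
product of `x` with a suitable conjugate of `y` is conjugate to `(x * y) ^ 2`. As in the octahedral case, `Y`
stands for `y⁻¹`. -/
theorem words_two_three_five {x y Y : G} (xx : x * x = 1) (yY : y * Y = 1) (yy : y * y = Y)
    (hz : (x * y) ^ 5 = 1) : IsConj y Y ∧ IsConj (x * y) (Y * x) ∧
      x * ((y * x * y * x) * y * (y * x * y * x)⁻¹) = Y * (x * y) ^ 2 * Y⁻¹ := by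
  have Yy : Y * y = 1 := by rw [mul_eq_one_iff_eq_inv] at yY ⊢; rw [yY]; simp
  have YY : Y * Y = y := by
    calc Y * Y = Y * (y * y) := by rw [yy]
      _ = y := by rw [← mul_assoc, Yy, one_mul]
  have xx' (w : G) : x * (x * w) = w := by rw [← mul_assoc, xx, one_mul]
  have yY' (w : G) : y * (Y * w) = w := by rw [← mul_assoc, yY, one_mul]
  have Yy' (w : G) : Y * (y * w) = w := by rw [← mul_assoc, Yy, one_mul]
  have yy' (w : G) : y * (y * w) = Y * w := by rw [← mul_assoc, yy]
  have YY' (w : G) : Y * (Y * w) = y * w := by rw [← mul_assoc, YY]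
  have tail {a b : G} (h : a = b) (w : G) : a * w = b * w := by rw [h]
  have iY : Y⁻¹ = y := inv_eq_of_mul_eq_one_right Yy
  have iy : y⁻¹ = Y := inv_eq_of_mul_eq_one_right yY
  have ix : x⁻¹ = x := inv_eq_of_mul_eq_one_right xx
  -- consequences of `(x * y) ^ 5 = 1` as rewriting rules
  have r1 : x * (y * (x * (y * x))) = Y * (x * (Y * (x * Y))) := by
    calc x * (y * (x * (y * x))) = (x * y) ^ 5 * (Y * (x * (Y * (x * Y)))) := by
          simp only [pow_succ, pow_zero, one_mul, mul_assoc, xx', yY', xx, yY, mul_one]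
      _ = _ := by rw [hz, one_mul]
  have r2 : y * (x * (y * (x * y))) = x * (Y * (x * (Y * x))) := by
    simpa only [mul_inv_rev, ix, iy, iY, mul_assoc] using (congrArg (·⁻¹) r1).symm
  have r3 : x * (Y * (x * (Y * (x * Y)))) = y * (x * (y * x)) := by
    rw [← r1, xx']
  have r4 : Y * (x * (Y * (x * (Y * x)))) = x * (y * (x * y)) := by
    rw [← r2, Yy']
  have r5 : y * (x * (Y * (x * (Y * x)))) = Y * (x * (y * (x * y))) := by
    rw [← r2, yy']
  have r6 : x * (Y * (x * (Y * (x * y)))) = y * (x * (y * (x * Y))) := by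
    have := congrArg (· * Y) r3
    simpa only [mul_assoc, YY] using this
  have r1' := tail r1
  have r2' := tail r2
  have r3' := tail r3
  have r4' := tail r4
  have r5' := tail r5
  have r6' := tail r6
  simp only [mul_assoc] at r1' r2' r3' r4' r5' r6'
  refine ⟨isConj_iff.mpr ⟨x * Y * x * y * x * Y * x * y * x, ?_⟩,
    isConj_iff.mpr ⟨y * x * y * x * Y * x * Y, ?_⟩, ?_⟩
  all_goals simp only [mul_inv_rev, ix, iy, iY, mul_assoc, pow_succ, pow_zero, one_mul, r1, r1',
      r2, r2', r3, r3', r4, r4', r5, r5', r6, r6', xx', yY', yy', YY', Yy', xx, yY, Yy,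
      yy, YY, mul_one]

theorem tripleProp_two_three_four (h2 : ¬ (2 : ℤ) ∣ ρ) (h3 : ¬ (3 : ℤ) ∣ ρ) :
    TripleProp 2 3 4 ρ G := by
  intro x y z hxyz hx hy hz
  have hz' : z⁻¹ = x * y := (eq_inv_of_mul_eq_one_left hxyz).symm
  have hy2 : y * y = y⁻¹ := eq_inv_of_mul_eq_one_left (by rw [← pow_three', hy])
  obtain ⟨hyy, hzz⟩ := words_two_three_four (x := x) (y := y) (Y := y⁻¹) (by rw [← sq, hx])
    (mul_inv_cancel y) hy2 (by rw [← hz', inv_pow, hz, inv_one])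
  have ix : x⁻¹ = x := inv_eq_of_mul_eq_one_right (by rw [← sq, hx])
  have hzz' : IsConj z⁻¹ z := by
    have h : y⁻¹ * x = z := by
      rw [← inv_inv z, hz', mul_inv_rev, ix]
    rwa [← hz', h] at hzz
  refine ⟨x, y, z, hxyz, ?_, ?_, ?_⟩
  · rw [zpow_eq_of_dvd hx (s := 1) (by push_cast; omega), zpow_one]
  · obtain h | h : (3 : ℤ) ∣ ρ - 1 ∨ (3 : ℤ) ∣ ρ - -1 := by omega
    · rw [zpow_eq_of_dvd hy h, zpow_one]
    · rw [zpow_eq_of_dvd hy h, zpow_neg_one]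
      exact hyy.symm
  · obtain h | h : (4 : ℤ) ∣ ρ - 1 ∨ (4 : ℤ) ∣ ρ - -1 := by omega
    · rw [zpow_eq_of_dvd hz h, zpow_one]
    · rw [zpow_eq_of_dvd hz h, zpow_neg_one]
      exact hzz'

theorem tripleProp_two_three_five (h2 : ¬ (2 : ℤ) ∣ ρ) (h3 : ¬ (3 : ℤ) ∣ ρ)
    (h5 : ¬ (5 : ℤ) ∣ ρ) : TripleProp 2 3 5 ρ G := by
  intro x y z hxyz hx hy hz
  have hz' : z⁻¹ = x * y := (eq_inv_of_mul_eq_one_left hxyz).symm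
  have hy2 : y * y = y⁻¹ := eq_inv_of_mul_eq_one_left (by rw [← pow_three', hy])
  obtain ⟨hyy, hzz, hw⟩ := words_two_three_five (x := x) (y := y) (Y := y⁻¹) (by rw [← sq, hx])
    (mul_inv_cancel y) hy2 (by rw [← hz', inv_pow, hz, inv_one])
  have ix : x⁻¹ = x := inv_eq_of_mul_eq_one_right (by rw [← sq, hx])
  have hzz' : IsConj z⁻¹ z := by
    have h : y⁻¹ * x = z := by
      rw [← inv_inv z, hz', mul_inv_rev, ix]
    rwa [← hz', h] at hzz
  have hxρ : x ^ ρ = x := by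
    rw [zpow_eq_of_dvd hx (s := 1) (by push_cast; omega), zpow_one]
  have hyρ : IsConj (y ^ ρ) y := by
    obtain h | h : (3 : ℤ) ∣ ρ - 1 ∨ (3 : ℤ) ∣ ρ - -1 := by omega
    · rw [zpow_eq_of_dvd hy h, zpow_one]
    · rw [zpow_eq_of_dvd hy h, zpow_neg_one]
      exact hyy.symm
  have hzρ : IsConj (z ^ ρ) z ∨ IsConj (z ^ ρ) (z ^ 2) := by
    obtain h | h | h | h : (5 : ℤ) ∣ ρ - 1 ∨ (5 : ℤ) ∣ ρ - -1 ∨ (5 : ℤ) ∣ ρ - 2 ∨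
      (5 : ℤ) ∣ ρ - -2 := by omega
    · rw [zpow_eq_of_dvd hz h, zpow_one]
      exact Or.inl (IsConj.refl _)
    · rw [zpow_eq_of_dvd hz h, zpow_neg_one]
      exact Or.inl hzz'
    · rw [zpow_eq_of_dvd hz h]
      exact Or.inr (by rw [zpow_ofNat])
    · rw [zpow_eq_of_dvd hz h]
      right
      have := isConj_zpow hzz' 2
      rwa [inv_zpow', zpow_ofNat] at this
  rcases hzρ with hzρ | hzρ
  · exact ⟨x, y, z, hxyz, by rw [hxρ], hyρ, hzρ⟩
  · refine ⟨x, (y * x * y * x) * y * (y * x * y * x)⁻¹, y⁻¹ * z ^ 2 * y⁻¹⁻¹, ?_, by rw [hxρ],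
      hyρ.trans (isConj_iff.mpr ⟨_, rfl⟩), hzρ.trans (isConj_iff.mpr ⟨_, rfl⟩)⟩
    rw [hw, ← hz']
    group

/-- For `k ≤ l ≤ m` the hypothesis leaves `(2,2,m)`, `(2,3,m)` with `m ≤ 6`, `(2,4,4)` and `(3,3,3)`;
where the only units are `±1` the trivial constructions apply. -/
theorem tripleProp_sorted (hk : 2 ≤ k) (hkl : k ≤ l) (hlm : l ≤ m)
    (h : (1 : ℚ) ≤ 1 / k + 1 / l + 1 / m) (h1 : ¬ (k : ℤ) ∣ ρ) (h2 : ¬ (l : ℤ) ∣ ρ)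
    (h3 : ¬ (m : ℤ) ∣ ρ) : TripleProp k l m ρ G := by
  have hk0 : (0 : ℚ) < k := by exact_mod_cast (by omega : 0 < k)
  have hl0 : (0 : ℚ) < l := by exact_mod_cast (by omega : 0 < l)
  have hm0 : (0 : ℚ) < m := by exact_mod_cast (by omega : 0 < m)
  have h' : k * l * m ≤ l * m + k * m + k * l := by
    have : (k * l * m : ℚ) ≤ l * m + k * m + k * l := by
      have := mul_le_mul_of_nonneg_left h (by positivity : (0 : ℚ) ≤ k * l * m)
      field_simp at this
      linarith
    exact_mod_cast this
  have hρ6 (h1 : ¬ (2 : ℤ) ∣ ρ) (h2 : ¬ (3 : ℤ) ∣ ρ) : (6 : ℤ) ∣ ρ - 1 ∨ (6 : ℤ) ∣ ρ + 1 := by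
    obtain h | h | h | h | h | h : ρ % 6 = 0 ∨ ρ % 6 = 1 ∨ ρ % 6 = 2 ∨ ρ % 6 = 3 ∨ ρ % 6 = 4 ∨
      ρ % 6 = 5 := by omega
    all_goals omega
  have hk3 : k ≤ 3 := by
    by_contra hc
    nlinarith [Nat.mul_le_mul hkl hlm, Nat.mul_le_mul_right m hkl,
      Nat.mul_le_mul_left k hlm, Nat.mul_pos (by omega : 0 < l) (by omega : 0 < m),
      Nat.mul_le_mul_right (l * m) (by omega : 4 ≤ k), Nat.mul_le_mul_left l (hkl.trans hlm)]
  interval_cases k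
  · have hl4 : l ≤ 4 := by
      by_contra hc
      nlinarith [Nat.mul_le_mul_right m (by omega : 5 ≤ l)]
    interval_cases l
    · exact tripleProp_dihedral h1
    · have hm6 : m ≤ 6 := by omega
      push_cast at h1 h2
      interval_cases m
      · obtain h | h := hρ6 h1 h2
        · apply tripleProp_of_one <;> push_cast <;> omega
        · apply tripleProp_of_neg_one <;> push_cast <;> omega
      · exact tripleProp_two_three_four h1 h2
      · exact tripleProp_two_three_five h1 h2 h3
      · obtain h | h := hρ6 h1 h2
        · apply tripleProp_of_one <;> push_cast <;> omega
        · apply tripleProp_of_neg_one <;> push_cast <;> omega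
    · obtain rfl : m = 4 := by omega
      push_cast at h1 h2
      obtain h | h : (4 : ℤ) ∣ ρ - 1 ∨ (4 : ℤ) ∣ ρ + 1 := by omega
      · apply tripleProp_of_one <;> push_cast <;> omega
      · apply tripleProp_of_neg_one <;> push_cast <;> omega
  · have hl3 : l = 3 := by
      by_contra hc
      have : 4 ≤ l := by omega
      nlinarith [Nat.mul_le_mul_right m this]
    subst hl3
    obtain rfl : m = 3 := by omega
    push_cast at h1
    obtain h | h : (3 : ℤ) ∣ ρ - 1 ∨ (3 : ℤ) ∣ ρ + 1 := by omega
    · apply tripleProp_of_one <;> push_cast <;> omega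
    · apply tripleProp_of_neg_one <;> push_cast <;> omega

theorem tripleProp_of_one_le (hk : 2 ≤ k) (hl : 2 ≤ l) (hm : 2 ≤ m)
    (h : (1 : ℚ) ≤ 1 / k + 1 / l + 1 / m) (h1 : ¬ (k : ℤ) ∣ ρ) (h2 : ¬ (l : ℤ) ∣ ρ)
    (h3 : ¬ (m : ℤ) ∣ ρ) : TripleProp k l m ρ G := by
  rcases le_total k l with a | a <;> rcases le_total l m with b | b <;>
    rcases le_total k m with c | c
  · exact tripleProp_sorted hk a b h h1 h2 h3
  · exact tripleProp_sorted hk a b h h1 h2 h3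
  · exact (tripleProp_sorted hk c b (by linarith) h1 h3 h2).swap
  · exact (tripleProp_sorted hm c a (by linarith) h3 h1 h2).rotate
  · exact (tripleProp_sorted hl a c (by linarith) h2 h1 h3).rotate.swap
  · exact (tripleProp_sorted hl b c (by linarith) h2 h3 h1).rotate.rotate
  · exact (tripleProp_sorted hm b a (by linarith) h3 h2 h1).swap.rotate
  · exact (tripleProp_sorted hm b a (by linarith) h3 h2 h1).swap.rotate

end Triples

/-! ### The universal cover of SU(1,1) -/

open Complex ComplexConjugate in
/-- The universal cover of `SU(1,1)`: the matrix with first row `(a, b)` and second row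
`(conj b, conj a)`, of determinant `1`, together with a choice `t` of argument of `a`. -/
@[ext]
structure Cover where
  a : ℂ
  b : ℂ
  t : ℝ
  det : a * conj a = 1 + b * conj b
  polar : a = ‖a‖ * exp (t * I)

namespace Cover
open Complex ComplexConjugate

theorem normSq_a (p : Cover) : ‖p.a‖ ^ 2 = 1 + ‖p.b‖ ^ 2 := by
  have h := p.det
  rw [mul_conj, mul_conj, normSq_eq_norm_sq, normSq_eq_norm_sq] at h
  exact_mod_cast h

theorem norm_lt (p : Cover) : ‖p.b‖ < ‖p.a‖ := by
  have := p.normSq_a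
  exact lt_of_pow_lt_pow_left₀ 2 (norm_nonneg _) (by linarith)

theorem norm_a_pos (p : Cover) : 0 < ‖p.a‖ := (norm_nonneg _).trans_lt p.norm_lt

theorem one_le_norm_a (p : Cover) : 1 ≤ ‖p.a‖ := by
  have := p.normSq_a
  nlinarith [norm_nonneg p.a, sq_nonneg ‖p.b‖]

theorem a_ne (p : Cover) : p.a ≠ 0 := norm_pos_iff.mp p.norm_a_pos

/-- The correction to additivity of the lifted argument of `a`: the first entry of a product is
`p.a * q.a * (1 + p.b * conj q.b / (p.a * q.a))`, and the last factor has positive real part, so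
its principal argument is a continuous choice. -/
noncomputable def cocycle (p q : Cover) : ℝ := arg (1 + p.b * conj q.b / (p.a * q.a))

theorem re_pos (p q : Cover) : 0 < (1 + p.b * conj q.b / (p.a * q.a)).re := by
  have h : ‖p.b * conj q.b / (p.a * q.a)‖ < 1 := by
    rw [norm_div, norm_mul, norm_mul, norm_conj, div_lt_one (mul_pos p.norm_a_pos q.norm_a_pos)]
    exact mul_lt_mul'' p.norm_lt q.norm_lt (norm_nonneg _) (norm_nonneg _)
  have := (abs_le.mp (abs_re_le_norm (p.b * conj q.b / (p.a * q.a)))).1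
  simp only [add_re, one_re]
  linarith

theorem abs_cocycle_lt (p q : Cover) : |cocycle p q| < Real.pi / 2 :=
  abs_arg_lt_pi_div_two_iff.mpr (Or.inl (re_pos p q))

/-- Two elements over the same matrix have arguments differing by a multiple of `2π`, so they agree
as soon as the difference is less than `2π`. -/
theorem eq_of (p q : Cover) (ha : p.a = q.a) (hb : p.b = q.b)
    (ht : |p.t - q.t| < 2 * Real.pi) : p = q := by
  have h : exp (p.t * I) = exp (q.t * I) := by
    have h1 := p.polar
    have h2 := q.polar
    rw [← ha] at h2
    rw [h2] at h1
    have : ((‖p.a‖ : ℝ) : ℂ) ≠ 0 := by exact_mod_cast p.norm_a_pos.ne'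
    have h3 := mul_left_cancel₀ this (h2.symm.trans p.polar)
    exact h3.symm
  obtain ⟨n, hn⟩ := exp_eq_exp_iff_exists_int.mp h
  have h2 : p.t = q.t + n * (2 * Real.pi) := by
    have := congrArg Complex.im hn
    simpa using this
  have h3 : n = 0 := by
    rw [h2, add_sub_cancel_left, abs_mul, abs_of_pos Real.two_pi_pos] at ht
    have h4 : |(n : ℝ)| < 1 := by
      by_contra h5
      push Not at h5
      nlinarith [Real.two_pi_pos]
    have : |n| < 1 := by exact_mod_cast h4
    exact Int.abs_lt_one_iff.mp this
  exact Cover.ext ha hb (by simp [h2, h3])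

noncomputable instance : Mul Cover where
  mul p q :=
    { a := p.a * q.a + p.b * conj q.b
      b := p.a * q.b + p.b * conj q.a
      t := p.t + q.t + cocycle p q
      det := by
        have hp := p.det
        have hq := q.det
        simp only [map_add, map_mul, conj_conj]
        linear_combination (q.a * conj q.a - q.b * conj q.b) * hp + hq
      polar := by
        have h : p.a * q.a + p.b * conj q.b
            = (p.a * q.a) * (1 + p.b * conj q.b / (p.a * q.a)) := by
          field_simp [p.a_ne, q.a_ne]
        rw [h, norm_mul, norm_mul]
        have h1 := p.polar
        have h2 := q.polar
        have h3 := (norm_mul_exp_arg_mul_I (1 + p.b * conj q.b / (p.a * q.a))).symm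
        push_cast
        rw [cocycle, add_mul, add_mul, exp_add, exp_add]
        generalize 1 + p.b * conj q.b / (p.a * q.a) = s at h3 ⊢
        calc p.a * q.a * s = (‖p.a‖ * exp (p.t * I)) * (‖q.a‖ * exp (q.t * I)) *
              (‖s‖ * exp (arg s * I)) := by rw [← h1, ← h2, ← h3]
          _ = _ := by ring }

noncomputable instance : One Cover := ⟨⟨1, 0, 0, by simp, by simp⟩⟩

noncomputable instance : Inv Cover where
  inv p :=
    { a := conj p.a
      b := -p.b
      t := -p.t
      det := by
        simp only [conj_conj, map_neg]
        linear_combination p.det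
      polar := by
        conv_lhs => rw [p.polar]
        simp [← exp_conj] }

@[simp] theorem mul_a (p q : Cover) : (p * q).a = p.a * q.a + p.b * conj q.b := rfl
@[simp] theorem mul_b (p q : Cover) : (p * q).b = p.a * q.b + p.b * conj q.a := rfl
theorem mul_t (p q : Cover) : (p * q).t = p.t + q.t + cocycle p q := rfl
@[simp] theorem one_a : (1 : Cover).a = 1 := rfl
@[simp] theorem one_b : (1 : Cover).b = 0 := rfl
@[simp] theorem one_t : (1 : Cover).t = 0 := rfl
@[simp] theorem inv_a (p : Cover) : (p⁻¹).a = conj p.a := rfl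
@[simp] theorem inv_b (p : Cover) : (p⁻¹).b = -p.b := rfl
@[simp] theorem inv_t (p : Cover) : (p⁻¹).t = -p.t := rfl

theorem cocycle_of_left {p : Cover} (h : p.b = 0) (q : Cover) : cocycle p q = 0 := by
  simp [cocycle, h]

theorem cocycle_of_right (p : Cover) {q : Cover} (h : q.b = 0) : cocycle p q = 0 := by
  simp [cocycle, h]

noncomputable instance : Group Cover :=
  Group.ofLeftAxioms
    (by
      intro p q s
      apply eq_of
      · simp only [mul_a, mul_b, map_add, map_mul, conj_conj]; ring
      · simp only [mul_a, mul_b, map_add, map_mul, conj_conj]; ring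
      · simp only [mul_t]
        have h1 := abs_lt.mp (abs_cocycle_lt p q)
        have h2 := abs_lt.mp (abs_cocycle_lt (p * q) s)
        have h3 := abs_lt.mp (abs_cocycle_lt q s)
        have h4 := abs_lt.mp (abs_cocycle_lt p (q * s))
        rw [abs_lt]
        constructor <;> linarith [h1.1, h1.2, h2.1, h2.2, h3.1, h3.2, h4.1, h4.2])
    (by
      intro p
      apply Cover.ext
      · simp
      · simp
      · simp [mul_t, cocycle_of_left])
    (by
      intro p
      apply eq_of
      · simp only [mul_a, inv_a, inv_b, one_a]
        linear_combination p.det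
      · simp only [mul_b, inv_a, inv_b, one_b]
        ring
      · have h1 := abs_lt.mp (abs_cocycle_lt p⁻¹ p)
        simp only [mul_t, inv_t, one_t]
        rw [abs_lt]
        constructor <;> linarith [h1.1, h1.2, Real.pi_pos])

/-- The lifted rotation about the origin, over the matrix `diag(exp(iA), exp(-iA))`. It rotates the
disc by the angle `2A`, and `rot π` is central. -/
noncomputable def rot (A : ℝ) : Cover where
  a := exp (A * I)
  b := 0
  t := A
  det := by simp [← exp_conj, ← exp_add]
  polar := by simp [norm_exp_ofReal_mul_I]

@[simp] theorem rot_a (A : ℝ) : (rot A).a = exp (A * I) := rfl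
@[simp] theorem rot_b (A : ℝ) : (rot A).b = 0 := rfl
@[simp] theorem rot_t (A : ℝ) : (rot A).t = A := rfl

theorem rot_add (A B : ℝ) : rot (A + B) = rot A * rot B := by
  apply Cover.ext
  · simp [add_mul, exp_add]
  · simp
  · simp [mul_t, cocycle_of_left (rot_b A)]

theorem rot_zero : rot 0 = 1 := by
  apply Cover.ext <;> simp

/-- `rot` as a homomorphism from the additive group of the reals. -/
noncomputable def rotHom : Multiplicative ℝ →* Cover where
  toFun A := rot A.toAdd
  map_one' := rot_zero
  map_mul' _ _ := rot_add _ _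

theorem rot_zpow (A : ℝ) (e : ℤ) : rot A ^ e = rot (e * A) := by
  have := (map_zpow rotHom (Multiplicative.ofAdd A) e).symm
  rw [← ofAdd_zsmul] at this
  simpa [rotHom] using this

theorem rot_pi_comm (p : Cover) : rot Real.pi * p = p * rot Real.pi := by
  apply Cover.ext
  · simp
  · simp
  · simp [mul_t, cocycle_of_left (rot_b _), cocycle_of_right _ (rot_b _), add_comm]

theorem im_eq (p : Cover) : p.a.im = ‖p.a‖ * Real.sin p.t := by
  conv_lhs => rw [p.polar, exp_mul_I]
  simp [← ofReal_cos, ← ofReal_sin]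

theorem re_eq (p : Cover) : p.a.re = ‖p.a‖ * Real.cos p.t := by
  conv_lhs => rw [p.polar, exp_mul_I]
  simp [← ofReal_cos, ← ofReal_sin]

theorem conj_rot_a (p : Cover) (A : ℝ) : (p * rot A * p⁻¹).a =
    (Real.cos A : ℝ) + ((‖p.a‖ ^ 2 + ‖p.b‖ ^ 2) * Real.sin A : ℝ) * I := by
  simp only [mul_a, mul_b, rot_a, rot_b, inv_a, inv_b, ← exp_conj, map_mul, conj_I, conj_ofReal,
    map_neg, map_zero]
  have h1 : ((‖p.a‖ : ℂ)) ^ 2 = p.a * conj p.a := by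
    rw [mul_conj, normSq_eq_norm_sq]; push_cast; rfl
  have h2 : ((‖p.b‖ : ℂ)) ^ 2 = p.b * conj p.b := by
    rw [mul_conj, normSq_eq_norm_sq]; push_cast; rfl
  have e : (A : ℂ) * -I = (-A : ℂ) * I := by ring
  rw [e, exp_mul_I, exp_mul_I, Complex.cos_neg, Complex.sin_neg]
  push_cast
  rw [h1, h2]
  linear_combination Complex.cos A * p.det

theorem conj_rot_a_re (p : Cover) (A : ℝ) : (p * rot A * p⁻¹).a.re = Real.cos A := by
  rw [conj_rot_a]
  simp only [add_re, mul_re, ofReal_re, ofReal_im, I_re, I_im]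
  ring

theorem conj_rot_a_im (p : Cover) (A : ℝ) :
    (p * rot A * p⁻¹).a.im = (‖p.a‖ ^ 2 + ‖p.b‖ ^ 2) * Real.sin A := by
  rw [conj_rot_a]
  simp only [add_im, mul_im, ofReal_re, ofReal_im, I_re, I_im]
  ring

theorem conj_rot_b (p : Cover) (A : ℝ) : (p * rot A * p⁻¹).b =
    -2 * I * Real.sin A * p.a * p.b := by
  simp only [mul_a, mul_b, rot_a, rot_b, inv_a, inv_b, ← exp_conj, map_mul, conj_I, conj_ofReal,
    map_zero, conj_conj]
  have e : (A : ℂ) * -I = (-A : ℂ) * I := by ring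
  rw [e, exp_mul_I, exp_mul_I, Complex.cos_neg, Complex.sin_neg]
  push_cast
  ring

/-- Conjugation keeps the lifted argument of a rotation by an angle in `(0, π)` inside `(0, π)`: the
argument moves by less than `π / 2`, while the imaginary part of `a` keeps its sign. -/
theorem conj_rot_t_mem (p : Cover) {A : ℝ} (h0 : 0 < A) (h1 : A < Real.pi) :
    0 < (p * rot A * p⁻¹).t ∧ (p * rot A * p⁻¹).t < Real.pi := by
  set q := p * rot A * p⁻¹ with hq
  have him : 0 < q.a.im := by
    rw [hq, conj_rot_a_im]
    have := Real.sin_pos_of_pos_of_lt_pi h0 h1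
    have := p.norm_a_pos
    positivity
  have hsin : 0 < Real.sin q.t := by
    rw [im_eq] at him
    exact pos_of_mul_pos_right him (norm_nonneg _)
  have ht : q.t = A + cocycle (p * rot A) p⁻¹ := by
    rw [hq, mul_t, mul_t, cocycle_of_right p (rot_b A)]
    simp
  have h3 := abs_lt.mp (abs_cocycle_lt (p * rot A) p⁻¹)
  constructor
  · by_contra hc
    push Not at hc
    have := Real.sin_nonpos_of_nonpos_of_neg_pi_le hc (by linarith [h3.1])
    linarith
  · by_contra hc
    push Not at hc
    have := Real.sin_nonneg_of_nonneg_of_le_pi (x := q.t - Real.pi) (by linarith)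
      (by linarith [h3.2])
    rw [Real.sin_sub_pi] at this
    linarith

/-! ### Angles of products of rotations -/

/-- The case `t₁ ≤ t₂` of `angle_sum_le`. Then `t₂ ≥ π / 2`, so `t₂ ≤ B`; the case `t₁ < π / 2`, where
`A ≤ t₁`, needs the product-to-sum formulas. -/
theorem angle_sum_le_aux {R A B t₁ t₂ : ℝ} (hR : 1 ≤ R) (hA0 : 0 < A) (hA1 : A < Real.pi)
    (hB0 : 0 < B) (hB1 : B < Real.pi) (ht₁ : 0 < t₁) (ht₁' : t₁ < Real.pi) (ht₂ : 0 < t₂)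
    (ht₂' : t₂ < Real.pi) (h1 : Real.cos A = R * Real.cos t₁) (h2 : Real.cos B = R * Real.cos t₂)
    (h : Real.pi ≤ t₁ + t₂) (hle : t₁ ≤ t₂) : t₁ + t₂ ≤ A + B := by
  have anti {x y : ℝ} (hx0 : 0 < x) (hx1 : x < Real.pi) (hy0 : 0 < y) (hy1 : y < Real.pi)
      (hxy : Real.cos x ≤ Real.cos y) : y ≤ x :=
    (Real.strictAntiOn_cos.le_iff_ge ⟨hx0.le, hx1.le⟩ ⟨hy0.le, hy1.le⟩).mp hxy
  have hc₂ : Real.cos t₂ ≤ 0 := Real.cos_nonpos_of_pi_div_two_le_of_le (by linarith) (by linarith)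
  have hB : t₂ ≤ B := anti hB0 hB1 ht₂ ht₂' (by nlinarith)
  rcases le_total (Real.pi / 2) t₁ with hc | hc
  · have hc₁ : Real.cos t₁ ≤ 0 := Real.cos_nonpos_of_pi_div_two_le_of_le hc (by linarith)
    have hA : t₁ ≤ A := anti hA0 hA1 ht₁ ht₁' (by nlinarith)
    linarith
  · have hc₁ : 0 ≤ Real.cos t₁ := Real.cos_nonneg_of_neg_pi_div_two_le_of_le (by linarith) hc
    have hA : A ≤ t₁ := anti ht₁ ht₁' hA0 hA1 (by nlinarith)
    by_contra hlt
    push Not at hlt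
    have hcomp : Real.cos t₁ ≤ Real.cos (Real.pi - t₂) :=
      Real.cos_le_cos_of_nonneg_of_le_pi (by linarith) (by linarith) (by linarith)
    have hBA : Real.pi - B ≤ A := by
      refine anti hA0 hA1 (by linarith) (by linarith) ?_
      rw [Real.cos_pi_sub] at hcomp ⊢
      nlinarith
    have hprod : Real.cos A * Real.cos t₂ = Real.cos B * Real.cos t₁ := by
      rw [h1, h2]; ring
    -- with `s = π - t₂` and `D = π - B`, the sum formulas turn `hprod` into
    -- `cos (A + s) + cos (A - s) = cos (t₁ + D) + cos (t₁ - D)`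
    have key : Real.cos (A + (Real.pi - t₂)) + Real.cos (A - (Real.pi - t₂)) =
        Real.cos (t₁ + (Real.pi - B)) + Real.cos (t₁ - (Real.pi - B)) := by
      rw [Real.cos_add A, Real.cos_sub A, Real.cos_add t₁, Real.cos_sub t₁, Real.cos_pi_sub,
        Real.cos_pi_sub]
      linear_combination -2 * hprod
    have k1 : Real.cos (t₁ + (Real.pi - B)) < Real.cos (A + (Real.pi - t₂)) :=
      Real.cos_lt_cos_of_nonneg_of_le_pi (by linarith) (by linarith) (by linarith)
    have k2 : Real.cos (t₁ - (Real.pi - B)) ≤ Real.cos (A - (Real.pi - t₂)) := by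
      rw [← Real.cos_abs (A - (Real.pi - t₂))]
      refine Real.cos_le_cos_of_nonneg_of_le_pi (abs_nonneg _) (by linarith) ?_
      rw [abs_le]
      constructor <;> linarith
    linarith

/-- If the cosines of `t₁, t₂` are obtained from those of `A, B` by the same contraction and
`t₁ + t₂ ≥ π`, then `t₁ + t₂ ≤ A + B`. -/
theorem angle_sum_le {R A B t₁ t₂ : ℝ} (hR : 1 ≤ R) (hA0 : 0 < A) (hA1 : A < Real.pi)
    (hB0 : 0 < B) (hB1 : B < Real.pi) (ht₁ : 0 < t₁) (ht₁' : t₁ < Real.pi) (ht₂ : 0 < t₂)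
    (ht₂' : t₂ < Real.pi) (h1 : Real.cos A = R * Real.cos t₁) (h2 : Real.cos B = R * Real.cos t₂)
    (h : Real.pi ≤ t₁ + t₂) : t₁ + t₂ ≤ A + B := by
  rcases le_total t₁ t₂ with hle | hle
  · exact angle_sum_le_aux hR hA0 hA1 hB0 hB1 ht₁ ht₁' ht₂ ht₂' h1 h2 h hle
  · have := angle_sum_le_aux hR hB0 hB1 hA0 hA1 ht₂ ht₂' ht₁ ht₁' h2 h1 (by linarith) hle
    linarith

/-- If the product fixes the origin, then the factor whose argument is the cocycle is the positive
real number `1 / |p.a|²`. -/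
theorem cocycle_eq_zero {p q : Cover} (h : (p * q).b = 0) : cocycle p q = 0 := by
  have ha := p.a_ne
  have ha' : conj p.a ≠ 0 := (map_ne_zero _).mpr ha
  have h1 : conj p.a * conj q.b + conj p.b * q.a = 0 := by
    have := congrArg conj h
    simpa using this
  have h2 : 1 + p.b * conj q.b / (p.a * q.a) = (((normSq p.a)⁻¹ : ℝ) : ℂ) := by
    rw [ofReal_inv, ← mul_conj]
    have hq := q.a_ne
    field_simp
    linear_combination p.b * h1 + q.a * p.det
  rw [cocycle, h2, arg_ofReal_of_nonneg (inv_nonneg.mpr (normSq_nonneg _))]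

theorem norm_a_eq {p q : Cover} (h : (p * q).b = 0) : ‖p.a‖ = ‖q.a‖ := by
  have h1 : ‖p.a‖ * ‖q.b‖ = ‖p.b‖ * ‖q.a‖ := by
    have : p.a * q.b = -(p.b * conj q.a) := eq_neg_of_add_eq_zero_left h
    have := congrArg norm this
    simpa using this
  have h2 := p.normSq_a
  have h3 := q.normSq_a
  have h4 : ‖p.a‖ ^ 2 * ‖q.b‖ ^ 2 = ‖p.b‖ ^ 2 * ‖q.a‖ ^ 2 := by rw [← mul_pow, h1, mul_pow]
  have h5 : ‖p.a‖ ^ 2 = ‖q.a‖ ^ 2 := by nlinarith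
  exact (pow_left_inj₀ (norm_nonneg _) (norm_nonneg _) two_ne_zero).mp h5

/-- If the product of conjugates of `rot A` and `rot B` is a rotation about the origin by `S`, then
`S` is the sum of the lifted arguments of the two factors, and `angle_sum_le` applies to them. -/
theorem angle_of_mul_eq_rot (p q : Cover) {A B S : ℝ} (hA0 : 0 < A) (hA1 : A < Real.pi)
    (hB0 : 0 < B) (hB1 : B < Real.pi) (h : p * rot A * p⁻¹ * (q * rot B * q⁻¹) = rot S) :
    0 < S ∧ (Real.pi ≤ S → S ≤ A + B) := by
  obtain ⟨h1, h2⟩ := conj_rot_t_mem p hA0 hA1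
  obtain ⟨h3, h4⟩ := conj_rot_t_mem q hB0 hB1
  have reA : (p * rot A * p⁻¹).a.re = Real.cos A := conj_rot_a_re p A
  have reB : (q * rot B * q⁻¹).a.re = Real.cos B := conj_rot_a_re q B
  set X := p * rot A * p⁻¹
  set Y := q * rot B * q⁻¹
  have hb : (X * Y).b = 0 := by rw [h, rot_b]
  have ht : X.t + Y.t = S := by
    have := congrArg Cover.t h
    rwa [mul_t, cocycle_eq_zero hb, add_zero, rot_t] at this
  have hn := norm_a_eq hb
  refine ⟨by linarith, fun hS => ?_⟩
  rw [← ht] at hS ⊢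
  refine angle_sum_le X.one_le_norm_a hA0 hA1 hB0 hB1 h1 h2 h3 h4 ?_ ?_ hS
  · rw [← reA, re_eq]
  · rw [← reB, re_eq, hn]

theorem rot_int_mul_pi_comm (n : ℤ) (p : Cover) :
    rot (n * Real.pi) * p = p * rot (n * Real.pi) := by
  rw [← rot_zpow]
  exact (Commute.zpow_left (rot_pi_comm p) n)

theorem conj_rot_add_pi (p : Cover) (A : ℝ) (n : ℤ) :
    p * rot (A + n * Real.pi) * p⁻¹ = p * rot A * p⁻¹ * rot (n * Real.pi) := by
  rw [rot_add, mul_assoc _ p⁻¹, ← rot_int_mul_pi_comm n p⁻¹]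
  group

/-- The fractional part of `e / k` lies between `1 / k` and `1` when `k` does not divide `e`. -/
theorem frac_bounds {k : ℕ} (hk : 0 < k) {e : ℤ} (h : ¬ (k : ℤ) ∣ e) :
    (1 : ℝ) / k ≤ (e : ℝ) / k - (e / k : ℤ) ∧ (e : ℝ) / k - (e / k : ℤ) < 1 := by
  have hk' : (0 : ℝ) < k := by exact_mod_cast hk
  have h1 : (e : ℝ) / k - (e / k : ℤ) = (e % k : ℤ) / k := by
    have : (e : ℝ) = k * (e / k : ℤ) + (e % k : ℤ) := by
      exact_mod_cast (Int.mul_ediv_add_emod e k).symm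
    field_simp
    linarith
  have h2 : 1 ≤ e % k := by
    have := Int.emod_nonneg e (b := k) (by omega)
    have : e % k ≠ 0 := fun h0 => h (Int.dvd_of_emod_eq_zero h0)
    omega
  have h3 : e % k < k := Int.emod_lt_of_pos _ (by omega)
  rw [h1, div_lt_one hk']
  refine ⟨?_, by exact_mod_cast h3⟩
  gcongr
  exact_mod_cast h2

/-- Conjugates of `X^e, Y^e, Z^e` with product `T^e` force `e ≤ 1`. With `α, β, γ` the fractional parts
of `e/k, e/l, e/m`, the first two factors multiply to a rotation by `(j - γ)π` for an integer `j`,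
and `α + β + γ = j - e(1 - 1/k - 1/l - 1/m)`. If `(j - γ)π ≥ π`, then `j - γ ≤ α + β`, so `e ≤ 0`;
otherwise `j ≤ 1`, and `α + β + γ ≥ 1/k + 1/l + 1/m` gives `e ≤ 1`. -/
theorem exponent_le_one {k l m : ℕ} (hk : 0 < k) (hl : 0 < l) (hm : 0 < m)
    (hyp : (1 : ℝ) / k + 1 / l + 1 / m < 1) {e : ℤ} (h1 : ¬ (k : ℤ) ∣ e) (h2 : ¬ (l : ℤ) ∣ e)
    (h3 : ¬ (m : ℤ) ∣ e) (p q w : Cover)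
    (h : p * rot (e * (Real.pi / k)) * p⁻¹ * (q * rot (e * (Real.pi / l)) * q⁻¹) *
      (w * rot (e * (Real.pi / m)) * w⁻¹) = rot (e * Real.pi)) : e ≤ 1 := by
  obtain ⟨a1, a2⟩ := frac_bounds hk h1
  obtain ⟨b1, b2⟩ := frac_bounds hl h2
  obtain ⟨c1, c2⟩ := frac_bounds hm h3
  have hk' : (0 : ℝ) < 1 / k := by positivity
  have hl' : (0 : ℝ) < 1 / l := by positivity
  have hm' : (0 : ℝ) < 1 / m := by positivity
  set α := (e : ℝ) / k - (e / k : ℤ) with hα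
  set β := (e : ℝ) / l - (e / l : ℤ) with hβ
  set γ := (e : ℝ) / m - (e / m : ℤ) with hγ
  have hpi := Real.pi_pos
  have hA : (e : ℝ) * (Real.pi / k) = α * Real.pi + (e / k : ℤ) * Real.pi := by rw [hα]; ring
  have hB : (e : ℝ) * (Real.pi / l) = β * Real.pi + (e / l : ℤ) * Real.pi := by rw [hβ]; ring
  -- conjugating by `w⁻¹` makes the third factor a rotation about the origin
  have hrot : (w⁻¹ * p) * rot (α * Real.pi) * (w⁻¹ * p)⁻¹ *
      ((w⁻¹ * q) * rot (β * Real.pi) * (w⁻¹ * q)⁻¹) =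
      rot (e * Real.pi - e * (Real.pi / m) - (e / k : ℤ) * Real.pi - (e / l : ℤ) * Real.pi) := by
    have h4 : (w⁻¹ * p) * rot (e * (Real.pi / k)) * (w⁻¹ * p)⁻¹ *
        ((w⁻¹ * q) * rot (e * (Real.pi / l)) * (w⁻¹ * q)⁻¹) * rot (e * (Real.pi / m)) =
        rot (e * Real.pi) := by
      calc _ = w⁻¹ * (p * rot (e * (Real.pi / k)) * p⁻¹ * (q * rot (e * (Real.pi / l)) * q⁻¹) *
              (w * rot (e * (Real.pi / m)) * w⁻¹)) * w := by group
        _ = _ := by rw [h, ← rot_int_mul_pi_comm, mul_assoc]; simp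
    have h5 : rot (e * Real.pi) =
        rot (e * Real.pi - e * (Real.pi / m) - (e / k : ℤ) * Real.pi - (e / l : ℤ) * Real.pi) *
        rot ((e / l : ℤ) * Real.pi) * rot ((e / k : ℤ) * Real.pi) * rot (e * (Real.pi / m)) := by
      rw [← rot_add, ← rot_add, ← rot_add]; congr 1; ring
    rw [hA, hB, conj_rot_add_pi, conj_rot_add_pi, h5] at h4
    have h6 := mul_right_cancel h4
    rw [mul_assoc _ (rot ((e / k : ℤ) * Real.pi)), rot_int_mul_pi_comm, ← mul_assoc,
      ← mul_assoc] at h6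
    exact mul_right_cancel (mul_right_cancel h6)
  obtain ⟨hS0, hS⟩ := angle_of_mul_eq_rot _ _ (mul_pos (hk'.trans_le a1) hpi)
    (by nlinarith) (mul_pos (hl'.trans_le b1) hpi) (by nlinarith) hrot
  -- `j` is the integer with `S = (j - γ) π`
  set j : ℤ := e - e / k - e / l - e / m with hj
  have hSj : e * Real.pi - e * (Real.pi / m) - (e / k : ℤ) * Real.pi - (e / l : ℤ) * Real.pi =
      (j - γ) * Real.pi := by
    rw [hj, hγ]; push_cast; ring
  rw [hSj] at hS0 hS
  have hsum : α + β + γ = j - e * (1 - (1 / k + 1 / l + 1 / m)) := by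
    rw [hα, hβ, hγ, hj]; push_cast; ring
  rcases le_or_gt Real.pi ((j - γ) * Real.pi) with hc | hc
  · have h7 := hS hc
    have h8 : (j : ℝ) - γ ≤ α + β := by
      refine le_of_mul_le_mul_right ?_ hpi
      linarith
    have h9 : (e : ℝ) ≤ 1 := by
      by_contra h10
      push Not at h10
      nlinarith
    exact_mod_cast h9
  · have h8 : (j : ℝ) - γ < 1 := by
      refine lt_of_mul_lt_mul_right ?_ hpi.le
      linarith
    have h9 : j ≤ 1 := by
      have : (j : ℝ) < 2 := by linarith
      have : j < 2 := by exact_mod_cast this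
      omega
    have h10 : (j : ℝ) ≤ 1 := by exact_mod_cast h9
    have h9 : (e : ℝ) ≤ 1 := by
      by_contra h10
      push Not at h10
      nlinarith
    exact_mod_cast h9

/-! ### Hyperbolic triangles -/

/-- An elliptic element is conjugate to the rotation with the same trace, provided its lifted argument
lies in the right interval. -/
theorem exists_conj_rot (p : Cover) {A : ℝ} (hA0 : 0 < A) (hA1 : A < Real.pi)
    (hre : p.a.re = Real.cos A) (him : 0 < p.a.im) (ht0 : 0 < p.t) (ht1 : p.t < Real.pi) :
    ∃ q : Cover, p = q * rot A * q⁻¹ := by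
  have hs : 0 < Real.sin A := Real.sin_pos_of_pos_of_lt_pi hA0 hA1
  have hsc := Real.sin_sq_add_cos_sq A
  set s := Real.sin A
  set u := p.a.im
  have hna : ‖p.a‖ ^ 2 = Real.cos A ^ 2 + u ^ 2 := by
    rw [← normSq_eq_norm_sq, normSq_apply, hre]; ring
  have hnb : ‖p.b‖ ^ 2 = u ^ 2 - s ^ 2 := by linarith [p.normSq_a]
  -- `(|q.a|² + |q.b|²) sin A` has to be `u`, and `|q.a|² - |q.b|² = 1`
  set α : ℝ := √((u / s + 1) / 2) with hα
  have hα2 : α ^ 2 = (u / s + 1) / 2 := Real.sq_sqrt (by positivity)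
  have hαpos : 0 < α := Real.sqrt_pos.mpr (by positivity)
  have hαC : (α : ℂ) ≠ 0 := by exact_mod_cast hαpos.ne'
  have hsC : (s : ℂ) ≠ 0 := by exact_mod_cast hs.ne'
  have hβ : ‖p.b * I / (2 * α * s)‖ ^ 2 = (u / s - 1) / 2 := by
    have h1 : ‖p.b * I / (2 * α * s)‖ = ‖p.b‖ / (2 * α * s) := by
      simp [abs_of_pos hαpos, abs_of_pos hs]
    rw [h1, div_pow, hnb, mul_pow, mul_pow, hα2]
    field_simp
    ring
  let q : Cover :=
    { a := α
      b := p.b * I / (2 * α * s)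
      t := 0
      det := by
        rw [mul_conj, mul_conj, normSq_eq_norm_sq, normSq_eq_norm_sq, hβ, norm_real,
          Real.norm_of_nonneg hαpos.le, hα2]
        push_cast; ring
      polar := by simp [abs_of_pos hαpos] }
  obtain ⟨h1, h2⟩ := conj_rot_t_mem q hA0 hA1
  refine ⟨q, eq_of _ _ ?_ ?_ ?_⟩
  · have h3 : ‖q.a‖ ^ 2 + ‖q.b‖ ^ 2 = u / s := by
      change ‖(α : ℂ)‖ ^ 2 + ‖p.b * I / (2 * α * s)‖ ^ 2 = u / s
      rw [hβ, norm_real, Real.norm_of_nonneg hαpos.le, hα2]; ring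
    apply Complex.ext
    · rw [conj_rot_a_re, hre]
    · rw [conj_rot_a_im, h3]
      exact (div_mul_cancel₀ u hs.ne').symm
  · rw [conj_rot_b]
    change p.b = -2 * I * (s : ℂ) * α * (p.b * I / (2 * α * s))
    field_simp
    rw [I_sq]; ring
  · rw [abs_lt]
    constructor <;> linarith

/-- The relation in the group of a hyperbolic triangle with angles `A, B, C`. The numbers `u` and `v`
below are `sin A` and `sin B` times hyperbolic cosines of the two sides at the vertex of angle
`C`, by the second law of cosines. -/
theorem exists_triangle {A B C : ℝ} (hA0 : 0 < A) (hB0 : 0 < B) (hC0 : 0 < C)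
    (hsum : A + B + C < Real.pi) :
    ∃ p q : Cover, p * rot A * p⁻¹ * (q * rot B * q⁻¹) * rot C = rot Real.pi := by
  have hsA : 0 < Real.sin A := Real.sin_pos_of_pos_of_lt_pi hA0 (by linarith)
  have hsB : 0 < Real.sin B := Real.sin_pos_of_pos_of_lt_pi hB0 (by linarith)
  have hsC : 0 < Real.sin C := Real.sin_pos_of_pos_of_lt_pi hC0 (by linarith)
  have hA := Real.sin_sq_add_cos_sq A
  have hC := Real.sin_sq_add_cos_sq C
  have hB' : Real.sin A * Real.sin C - Real.cos A * Real.cos C < Real.cos B := by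
    have := Real.cos_lt_cos_of_nonneg_of_le_pi (x := B) (y := Real.pi - (A + C)) hB0.le
      (by linarith) (by linarith)
    rw [Real.cos_pi_sub, Real.cos_add] at this
    linarith
  have hA' : Real.sin B * Real.sin C - Real.cos B * Real.cos C < Real.cos A := by
    have := Real.cos_lt_cos_of_nonneg_of_le_pi (x := A) (y := Real.pi - (B + C)) hA0.le
      (by linarith) (by linarith)
    rw [Real.cos_pi_sub, Real.cos_add] at this
    linarith
  set u : ℝ := (Real.cos B + Real.cos A * Real.cos C) / Real.sin C with hu
  set v : ℝ := (Real.cos A + Real.cos B * Real.cos C) / Real.sin C with hv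
  have huA : Real.sin A < u := by rw [hu, lt_div_iff₀ hsC]; linarith
  have hvB : Real.sin B < v := by rw [hv, lt_div_iff₀ hsC]; linarith
  set a₁ : ℂ := ⟨Real.cos A, u⟩ with ha₁
  set a₂ : ℂ := ⟨Real.cos B, v⟩ with ha₂
  have hn₁ : normSq a₁ = Real.cos A ^ 2 + u ^ 2 := by rw [normSq_apply, ha₁]; ring
  have huC : u * Real.sin C = Real.cos B + Real.cos A * Real.cos C := by rw [hu]; field_simp
  have hvC : v * Real.sin C = Real.cos A + Real.cos B * Real.cos C := by rw [hv]; field_simp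
  have hexp : exp ((Real.pi - C : ℝ) * I) = ⟨-Real.cos C, Real.sin C⟩ := by
    rw [exp_mul_I, ← ofReal_cos, ← ofReal_sin, Real.cos_pi_sub, Real.sin_pi_sub]
    apply Complex.ext <;> simp [-ofReal_cos, -ofReal_sin]
  have ha₂₁ : a₂ = conj a₁ * exp ((Real.pi - C : ℝ) * I) := by
    rw [hexp]
    apply Complex.ext
    · simp only [ha₁, ha₂, mul_re, conj_re, conj_im]
      linear_combination -huC
    · simp only [ha₁, ha₂, mul_im, conj_re, conj_im]
      apply mul_right_cancel₀ hsC.ne'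
      linear_combination hvC - Real.cos C * huC - Real.cos A * hC
  have hn₁' : 1 ≤ normSq a₁ := by rw [hn₁]; nlinarith
  have ha₁0 : a₁ ≠ 0 := by rw [← normSq_pos]; linarith
  have ha₁0' : conj a₁ ≠ 0 := (map_ne_zero _).mpr ha₁0
  set b₁ : ℝ := √(normSq a₁ - 1) with hb₁
  have hb₁2 : (b₁ : ℂ) * b₁ = a₁ * conj a₁ - 1 := by
    rw [mul_conj, ← ofReal_mul, Real.mul_self_sqrt (by linarith)]; push_cast; rfl
  have hnorm : a₂ * conj a₂ = a₁ * conj a₁ := by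
    have : exp ((Real.pi - C : ℝ) * I) * conj (exp ((Real.pi - C : ℝ) * I)) = 1 := by
      rw [mul_conj, normSq_eq_norm_sq, norm_exp_ofReal_mul_I]; simp
    rw [ha₂₁, map_mul, conj_conj]
    linear_combination conj a₁ * a₁ * this
  let X : Cover := ⟨a₁, b₁, arg a₁, by rw [conj_ofReal, hb₁2]; ring,
    (norm_mul_exp_arg_mul_I a₁).symm⟩
  let Y : Cover := ⟨a₂, -(b₁ * conj a₂ / a₁), arg a₂, by
    simp only [map_neg, map_div₀, map_mul, conj_ofReal, conj_conj]
    field_simp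
    linear_combination (a₁ * conj a₁) * hnorm - (b₁ * b₁) * hnorm - (a₁ * conj a₁) * hb₁2,
    (norm_mul_exp_arg_mul_I a₂).symm⟩
  have arg_mem {z : ℂ} (hz : 0 < z.im) : 0 < arg z ∧ arg z < Real.pi := by
    have h1 : 0 ≤ arg z := arg_nonneg_iff.mpr hz.le
    have h2 : arg z ≠ 0 := fun h => hz.ne' (arg_eq_zero_iff.mp h).2
    have h3 : arg z ≠ Real.pi := fun h => hz.ne' (arg_eq_pi_iff.mp h).2
    exact ⟨lt_of_le_of_ne h1 h2.symm, lt_of_le_of_ne (arg_le_pi z) h3⟩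
  obtain ⟨x0, x1⟩ := arg_mem (z := a₁) (hsA.trans huA)
  obtain ⟨y0, y1⟩ := arg_mem (z := a₂) (hsB.trans hvB)
  have hXYb : (X * Y).b = 0 := by
    change a₁ * -(b₁ * conj a₂ / a₁) + b₁ * conj a₂ = 0
    field_simp
    ring
  have hXY : X * Y = rot (Real.pi - C) := by
    apply eq_of
    · change a₁ * a₂ + b₁ * conj (-(b₁ * conj a₂ / a₁)) = exp ((Real.pi - C : ℝ) * I)
      simp only [map_neg, map_div₀, map_mul, conj_ofReal, conj_conj]
      apply mul_left_cancel₀ ha₁0'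
      rw [← ha₂₁]
      field_simp
      linear_combination -a₂ * hb₁2
    · rw [hXYb, rot_b]
    · rw [mul_t, cocycle_eq_zero hXYb, rot_t]
      change |arg a₁ + arg a₂ + 0 - (Real.pi - C)| < 2 * Real.pi
      rw [abs_lt]
      constructor <;> linarith
  obtain ⟨p, hp⟩ := exists_conj_rot X hA0 (by linarith) rfl (hsA.trans huA) x0 x1
  obtain ⟨q, hq⟩ := exists_conj_rot Y hB0 (by linarith) rfl (hsB.trans hvB) y0 y1
  refine ⟨p, q, ?_⟩
  rw [← hp, ← hq, hXY, ← rot_add]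
  congr 1
  ring

end Cover

/-! ### A central extension carrying the triangle relation -/

section Extension
variable {H : Type*} [Group H]

/-- The product of `H` with `ℤ³`, the factors `ℤ` being written multiplicatively. -/
abbrev ExtGroup (H : Type*) := H × Multiplicative ℤ × Multiplicative ℤ × Multiplicative ℤ

/-- The subgroup of `H × ℤ³` generated by the four elements `(T, k, 0, 0)`,
`(T, 0, l, 0)`, `(T, 0, 0, m)` and `(T, 1, 1, 1)`, given by listing its elements. -/
def relatorSubgroup (T : H) (k l m : ℕ) : Subgroup (ExtGroup H) where
  carrier := {g | ∃ a b c e : ℤ, g.1 = T ^ (a + b + c + e) ∧ g.2.1.toAdd = k * a + e ∧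
    g.2.2.1.toAdd = l * b + e ∧ g.2.2.2.toAdd = m * c + e}
  one_mem' := ⟨0, 0, 0, 0, by simp⟩
  mul_mem' := by
    rintro g g' ⟨a, b, c, e, h1, h2, h3, h4⟩ ⟨a', b', c', e', h1', h2', h3', h4'⟩
    refine ⟨a + a', b + b', c + c', e + e', ?_, ?_, ?_, ?_⟩
    · rw [Prod.fst_mul, h1, h1', ← zpow_add]; congr 1; ring
    · simp only [Prod.fst_mul, Prod.snd_mul, toAdd_mul, h2, h2']; ring
    · simp only [Prod.fst_mul, Prod.snd_mul, toAdd_mul, h3, h3']; ring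
    · simp only [Prod.snd_mul, toAdd_mul, h4, h4']; ring
  inv_mem' := by
    rintro g ⟨a, b, c, e, h1, h2, h3, h4⟩
    refine ⟨-a, -b, -c, -e, ?_, ?_, ?_, ?_⟩
    · rw [Prod.fst_inv, h1, ← zpow_neg]; congr 1; ring
    · simp only [Prod.fst_inv, Prod.snd_inv, toAdd_inv, h2]; ring
    · simp only [Prod.fst_inv, Prod.snd_inv, toAdd_inv, h3]; ring
    · simp only [Prod.snd_inv, toAdd_inv, h4]; ring

theorem relatorSubgroup_normal (T : H) (hT : ∀ h, Commute T h) (k l m : ℕ) :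
    (relatorSubgroup T k l m).Normal where
  conj_mem := by
    rintro n ⟨a, b, c, e, h1, h2, h3, h4⟩ g
    refine ⟨a, b, c, e, ?_, ?_, ?_, ?_⟩
    · rw [Prod.fst_mul, Prod.fst_mul, Prod.fst_inv, h1, ← ((hT g.1).zpow_left _).eq,
        mul_inv_cancel_right]
    · simpa using h2
    · simpa using h3
    · simpa using h4

/-- The quasi-Burnside property for quotients of `H × ℤ³` lifts to a relation in `H` with a common
exponent `e`, namely the coefficient of `(T, 1, 1, 1)` in an element of `relatorSubgroup`. -/
theorem exists_exponent {T : H} (hT : ∀ h, Commute T h) {X Y Z : H} {k l m : ℕ}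
    (hX : X ^ k = T) (hY : Y ^ l = T) (hZ : Z ^ m = T) (hXYZ : X * Y * Z = T)
    {n : ℕ} {r : (ZMod n)ˣ} {ρ : ℤ} (hρ : (ρ : ZMod n) = r)
    (hqb : ∀ (N : Subgroup (ExtGroup H))
      [N.Normal], IsQuasiBurnsideWith k l m n r
        (ExtGroup H ⧸ N)) :
    ∃ (e : ℤ) (g h j : H), (k : ℤ) ∣ ρ - e ∧ (l : ℤ) ∣ ρ - e ∧ (m : ℤ) ∣ ρ - e ∧
      g * X ^ e * g⁻¹ * (h * Y ^ e * h⁻¹) * (j * Z ^ e * j⁻¹) = T ^ e := by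
  let N := relatorSubgroup T k l m
  have : N.Normal := relatorSubgroup_normal T hT k l m
  let x : ExtGroup H := (X, .ofAdd 1, .ofAdd 0, .ofAdd 0)
  let y : ExtGroup H := (Y, .ofAdd 0, .ofAdd 1, .ofAdd 0)
  let z : ExtGroup H := (Z, .ofAdd 0, .ofAdd 0, .ofAdd 1)
  have hx : (x : ExtGroup H ⧸ N) ^ k = 1 := by
    rw [← QuotientGroup.mk_pow, QuotientGroup.eq_one_iff]
    exact ⟨1, 0, 0, 0, by simp [x, hX], by simp [x], by simp [x], by simp [x]⟩
  have hy : (y : ExtGroup H ⧸ N) ^ l = 1 := by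
    rw [← QuotientGroup.mk_pow, QuotientGroup.eq_one_iff]
    exact ⟨0, 1, 0, 0, by simp [y, hY], by simp [y], by simp [y], by simp [y]⟩
  have hz : (z : ExtGroup H ⧸ N) ^ m = 1 := by
    rw [← QuotientGroup.mk_pow, QuotientGroup.eq_one_iff]
    exact ⟨0, 0, 1, 0, by simp [z, hZ], by simp [z], by simp [z], by simp [z]⟩
  have hxyz : (x : ExtGroup H ⧸ N) * y * z = 1 := by
    rw [← QuotientGroup.mk_mul, ← QuotientGroup.mk_mul, QuotientGroup.eq_one_iff]
    exact ⟨0, 0, 0, 1, by simp [x, y, z, hXYZ], by simp [x, y, z], by simp [x, y, z],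
      by simp [x, y, z]⟩
  obtain ⟨x', y', z', h1, h2, h3, h4⟩ := hqb N ρ hρ (x : ExtGroup H ⧸ N) y (z : ExtGroup H ⧸ N)⁻¹
    (eq_inv_of_mul_eq_one_left hxyz) hx hy (by rw [inv_pow, hz, inv_one])
  obtain ⟨g, rfl⟩ := isConj_iff.mp h2
  obtain ⟨h, rfl⟩ := isConj_iff.mp h3
  obtain ⟨j, rfl⟩ := isConj_iff.mp h4
  obtain ⟨g, rfl⟩ := QuotientGroup.mk_surjective g
  obtain ⟨h, rfl⟩ := QuotientGroup.mk_surjective h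
  obtain ⟨j, rfl⟩ := QuotientGroup.mk_surjective j
  have hmem : g * x ^ ρ * g⁻¹ * (h * y ^ ρ * h⁻¹) * (j * z ^ ρ * j⁻¹) ∈ N := by
    rw [← QuotientGroup.eq_one_iff]
    simp only [QuotientGroup.mk_mul, QuotientGroup.mk_inv, QuotientGroup.mk_zpow]
    rw [h1, inv_zpow]
    group
  obtain ⟨a, b, c, e, e1, e2, e3, e4⟩ := hmem
  have e2' : ρ = k * a + e := by simpa [x, y, z] using e2
  have e3' : ρ = l * b + e := by simpa [x, y, z] using e3
  have e4' : ρ = m * c + e := by simpa [x, y, z] using e4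
  refine ⟨e, g.1, h.1, j.1, ⟨a, by linarith⟩, ⟨b, by linarith⟩, ⟨c, by linarith⟩, ?_⟩
  have e5 : g.1 * X ^ ρ * g.1⁻¹ * (h.1 * Y ^ ρ * h.1⁻¹) * (j.1 * Z ^ ρ * j.1⁻¹) =
      T ^ (a + b + c + e) := by simpa [x, y, z] using e1
  have hXρ : X ^ ρ = T ^ a * X ^ e := by rw [e2', zpow_add, zpow_mul, zpow_natCast, hX]
  have hYρ : Y ^ ρ = T ^ b * Y ^ e := by rw [e3', zpow_add, zpow_mul, zpow_natCast, hY]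
  have hZρ : Z ^ ρ = T ^ c * Z ^ e := by rw [e4', zpow_add, zpow_mul, zpow_natCast, hZ]
  have conj_mul (i : ℤ) (u w : H) : u * (T ^ i * w) * u⁻¹ = T ^ i * (u * w * u⁻¹) := by
    rw [← mul_assoc, ← ((hT u).zpow_left i).eq]; group
  rw [hXρ, hYρ, hZρ, conj_mul, conj_mul, conj_mul] at e5
  generalize g.1 * X ^ e * g.1⁻¹ = P at *
  generalize h.1 * Y ^ e * h.1⁻¹ = Q at *
  generalize j.1 * Z ^ e * j.1⁻¹ = R at *
  apply mul_left_cancel (a := T ^ (a + b + c))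
  rw [← zpow_add, ← e5]
  have c1 : P * T ^ b = T ^ b * P := ((hT P).zpow_left b).eq.symm
  have c2 : P * Q * T ^ c = T ^ c * (P * Q) := ((hT (P * Q)).zpow_left c).eq.symm
  calc T ^ (a + b + c) * (P * Q * R) = T ^ a * T ^ b * (T ^ c * (P * Q)) * R := by
        rw [zpow_add, zpow_add]; group
    _ = T ^ a * (T ^ b * P) * Q * T ^ c * R := by rw [← c2]; group
    _ = _ := by rw [← c1]; group

end Extension

theorem IsQuasiBurnsideWith.of_mulEquiv {k l m n : ℕ} {r : (ZMod n)ˣ} {G G' : Type*} [Group G]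
    [Group G'] (f : G ≃* G') (h : IsQuasiBurnsideWith k l m n r G) :
    IsQuasiBurnsideWith k l m n r G' := by
  intro ρ hρ x y z hxyz hx hy hz
  obtain ⟨x', y', z', h1, h2, h3, h4⟩ := h ρ hρ (f.symm x) (f.symm y) (f.symm z)
    (by rw [← map_mul, hxyz]) (by rw [← map_pow, hx, map_one]) (by rw [← map_pow, hy, map_one])
    (by rw [← map_pow, hz, map_one])
  refine ⟨f x', f y', f z', by rw [← map_mul, h1], ?_, ?_, ?_⟩
  · simpa using f.toMonoidHom.map_isConj h2
  · simpa using f.toMonoidHom.map_isConj h3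
  · simpa using f.toMonoidHom.map_isConj h4

/-- In the hyperbolic case a representative of `r` is congruent to the same `e = ±1` modulo each of the
three exponents. -/
theorem eq_one_or_neg_one_of_hyperbolic {k l m : ℕ} (hk : 2 ≤ k) (hl : 2 ≤ l) (hm : 2 ≤ m)
    (hyp : (1 : ℝ) / k + 1 / l + 1 / m < 1) {n : ℕ} {r : (ZMod n)ˣ} {ρ : ℤ}
    (hρ : (ρ : ZMod n) = r) (h1 : ¬ (k : ℤ) ∣ ρ) (h2 : ¬ (l : ℤ) ∣ ρ) (h3 : ¬ (m : ℤ) ∣ ρ)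
    (hqb : ∀ (G : Type) [Group G], IsQuasiBurnsideWith k l m n r G) :
    ∃ e : ℤ, (e = 1 ∨ e = -1) ∧ (k : ℤ) ∣ ρ - e ∧ (l : ℤ) ∣ ρ - e ∧ (m : ℤ) ∣ ρ - e := by
  have hpi := Real.pi_pos
  have hk0 : (0 : ℝ) < k := by exact_mod_cast (by omega : 0 < k)
  have hl0 : (0 : ℝ) < l := by exact_mod_cast (by omega : 0 < l)
  have hm0 : (0 : ℝ) < m := by exact_mod_cast (by omega : 0 < m)
  obtain ⟨p, q, hpq⟩ := Cover.exists_triangle (A := Real.pi / k) (B := Real.pi / l)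
    (C := Real.pi / m) (by positivity) (by positivity) (by positivity) (by
      have := mul_lt_mul_of_pos_left hyp hpi
      calc Real.pi / k + Real.pi / l + Real.pi / m = Real.pi * (1 / k + 1 / l + 1 / m) := by ring
        _ < Real.pi := by linarith)
  have hpow {k : ℕ} (hk0 : (0 : ℝ) < k) : Cover.rot (Real.pi / k) ^ k = Cover.rot Real.pi := by
    rw [← zpow_natCast, Cover.rot_zpow]
    congr 1
    push_cast
    field_simp
  obtain ⟨e, g, h, j, d1, d2, d3, he⟩ := exists_exponent (T := Cover.rot Real.pi)
    Cover.rot_pi_comm (X := p * Cover.rot (Real.pi / k) * p⁻¹)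
    (Y := q * Cover.rot (Real.pi / l) * q⁻¹) (Z := Cover.rot (Real.pi / m)) (k := k) (l := l)
    (m := m)
    (by rw [conj_pow, hpow hk0, ← Cover.rot_pi_comm, mul_inv_cancel_right])
    (by rw [conj_pow, hpow hl0, ← Cover.rot_pi_comm, mul_inv_cancel_right])
    (hpow hm0) hpq hρ (fun N _ => hqb _)
  have n1 : ¬ (k : ℤ) ∣ e := fun hd => h1 (by simpa using dvd_add d1 hd)
  have n2 : ¬ (l : ℤ) ∣ e := fun hd => h2 (by simpa using dvd_add d2 hd)
  have n3 : ¬ (m : ℤ) ∣ e := fun hd => h3 (by simpa using dvd_add d3 hd)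
  rw [conj_zpow, conj_zpow] at he
  have hle : e ≤ 1 := by
    refine Cover.exponent_le_one (by omega) (by omega) (by omega) hyp n1 n2 n3 (g * p) (h * q) j ?_
    rw [← Cover.rot_zpow, ← Cover.rot_zpow, ← Cover.rot_zpow, ← Cover.rot_zpow, ← he]
    group
  have hge : -e ≤ 1 := by
    refine Cover.exponent_le_one (k := m) (l := l) (m := k) (by omega) (by omega) (by omega)
      (by linarith) (by rwa [dvd_neg]) (by rwa [dvd_neg]) (by rwa [dvd_neg]) j (h * q) (g * p) ?_
    rw [← Cover.rot_zpow, ← Cover.rot_zpow, ← Cover.rot_zpow, ← Cover.rot_zpow,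
      zpow_neg (Cover.rot Real.pi), ← he]
    group
  have hne : e ≠ 0 := fun h0 => n1 (h0 ▸ dvd_zero _)
  exact ⟨e, by omega, d1, d2, d3⟩

/-! ### The equivalence -/

/-- The theorem with the modulus as a variable `n`, so that it can be rewritten freely. -/
theorem every_group_quasiBurnside_iff_aux {k l m n : ℕ} (hn : n = Nat.lcm k (Nat.lcm l m))
    (hk : 2 ≤ k) (hl : 2 ≤ l) (hm : 2 ≤ m) (r : (ZMod n)ˣ) :
    (∀ (G : Type u) [Group G], IsQuasiBurnsideWith k l m n r G) ↔
      ((1 : ℚ) ≤ 1 / k + 1 / l + 1 / m ∨ (r : ZMod n) = 1 ∨ (r : ZMod n) = -1) := by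
  have hkn : k ∣ n := hn ▸ Nat.dvd_lcm_left _ _
  have hln : l ∣ n := hn ▸ (Nat.dvd_lcm_left _ _).trans (Nat.dvd_lcm_right _ _)
  have hmn : m ∣ n := hn ▸ (Nat.dvd_lcm_right _ _).trans (Nat.dvd_lcm_right _ _)
  -- a representative of a unit modulo `n` is divisible by no non-unit divisor of `n`
  have hndvd {ρ : ℤ} (hρ : (ρ : ZMod n) = r) {d : ℕ} (hd : 2 ≤ d) (hdn : d ∣ n) :
      ¬ (d : ℤ) ∣ ρ := by
    intro hdρ
    have hu : IsUnit (ρ : ZMod d) := by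
      have := r.isUnit.map (ZMod.castHom hdn (ZMod d))
      rwa [← hρ, map_intCast] at this
    rw [(ZMod.intCast_zmod_eq_zero_iff_dvd ρ d).mpr hdρ] at hu
    have : Fact (1 < d) := ⟨by omega⟩
    exact not_isUnit_zero hu
  constructor
  · intro hqb
    by_contra! hcon
    obtain ⟨hlt, hr1, hr2⟩ := hcon
    obtain ⟨ρ, hρ⟩ := ZMod.intCast_surjective (r : ZMod n)
    have hyp : (1 : ℝ) / k + 1 / l + 1 / m < 1 := by
      have := (Rat.cast_lt (K := ℝ)).mpr hlt
      push_cast at this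
      exact this
    obtain ⟨e, he, d1, d2, d3⟩ := eq_one_or_neg_one_of_hyperbolic hk hl hm hyp hρ
      (hndvd hρ hk hkn) (hndvd hρ hl hln) (hndvd hρ hm hmn)
      (fun G _ => (hqb (ULift.{u} G)).of_mulEquiv MulEquiv.ulift)
    have hd : (n : ℤ) ∣ ρ - e := by
      rw [Int.natCast_dvd] at d1 d2 d3 ⊢
      rw [hn]
      exact Nat.lcm_dvd d1 (Nat.lcm_dvd d2 d3)
    have hre : (r : ZMod n) = e := by
      rw [← hρ, ← sub_eq_zero, ← Int.cast_sub]
      exact (ZMod.intCast_zmod_eq_zero_iff_dvd _ n).mpr hd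
    rcases he with rfl | rfl
    · exact hr1 (by simpa using hre)
    · exact hr2 (by simpa using hre)
  · intro hr G _ ρ hρ x y z hxyz hx hy hz
    suffices TripleProp k l m ρ G from this.toQuasi hxyz hx hy hz
    have hdvd {s : ℤ} (hs : (r : ZMod n) = s) {d : ℕ} (hdn : d ∣ n) : (d : ℤ) ∣ ρ - s := by
      refine (Int.natCast_dvd_natCast.mpr hdn).trans
        ((ZMod.intCast_zmod_eq_zero_iff_dvd _ n).mp ?_)
      rw [Int.cast_sub, hρ, hs, sub_self]
    rcases hr with hr | hr | hr
    · exact tripleProp_of_one_le hk hl hm hr (hndvd hρ hk hkn) (hndvd hρ hl hln) (hndvd hρ hm hmn)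
    · have hr' : (r : ZMod n) = (1 : ℤ) := by simpa using hr
      exact tripleProp_of_one (hdvd hr' hkn) (hdvd hr' hln) (hdvd hr' hmn)
    · have hr' : (r : ZMod n) = (-1 : ℤ) := by simpa using hr
      exact tripleProp_of_neg_one (by simpa using hdvd hr' hkn) (by simpa using hdvd hr' hln)
        (by simpa using hdvd hr' hmn)

theorem every_group_quasiBurnside_iff (k l m : ℕ) (hk : 2 ≤ k) (hl : 2 ≤ l) (hm : 2 ≤ m)
    (r : (ZMod (Nat.lcm k (Nat.lcm l m)))ˣ) :
    (∀ (G : Type u) [Group G], IsQuasiBurnsideWith k l m (Nat.lcm k (Nat.lcm l m)) r G) ↔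
      ((1 : ℚ) ≤ 1 / k + 1 / l + 1 / m ∨
        (r : ZMod (Nat.lcm k (Nat.lcm l m))) = 1 ∨
        (r : ZMod (Nat.lcm k (Nat.lcm l m))) = -1) :=
  every_group_quasiBurnside_iff_aux rfl hk hl hm r
end

section
/- Let k, l, m ≥ 2 be integers and let r be a unit in ℤ/lcm(k,l,m)ℤ. Then the group PSL₂(ℝ) is (k,l,m,r)-quasi-Burnside if and only if 1/k + 1/l + 1/m ≥ 1 or r ∈ {1, -1} in ℤ/lcm(k,l,m)ℤ. -/
/-!
Write `R θ` for the class in `PSL(2, ℝ)` of the rotation matrix of angle `θ`; it only depends on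
`θ` modulo `π`. Every nontrivial element with `x ^ k = 1` is conjugate to `R (π a / k)` for some
`0 < a < k` (`finite_order`): averaging the standard inner product over the powers of a lift gives
an invariant positive definite form, which forces the trace to lie strictly between `-2` and `2`.

The geometric input concerns angles `α, β, γ` in `(0, π)`. Elements `x ~ R α`, `y ~ R β` with
`x y ~ R (-γ)` exist only if `α + β + γ ≤ π` or `α + β + γ ≥ 2π` (`triangle_necessary`), and they
do exist if `α + β + γ ≤ π` (`triangle_sufficient`). Both come from the formula
`tr = 2 cos α cos β - T sin α`, `T ≥ 2 sin β`, for the trace of a product of elliptic elements,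
together with the sign of an off-diagonal entry, which distinguishes `R θ` from `R (-θ)`.

If `1/k + 1/l + 1/m ≥ 1`, a triple of nontrivial elements can only have angle sum exactly `π` or
`2π`, and powers of such a triple are realized by commuting rotations. If `r = ±1`, the triples
`(x, y, z)` and `(y⁻¹ x⁻¹ y, y⁻¹, z⁻¹)` do the job in any group.

Conversely the quasi-Burnside property yields the arithmetic condition `AngleCond`: whenever
`a/k + b/l + c/m ≤ 1`, the sum of the fractional parts of `ra/k`, `rb/l`, `rc/m` is not strictly
between `1` and `2`. The triple `(1, 1, 1)` shows, up to replacing `r` by `-r`, that the residues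
`p, q, s` of `r` satisfy `p/k + q/l + s/m ≤ 1`. If two of the residues exceed `1`, taking
`a = b = 1` and the least `c` with `s c / m > 1 - p/k - q/l`, where `s/m < p/k + q/l`, violates the
condition (`AngleCond.case_two`). If only `s` exceeds `1`, a suitable `a` makes multiplication by
`s` on `ℤ/m` preserve an initial interval `{0, …, M}` with `1 ≤ M ≤ m - 2`, which is impossible
(`interval_lemma`). So `r` is `1` modulo each of `k`, `l`, `m`.
-/

open scoped MatrixGroups

open Real

/-! ### Arithmetic of the angle condition -/

/-- For `M < m / 2`, multiplication by `s ≥ 2` does not preserve `{1, …, M}` modulo `m`: the first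
multiple of `s` beyond `M` is still below `m`. -/
theorem step_lemma (m s M : ℤ) (hs : 2 ≤ s) (hM : 1 ≤ M) (hMm : 2 * M < m)
    (h : ∀ c, 1 ≤ c → c ≤ M → s * c % m ≤ M) (hsm : s < m) : False := by
  have h1 : s ≤ M := by
    have := h 1 le_rfl hM
    rwa [mul_one, Int.emod_eq_of_lt (by omega) hsm] at this
  have hd := Int.mul_ediv_add_emod M s
  have hr0 := Int.emod_nonneg M (show s ≠ 0 by omega)
  have hr1 := Int.emod_lt_of_pos M (show 0 < s by omega)
  have hq : 1 ≤ M / s := (Int.le_ediv_iff_mul_le (by omega)).2 (by omega)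
  have hc : M / s + 1 ≤ M := by nlinarith
  have := h (M / s + 1) (by omega) hc
  rw [Int.emod_eq_of_lt (by nlinarith) (by nlinarith)] at this
  nlinarith

/-- Multiplication by a unit `s ≠ 1` of `ℤ/m` does not preserve `{0, …, M}` if `1 ≤ M ≤ m - 2`.
Being injective, it would also preserve the complement, hence `{1, …, m - 1 - M}` by negation, and
one of the two intervals is short enough for `step_lemma`. -/
theorem interval_lemma (m s M : ℤ) (hcop : IsCoprime s m) (hs : 2 ≤ s) (hsm : s < m)
    (hM : 1 ≤ M) (hMm : M ≤ m - 2)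
    (h : ∀ c, 1 ≤ c → c ≤ M → s * c % m ≤ M) : False := by
  by_cases h2 : 2 * M < m
  · exact step_lemma m s M hs hM h2 h hsm
  have hinj : ∀ a b : ℤ, 0 ≤ a → a < m → 0 ≤ b → b < m → s * a % m = s * b % m → a = b := by
    intro a b ha ha' hb hb' hab
    have h1 : m ∣ s * (a - b) := by
      rw [mul_sub]; exact Int.ModEq.dvd (Int.ModEq.symm hab)
    have h2 : m ∣ a - b := hcop.symm.dvd_of_dvd_mul_left h1
    have h3 := Int.eq_zero_of_abs_lt_dvd h2 (by rw [abs_lt]; constructor <;> omega)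
    omega
  have himg : (Finset.Icc 0 M).image (fun c => s * c % m) = Finset.Icc 0 M := by
    apply Finset.eq_of_subset_of_card_le
    · intro x hx
      obtain ⟨c, hc, rfl⟩ := Finset.mem_image.1 hx
      rw [Finset.mem_Icc] at hc ⊢
      refine ⟨Int.emod_nonneg _ (by omega), ?_⟩
      rcases hc.1.eq_or_lt with h0 | h0
      · subst h0; simp; omega
      · exact h c h0 hc.2
    · rw [Finset.card_image_of_injOn]
      intro a ha b hb hab
      simp only [Finset.coe_Icc, Set.mem_Icc] at ha hb
      exact hinj a b ha.1 (by omega) hb.1 (by omega) hab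
  -- Pass to the negatives of the elements outside `{0, …, M}`.
  refine step_lemma m s (m - 1 - M) hs (by omega) (by omega) ?_ hsm
  intro d hd hd'
  by_contra hcon
  have hpos := Int.emod_nonneg (s * d) (show m ≠ 0 by omega)
  have hlt := Int.emod_lt_of_pos (s * d) (show 0 < m by omega)
  have key : s * (m - d) % m = m - s * d % m := by
    have e : s * (m - d) = (m - s * d % m) + m * (s - 1 - s * d / m) := by
      have := Int.mul_ediv_add_emod (s * d) m
      linear_combination this
    rw [e, Int.add_mul_emod_self_left, Int.emod_eq_of_lt] <;> omega
  have hmem : s * (m - d) % m ∈ Finset.Icc 0 M := by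
    rw [key, Finset.mem_Icc]; omega
  rw [← himg] at hmem
  obtain ⟨c, hc, hce⟩ := Finset.mem_image.1 hmem
  rw [Finset.mem_Icc] at hc
  have := hinj c (m - d) hc.1 (by omega) (by omega) (by omega) hce
  omega

/-- The arithmetic shadow of the quasi-Burnside property: if the angles `π a/k`, `π b/l`, `π c/m`
have sum at most `π`, then the angles `π ra/k`, `π rb/l`, `π rc/m`, reduced to `(0, π)` modulo `π`,
have sum at most `π` or at least `2π`. -/
def AngleCond (k l m r : ℤ) : Prop :=
  ∀ a b c : ℤ, 0 < a → a < k → 0 < b → b < l → 0 < c → c < m →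
    (a / k + b / l + c / m : ℝ) ≤ 1 →
    (((r * a % k : ℤ) / k + (r * b % l : ℤ) / l + (r * c % m : ℤ) / m : ℝ) ≤ 1 ∨
      2 ≤ ((r * a % k : ℤ) / k + (r * b % l : ℤ) / l + (r * c % m : ℤ) / m : ℝ))

theorem AngleCond.rot {k l m r : ℤ} (h : AngleCond k l m r) : AngleCond l m k r := by
  intro a b c ha ha' hb hb' hc hc' hs
  have := h c a b hc hc' ha ha' hb hb' (by linarith)
  rcases this with h | h
  · left; linarith
  · right; linarith

/-- The condition fails at `(1, 1, c)`, where `c` is least with `s c / m > 1 - p/k - q/l` for the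
residues `p, q, s` of `r`; the bound on `s / m` ensures that `s c < m`, so that no reduction takes
place. -/
theorem AngleCond.case_two {k l m r : ℤ} (h : AngleCond k l m r)
    (hk : 2 ≤ k) (hl : 2 ≤ l) (hm : 2 ≤ m) (hp : 1 ≤ r % k) (hq : 1 ≤ r % l) (hs : 2 ≤ r % m)
    (hsum : ((r % k : ℤ) / k + (r % l : ℤ) / l + (r % m : ℤ) / m : ℝ) ≤ 1)
    (hlt : ((r % m : ℤ) / m : ℝ) < (r % k : ℤ) / k + (r % l : ℤ) / l) : False := by
  have ek : r * 1 % k = r % k := by simp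
  have el : r * 1 % l = r % l := by simp
  have em : ∀ c, r * c % m = (r % m) * c % m := by intro c; simp [Int.mul_emod]
  have hkR : (0:ℝ) < k := by exact_mod_cast (by omega : 0 < k)
  have hlR : (0:ℝ) < l := by exact_mod_cast (by omega : 0 < l)
  have hmR : (0:ℝ) < m := by exact_mod_cast (by omega : 0 < m)
  have hpk : (1 / k : ℝ) ≤ (r % k : ℤ) / k := by gcongr; exact_mod_cast hp
  have hql : (1 / l : ℝ) ≤ (r % l : ℤ) / l := by gcongr; exact_mod_cast hq
  have hk0 : (0:ℝ) < 1 / k := by positivity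
  have hl0 : (0:ℝ) < 1 / l := by positivity
  generalize hP : ((r % k : ℤ) / k : ℝ) = P at *
  generalize hQ : ((r % l : ℤ) / l : ℝ) = Q at *
  generalize r % m = s at *
  have hsR : (2:ℝ) ≤ s := by exact_mod_cast hs
  have hsm : (s:ℝ) ≤ m * (1 - P - Q) := by
    have : (s / m : ℝ) ≤ 1 - P - Q := by linarith
    rw [div_le_iff₀ hmR] at this; linarith
  have hslt : (s:ℝ) < m * (P + Q) := by
    rw [div_lt_iff₀ hmR] at hlt; linarith
  set c := ⌊(m * (1 - P - Q) / s : ℝ)⌋ + 1 with hc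
  have hf1 : (c - 1 : ℝ) ≤ m * (1 - P - Q) / s := by
    rw [hc]; push_cast; have := Int.floor_le (m * (1 - P - Q) / s : ℝ); linarith
  have hf2 : m * (1 - P - Q) / s < (c : ℝ) := by
    rw [hc]; push_cast; exact Int.lt_floor_add_one _
  rw [le_div_iff₀ (by linarith)] at hf1
  rw [div_lt_iff₀ (by linarith)] at hf2
  have hc1 : 1 ≤ c := by
    have : 0 ≤ ⌊(m * (1 - P - Q) / s : ℝ)⌋ := Int.floor_nonneg.2 (div_nonneg (by linarith) (by linarith))
    omega
  have hc1R : (1:ℝ) ≤ c := by exact_mod_cast hc1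
  have hcm : (s * c : ℝ) < m := by nlinarith
  have hcmZ : s * c < m := by exact_mod_cast hcm
  have hcT : (c : ℝ) ≤ m * (1 - 1 / k - 1 / l) := by
    have h1 : (c:ℝ) ≤ m * (1 - P - Q) := by nlinarith
    have h2 : m * (1 - P - Q) ≤ m * (1 - 1 / k - 1 / l : ℝ) := by
      apply mul_le_mul_of_nonneg_left _ hmR.le; linarith
    linarith
  have := h 1 1 c one_pos (by omega) one_pos (by omega) (by omega) (by nlinarith) (by
    have : (c / m : ℝ) ≤ 1 - 1 / k - 1 / l := by rw [div_le_iff₀ hmR]; linarith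
    push_cast; linarith)
  rw [ek, el, em, Int.emod_eq_of_lt (by nlinarith) hcmZ, hP, hQ] at this
  have h3 : 1 - P - Q < ((s * c : ℤ) / m : ℝ) := by
    rw [lt_div_iff₀ hmR]; push_cast; linarith
  have h4 : ((s * c : ℤ) / m : ℝ) < 1 := by
    rw [div_lt_one hmR]; push_cast; linarith
  have h5 : (0:ℝ) < s / m := by positivity
  rcases this with h | h <;> linarith

/-- If `r` is `1` modulo `k` and `l`, then for fixed `a`, `b` the condition says that multiplication
by `r` preserves `{0, …, M}` modulo `m`, where `M = ⌊m (1 - a/k - b/l)⌋`. -/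
theorem AngleCond.case_one {k l m r : ℤ} (h : AngleCond k l m r)
    (hk : 2 ≤ k) (hl : 2 ≤ l) (hm : 2 ≤ m) (hcop : IsCoprime r m)
    (hhyp : (1 / k + 1 / l + 1 / m : ℝ) < 1)
    (hp : r % k = 1) (hq : r % l = 1) (hs : 2 ≤ r % m) : False := by
  have hsm : r % m < m := Int.emod_lt_of_pos _ (by omega)
  have em : ∀ c, r * c % m = (r % m) * c % m := by intro c; simp [Int.mul_emod]
  have hkR : (0:ℝ) < k := by exact_mod_cast (by omega : 0 < k)
  have hlR : (0:ℝ) < l := by exact_mod_cast (by omega : 0 < l)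
  have hmR : (3:ℝ) ≤ m := by exact_mod_cast (by omega : 3 ≤ m)
  have hl0 : (0:ℝ) < 1 / l := by positivity
  have hm0 : (0:ℝ) < 1 / m := by positivity
  have hm3 : (1 / m : ℝ) ≤ 1 / 3 := by gcongr
  -- With `b = 1`, choose `a` such that `1 ≤ M ≤ m - 2`.
  have ⟨a, ha, h1, h2⟩ : ∃ a : ℤ, 1 ≤ a ∧ (1 / m : ℝ) < a / k + 1 / l ∧
      (a / k + 1 / l : ℝ) ≤ 1 - 1 / m := by
    by_cases hc : (1 / m : ℝ) < 1 / k + 1 / l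
    · exact ⟨1, le_rfl, by push_cast; exact hc, by push_cast; linarith⟩
    · have hf1 := Int.floor_le ((1 / m - 1 / l) * k : ℝ)
      have hf2 := Int.lt_floor_add_one ((1 / m - 1 / l) * k : ℝ)
      have hk1 : (0:ℝ) < 1 / k := by positivity
      have hf3 : 0 ≤ ⌊((1 / m - 1 / l) * k : ℝ)⌋ :=
        Int.floor_nonneg.2 (mul_nonneg (by linarith) hkR.le)
      refine ⟨⌊((1 / m - 1 / l) * k : ℝ)⌋ + 1, by omega, ?_, ?_⟩
      · have : (1 / m - 1 / l : ℝ) < (⌊((1 / m - 1 / l) * k : ℝ)⌋ + 1 : ℤ) / k := by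
          rw [lt_div_iff₀ hkR]; push_cast; exact hf2
        linarith
      · have : (⌊((1 / m - 1 / l) * k : ℝ)⌋ / k : ℝ) ≤ 1 / m - 1 / l := by
          rw [div_le_iff₀ hkR]; exact hf1
        push_cast
        rw [add_div]
        linarith
  set M := ⌊(m * (1 - (a / k + 1 / l)) : ℝ)⌋ with hMdef
  have hak : a < k := by
    have : (a / k : ℝ) < 1 := by linarith
    rw [div_lt_one hkR] at this; exact_mod_cast this
  have hmm : (m * (1 / m) : ℝ) = 1 := by field_simp
  have hM1 : 1 ≤ M := by
    rw [hMdef, Int.le_floor]; push_cast; nlinarith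
  have hM2 : M ≤ m - 2 := by
    have : M < m - 1 := by
      rw [hMdef, Int.floor_lt]; push_cast; nlinarith
    omega
  refine interval_lemma m (r % m) M ?_ hs hsm hM1 hM2 ?_
  · rw [Int.emod_def, sub_eq_add_neg, ← mul_neg]
    exact hcop.add_mul_left_left _
  · intro c hc hcM
    have hcR : (c:ℝ) ≤ m * (1 - (a / k + 1 / l)) := by
      rw [hMdef, Int.le_floor] at hcM; exact hcM
    have := h a 1 c (by omega) hak one_pos (by omega) (by omega) (by omega) (by
      have : (c / m : ℝ) ≤ 1 - (a / k + 1 / l) := by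
        rw [div_le_iff₀ (by linarith)]; linarith
      push_cast; linarith)
    have ea : r * a % k = a := by
      rw [Int.mul_emod, hp, one_mul, Int.emod_emod_of_dvd _ dvd_rfl, Int.emod_eq_of_lt (by omega) hak]
    rw [ea, mul_one, hq, em] at this
    have hlt := Int.emod_lt_of_pos (r % m * c) (show 0 < m by omega)
    have hltR : (((r % m * c % m : ℤ) : ℝ) / m) < 1 := by
      rw [div_lt_one (by linarith)]; exact_mod_cast hlt
    push_cast at this hltR
    rcases this with h | h
    · rw [hMdef, Int.le_floor]
      have h' : (((r % m * c % m : ℤ) : ℝ) / m) ≤ 1 - (a / k + 1 / l) := by linarith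
      rw [div_le_iff₀ (by linarith)] at h'; linarith
    · linarith

theorem emod_pos_of_coprime {r k : ℤ} (hk : 2 ≤ k) (h : IsCoprime r k) : 1 ≤ r % k := by
  have h0 := Int.emod_nonneg r (show k ≠ 0 by omega)
  by_contra hc
  have : k ∣ r := Int.dvd_of_emod_eq_zero (by omega)
  have := h.symm.isUnit_of_dvd' dvd_rfl this
  rw [Int.isUnit_iff] at this
  omega

theorem AngleCond.emod_eq_one {k l m r : ℤ} (h : AngleCond k l m r)
    (hk : 2 ≤ k) (hl : 2 ≤ l) (hm : 2 ≤ m)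
    (ck : IsCoprime r k) (cl : IsCoprime r l) (cm : IsCoprime r m)
    (hhyp : (1 / k + 1 / l + 1 / m : ℝ) < 1)
    (hsum : ((r % k : ℤ) / k + (r % l : ℤ) / l + (r % m : ℤ) / m : ℝ) ≤ 1) :
    r % k = 1 ∧ r % l = 1 ∧ r % m = 1 := by
  have pk := emod_pos_of_coprime hk ck
  have pl := emod_pos_of_coprime hl cl
  have pm := emod_pos_of_coprime hm cm
  have pos : ∀ n : ℤ, 2 ≤ n → 1 ≤ r % n → (0:ℝ) < (r % n : ℤ) / n := by
    intro n hn h1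
    have : (0:ℝ) < n := by exact_mod_cast (by omega : 0 < n)
    have : (0:ℝ) < (r % n : ℤ) := by exact_mod_cast (by omega : 0 < r % n)
    positivity
  have qk := pos k hk pk
  have ql := pos l hl pl
  have qm := pos m hm pm
  have A1 : 2 ≤ r % m → ((r % k : ℤ) / k + (r % l : ℤ) / l : ℝ) ≤ (r % m : ℤ) / m := fun h2 =>
    le_of_not_gt fun hlt => h.case_two hk hl hm pk pl h2 hsum hlt
  have A2 : 2 ≤ r % k → ((r % l : ℤ) / l + (r % m : ℤ) / m : ℝ) ≤ (r % k : ℤ) / k := fun h2 =>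
    le_of_not_gt fun hlt => h.rot.case_two hl hm hk pl pm h2 (by linarith) hlt
  have A3 : 2 ≤ r % l → ((r % m : ℤ) / m + (r % k : ℤ) / k : ℝ) ≤ (r % l : ℤ) / l := fun h2 =>
    le_of_not_gt fun hlt => h.rot.rot.case_two hm hk hl pm pk h2 (by linarith) hlt
  have B1 := h.case_one hk hl hm cm hhyp
  have B2 := h.rot.case_one hl hm hk ck (by linarith)
  have B3 := h.rot.rot.case_one hm hk hl cl (by linarith)
  have E : ∀ n : ℤ, 1 ≤ r % n → r % n = 1 ∨ 2 ≤ r % n := fun n hn => by omega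
  rcases E k pk with e1 | e1 <;> rcases E l pl with e2 | e2 <;> rcases E m pm with e3 | e3
  · exact ⟨e1, e2, e3⟩
  · exact (B1 e1 e2 e3).elim
  · exact (B3 e3 e1 e2).elim
  · linarith [A1 e3, A3 e2]
  · exact (B2 e2 e3 e1).elim
  · linarith [A1 e3, A2 e1]
  · linarith [A2 e1, A3 e2]
  · linarith [A2 e1, A3 e2]

/-! ### Elliptic elements of `PSL(2, ℝ)` and triangles -/

/-- The element of `SL(2, ℝ)` with rows `(a, b)` and `(c, d)`. -/
def mkSL (a b c d : ℝ) (h : a * d - b * c = 1) : SL(2, ℝ) :=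
  ⟨!![a, b; c, d], by rw [Matrix.det_fin_two_of, h]⟩

theorem coe_mkSL (a b c d : ℝ) (h : a * d - b * c = 1) :
    (mkSL a b c d h : Matrix (Fin 2) (Fin 2) ℝ) = !![a, b; c, d] := rfl

/-- The rotation matrix of angle `θ`. -/
noncomputable def rotSL (θ : ℝ) : SL(2, ℝ) :=
  mkSL (cos θ) (-sin θ) (sin θ) (cos θ) (by nlinarith [sin_sq_add_cos_sq θ])

theorem coe_rotSL (θ : ℝ) :
    (rotSL θ : Matrix (Fin 2) (Fin 2) ℝ) = !![cos θ, -sin θ; sin θ, cos θ] := rfl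

/-- The class of the rotation matrix of angle `θ` in `PSL(2, ℝ)`; it acts on the hyperbolic plane as
a rotation of angle `2θ`, up to orientation, and has period `π` in `θ`. -/
noncomputable def rotPSL (θ : ℝ) : PSL(2, ℝ) := QuotientGroup.mk (rotSL θ)

theorem rotSL_add (a b : ℝ) : rotSL (a + b) = rotSL a * rotSL b := by
  ext i j
  fin_cases i <;> fin_cases j <;>
    simp [coe_rotSL, Matrix.mul_apply, Fin.sum_univ_two, cos_add, sin_add] <;> ring

theorem neg_one_mem_center : (-1 : SL(2, ℝ)) ∈ Subgroup.center SL(2, ℝ) := by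
  rw [Subgroup.mem_center_iff]; intro g; simp

theorem mk_eq_mk_iff {A B : SL(2, ℝ)} :
    (QuotientGroup.mk A : PSL(2, ℝ)) = QuotientGroup.mk B ↔ B = A ∨ B = -A := by
  rw [QuotientGroup.eq]
  constructor
  · intro h
    obtain ⟨r, hr, hs⟩ := Matrix.SpecialLinearGroup.mem_center_iff.1 h
    simp only [Fintype.card_fin] at hr
    rcases mul_self_eq_one_iff.1 (show r * r = 1 by rw [← sq, hr]) with rfl | rfl
    · left
      have : A⁻¹ * B = 1 := by
        apply Subtype.ext; rw [← hs]; simp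
      exact (inv_mul_eq_one.1 this).symm
    · right
      have : A⁻¹ * B = -1 := by
        apply Subtype.ext
        rw [← hs]
        ext i j
        fin_cases i <;> fin_cases j <;> simp
      rw [inv_mul_eq_iff_eq_mul] at this
      simpa using this
  · rintro (rfl | rfl)
    · simp
    · simpa using neg_one_mem_center

theorem rotSL_zero : rotSL 0 = 1 := by
  ext i j; fin_cases i <;> fin_cases j <;> simp [coe_rotSL]

theorem rotSL_pi : rotSL π = -1 := by
  ext i j; fin_cases i <;> fin_cases j <;> simp [coe_rotSL]

theorem rotPSL_add (a b : ℝ) : rotPSL (a + b) = rotPSL a * rotPSL b := by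
  simp [rotPSL, rotSL_add]

theorem rotPSL_zero : rotPSL 0 = 1 := by simp [rotPSL, rotSL_zero]

theorem rotPSL_neg (a : ℝ) : rotPSL (-a) = (rotPSL a)⁻¹ := by
  rw [eq_inv_iff_mul_eq_one, ← rotPSL_add, neg_add_cancel, rotPSL_zero]

theorem rotPSL_pow (a : ℝ) (n : ℕ) : rotPSL a ^ n = rotPSL (n * a) := by
  induction n with
  | zero => simp [rotPSL_zero]
  | succ n ih => rw [pow_succ, ih, ← rotPSL_add]; congr 1; push_cast; ring

theorem rotPSL_zpow (a : ℝ) (n : ℤ) : rotPSL a ^ n = rotPSL (n * a) := by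
  obtain ⟨n, rfl | rfl⟩ := n.eq_nat_or_neg
  · simp [rotPSL_pow]
  · simp [rotPSL_pow, rotPSL_neg]

theorem rotPSL_int_mul_pi (n : ℤ) : rotPSL (n * π) = 1 := by
  have : rotPSL π = 1 := by
    rw [rotPSL, rotSL_pi, QuotientGroup.eq_one_iff]; exact neg_one_mem_center
  rw [← rotPSL_zpow, this, one_zpow]

theorem rotPSL_add_int_mul_pi (θ : ℝ) (n : ℤ) : rotPSL (θ + n * π) = rotPSL θ := by
  rw [rotPSL_add, rotPSL_int_mul_pi, mul_one]

/-- An elliptic matrix of trace `2 cos θ` with positive lower left entry is conjugate to the rotation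
of angle `θ`. The conjugating matrix sends `i` to the fixed point in the upper half plane. -/
theorem isConj_rotSL {M : SL(2, ℝ)} {θ : ℝ} (h0 : 0 < θ) (h1 : θ < π)
    (htr : M 0 0 + M 1 1 = 2 * cos θ) (hll : 0 < M 1 0) : IsConj (rotSL θ) M := by
  have hsin : 0 < sin θ := sin_pos_of_pos_of_lt_pi h0 h1
  have hdet : M 0 0 * M 1 1 - M 0 1 * M 1 0 = 1 := by
    rw [← Matrix.det_fin_two]; exact M.2
  have hcs := sin_sq_add_cos_sq θ
  set u := √(sin θ / M 1 0) with hu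
  have hu0 : 0 < u := sqrt_pos.2 (by positivity)
  have hu2 : u * u = sin θ / M 1 0 := mul_self_sqrt (by positivity)
  have hus : u * u * M 1 0 = sin θ := by rw [hu2]; field_simp
  rw [isConj_iff]
  refine ⟨mkSL u ((M 0 0 - M 1 1) / (2 * M 1 0) / u) 0 (1 / u) (by field_simp; ring), ?_⟩
  rw [mul_inv_eq_iff_eq_mul]
  generalize hp : M 0 0 = p at *
  generalize hq : M 0 1 = q at *
  generalize hs : M 1 0 = s at *
  generalize hw : M 1 1 = w at *
  have hM : (M : Matrix (Fin 2) (Fin 2) ℝ) = !![p, q; s, w] := by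
    rw [← hp, ← hq, ← hs, ← hw]; exact Matrix.eta_fin_two _
  apply Subtype.ext
  simp only [Matrix.SpecialLinearGroup.coe_mul, hM, coe_rotSL, coe_mkSL]
  have hw' : w = 2 * cos θ - p := by linarith
  subst hw'
  have hq' : q = (p * (2 * cos θ - p) - 1) / s := by field_simp; linarith
  ext i j
  fin_cases i <;> fin_cases j <;> simp [Matrix.mul_apply, Fin.sum_univ_two]
  · rw [← hus]; field_simp; ring
  · rw [hq']; field_simp; rw [show u^2 = u * u by ring, hu2]; field_simp; nlinarith
  · rw [← hus]; field_simp
  · field_simp; ring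

/-- For a conjugate of a rotation, the trace, and the difference of the off-diagonal entries in terms
of the squared Frobenius norm `N` of the conjugating matrix. -/
theorem conj_entries (g : SL(2, ℝ)) (θ : ℝ) :
    ∃ N : ℝ, 2 ≤ N ∧
      (g * rotSL θ * g⁻¹) 0 0 + (g * rotSL θ * g⁻¹) 1 1 = 2 * cos θ ∧
      (g * rotSL θ * g⁻¹) 1 0 - (g * rotSL θ * g⁻¹) 0 1 = sin θ * N := by
  have hdet : g 0 0 * g 1 1 - g 0 1 * g 1 0 = 1 := by
    rw [← Matrix.det_fin_two]; exact g.2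
  refine ⟨g 0 0 ^ 2 + g 0 1 ^ 2 + g 1 0 ^ 2 + g 1 1 ^ 2, ?_, ?_, ?_⟩
  · nlinarith [sq_nonneg (g 0 0 - g 1 1), sq_nonneg (g 0 1 + g 1 0)]
  · simp [coe_rotSL, Matrix.mul_apply, Fin.sum_univ_two, Matrix.adjugate_fin_two]
    linear_combination 2 * cos θ * hdet
  · simp [coe_rotSL, Matrix.mul_apply, Fin.sum_univ_two, Matrix.adjugate_fin_two]
    ring

/-- The trigonometric core of `triangle_necessary`. The quantities in `htr` and `hW` are the trace and
the difference of the off-diagonal entries of the product of a rotation of angle `α` with an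
elliptic matrix of angle `β`. -/
theorem angle_ineq {α β γ T : ℝ} (hα : 0 < α) (hα' : α < π) (hβ' : β < π)
    (hγ' : γ < π) (hT : 2 * sin β ≤ T)
    (htr : 2 * cos α * cos β - sin α * T = -(2 * cos γ))
    (hW : 0 < 2 * sin α * cos β + cos α * T) : α + β + γ ≤ π := by
  have sα := sin_pos_of_pos_of_lt_pi hα hα'
  by_cases h : α + β ≤ π
  · have h1 : cos (π - γ) ≤ cos (α + β) := by
      rw [cos_pi_sub, cos_add]; nlinarith
    by_contra hc
    have := cos_lt_cos_of_nonneg_of_le_pi (x := π - γ) (y := α + β) (by linarith) h (by linarith)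
    linarith
  · exfalso
    rcases le_or_gt (cos α) 0 with hc | hc
    · have h1 : sin (α + β) < 0 := by
        rw [← sin_sub_two_pi]
        exact sin_neg_of_neg_of_neg_pi_lt (by linarith) (by linarith)
      rw [sin_add] at h1
      nlinarith
    · have h1 : cos α + cos β < 0 := by
        have := cos_lt_cos_of_nonneg_of_le_pi (x := π - β) (y := α) (by linarith) hα'.le (by linarith)
        rw [cos_pi_sub] at this; linarith
      have hγ1 : cos γ ≤ 1 := cos_le_one γ
      have h2 : sin α * (2 * sin α * cos β + cos α * T) ≤ 2 * (cos α + cos β) := by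
        have := sin_sq_add_cos_sq α
        have e : sin α * (2 * sin α * cos β + cos α * T) =
          2 * cos β + 2 * cos α * cos γ := by
          linear_combination 2 * cos β * this - cos α * htr
        nlinarith
      nlinarith

theorem triangle_necessary {α β γ : ℝ} (hα : 0 < α) (hα' : α < π) (hβ : 0 < β) (hβ' : β < π)
    (hγ : 0 < γ) (hγ' : γ < π) {x y : PSL(2, ℝ)} (hx : IsConj (rotPSL α) x)
    (hy : IsConj (rotPSL β) y) (hxy : IsConj (rotPSL (-γ)) (x * y)) :
    α + β + γ ≤ π ∨ 2 * π ≤ α + β + γ := by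
  obtain ⟨g, rfl⟩ := isConj_iff.1 hx
  obtain ⟨h, hh⟩ := isConj_iff.1 (hy.trans (isConj_iff.2 ⟨g⁻¹, rfl⟩))
  obtain ⟨f, hf⟩ := isConj_iff.1 (hxy.trans (isConj_iff.2 ⟨g⁻¹, rfl⟩))
  have e : g⁻¹ * (g * rotPSL α * g⁻¹ * y) * g⁻¹⁻¹ = rotPSL α * (g⁻¹ * y * g⁻¹⁻¹) := by group
  rw [e, ← hh] at hf
  obtain ⟨H, rfl⟩ := QuotientGroup.mk_surjective h
  obtain ⟨F, rfl⟩ := QuotientGroup.mk_surjective f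
  have hf' : (QuotientGroup.mk (F * rotSL (-γ) * F⁻¹) : PSL(2, ℝ)) =
    QuotientGroup.mk (rotSL α * (H * rotSL β * H⁻¹)) := hf
  rw [mk_eq_mk_iff] at hf'
  obtain ⟨N, hN, a1, a2⟩ := conj_entries H β
  obtain ⟨N', hN', b1, b2⟩ := conj_entries F (-γ)
  have sβ := sin_pos_of_pos_of_lt_pi hβ hβ'
  have sγ := sin_pos_of_pos_of_lt_pi hγ hγ'
  generalize H * rotSL β * H⁻¹ = Y at *
  generalize F * rotSL (-γ) * F⁻¹ = Z at *
  rw [cos_neg] at b1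
  rw [sin_neg] at b2
  have hT : 2 * sin β ≤ Y 1 0 - Y 0 1 := by rw [a2]; nlinarith
  have tr : (rotSL α * Y) 0 0 + (rotSL α * Y) 1 1 =
      2 * cos α * cos β - sin α * (Y 1 0 - Y 0 1) := by
    simp [coe_rotSL, Matrix.mul_apply, Fin.sum_univ_two]
    linear_combination cos α * a1
  have tw : (rotSL α * Y) 1 0 - (rotSL α * Y) 0 1 =
      2 * sin α * cos β + cos α * (Y 1 0 - Y 0 1) := by
    simp [coe_rotSL, Matrix.mul_apply, Fin.sum_univ_two]
    linear_combination sin α * a1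
  rcases hf' with e | e
  -- The two signs are exchanged by replacing all the angles by their supplements.
  · right
    rw [e] at tr tw
    have := angle_ineq (α := π - α) (β := π - β) (γ := π - γ) (T := Y 1 0 - Y 0 1)
      (by linarith) (by linarith) (by linarith) (by linarith)
      (by rwa [sin_pi_sub])
      (by simp only [cos_pi_sub, sin_pi_sub]; linarith)
      (by simp only [cos_pi_sub, sin_pi_sub]; nlinarith)
    linarith
  · left
    rw [e] at tr tw
    simp only [Matrix.SpecialLinearGroup.coe_neg, Matrix.neg_apply] at tr tw
    exact angle_ineq hα hα' hβ' hγ' hT (by linarith) (by nlinarith)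

theorem isConj_mk {A B : SL(2, ℝ)} (h : IsConj A B) :
    IsConj (QuotientGroup.mk A : PSL(2, ℝ)) (QuotientGroup.mk B) :=
  (QuotientGroup.mk' (Subgroup.center SL(2, ℝ))).map_isConj h

theorem triangle_sufficient {α β γ : ℝ} (hα : 0 < α) (hβ : 0 < β) (hγ : 0 < γ)
    (h : α + β + γ ≤ π) : ∃ x y : PSL(2, ℝ), IsConj (rotPSL α) x ∧ IsConj (rotPSL β) y ∧
      IsConj (rotPSL (-γ)) (x * y) := by
  have sα := sin_pos_of_pos_of_lt_pi hα (by linarith)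
  have sβ := sin_pos_of_pos_of_lt_pi hβ (by linarith)
  have sαβ := sin_pos_of_pos_of_lt_pi (x := α + β) (by linarith) (by linarith)
  have hcos : -cos γ ≤ cos (α + β) := by
    rw [← cos_pi_sub]
    exact cos_le_cos_of_nonneg_of_le_pi (by linarith) (by linarith) (by linarith)
  rw [cos_add] at hcos
  rw [sin_add] at sαβ
  set V := (cos α * cos β + cos γ) / (sin α * sin β) with hV
  have hV1 : 1 ≤ V := by rw [hV, le_div_iff₀ (by positivity)]; linarith
  have hVe : V * (sin α * sin β) = cos α * cos β + cos γ := by rw [hV]; field_simp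
  -- `Y` below is `rotSL β` conjugated by `diag (√u, 1 / √u)`; this `u` gives `rotSL α * Y` the trace
  -- `-2 cos γ`.
  obtain ⟨u, hu1, hu⟩ : ∃ u : ℝ, 1 ≤ u ∧ u + 1 / u = 2 * V := by
    have hs := sq_sqrt (show 0 ≤ V ^ 2 - 1 by nlinarith)
    have hs0 := sqrt_nonneg (V ^ 2 - 1)
    refine ⟨V + √(V ^ 2 - 1), by linarith, ?_⟩
    have : 0 < V + √(V ^ 2 - 1) := by linarith
    field_simp
    nlinarith
  have hu0 : 0 < u := by linarith
  let Y : SL(2, ℝ) := mkSL (cos β) (-(u * sin β)) (sin β / u) (cos β) (by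
    field_simp; nlinarith [sin_sq_add_cos_sq β])
  have Y00 : Y 0 0 = cos β := rfl
  have Y01 : Y 0 1 = -(u * sin β) := rfl
  have Y10 : Y 1 0 = sin β / u := rfl
  have Y11 : Y 1 1 = cos β := rfl
  refine ⟨rotPSL α, QuotientGroup.mk Y, IsConj.refl _, isConj_mk ?_, ?_⟩
  · apply isConj_rotSL hβ (by linarith)
    · rw [Y00, Y11]; ring
    · rw [Y10]; positivity
  · have e : rotPSL (-γ) = rotPSL (π - γ) := by
      rw [← rotPSL_add_int_mul_pi (-γ) 1]; congr 1; push_cast; ring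
    rw [e]
    change IsConj _ (QuotientGroup.mk (rotSL α * Y) : PSL(2, ℝ))
    apply isConj_mk
    have P00 : (rotSL α * Y) 0 0 = cos α * cos β - sin α * (sin β / u) := by
      simp [coe_rotSL, Matrix.mul_apply, Fin.sum_univ_two, Y00, Y10]; ring
    have P01 : (rotSL α * Y) 0 1 = -(cos α * (u * sin β) + sin α * cos β) := by
      simp [coe_rotSL, Matrix.mul_apply, Fin.sum_univ_two, Y01, Y11]; ring
    have P10 : (rotSL α * Y) 1 0 = sin α * cos β + cos α * (sin β / u) := by
      simp [coe_rotSL, Matrix.mul_apply, Fin.sum_univ_two, Y00, Y10]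
    have P11 : (rotSL α * Y) 1 1 = cos α * cos β - sin α * (u * sin β) := by
      simp [coe_rotSL, Matrix.mul_apply, Fin.sum_univ_two, Y01, Y11]; ring
    apply isConj_rotSL (by linarith) (by linarith)
    · rw [P00, P11, cos_pi_sub]
      linear_combination (-sin α * sin β) * hu - 2 * hVe
    -- The sign of the lower left entry is visible directly if `cos α ≤ 0`; otherwise it is the opposite
    -- of the sign of the upper right entry, as the product is elliptic.
    · rcases le_or_gt (cos α) 0 with hc | hc
      · rw [P10]
        have : sin β / u ≤ sin β := div_le_self sβ.le hu1
        nlinarith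
      · have hdet : (rotSL α * Y) 0 0 * (rotSL α * Y) 1 1
            - (rotSL α * Y) 0 1 * (rotSL α * Y) 1 0 = 1 := by
          rw [← Matrix.det_fin_two]; exact (rotSL α * Y).2
        have hur : (rotSL α * Y) 0 1 < 0 := by
          rw [P01]
          have : sin β ≤ u * sin β := le_mul_of_one_le_left sβ.le hu1
          nlinarith
        have htr : (rotSL α * Y) 0 0 + (rotSL α * Y) 1 1 = - (2 * cos γ) := by
          rw [P00, P11]
          linear_combination (-sin α * sin β) * hu - 2 * hVe
        have sγ := sin_pos_of_pos_of_lt_pi hγ (by linarith)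
        have hcs := sin_sq_add_cos_sq γ
        generalize (rotSL α * Y) 0 0 = p at *
        generalize (rotSL α * Y) 0 1 = q at *
        generalize (rotSL α * Y) 1 0 = s at *
        generalize (rotSL α * Y) 1 1 = w at *
        have htr2 : (p + w) ^ 2 = 4 * cos γ ^ 2 := by rw [htr]; ring
        have h1 : q * s < 0 := by nlinarith [sq_nonneg (p - w)]
        exact pos_of_mul_neg_right h1 hur.le

/-- An element of `SL(2, ℝ)` of finite order in `PSL(2, ℝ)` is `±1` or elliptic, because it preserves
the positive definite form `Q = ∑ (X ^ i)ᵀ X ^ i`. -/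
theorem trace_lt_of_pow {k : ℕ} (hk : 1 ≤ k) (X : SL(2, ℝ)) (hX : X ^ k = 1 ∨ X ^ k = -1) :
    (X = 1 ∨ X = -1) ∨ (X 1 0 ≠ 0 ∧ (X 0 0 + X 1 1) ^ 2 < 4) := by
  let Xm : Matrix (Fin 2) (Fin 2) ℝ := X
  let f : ℕ → Matrix (Fin 2) (Fin 2) ℝ := fun i => (Xm ^ i).conjTranspose * Xm ^ i
  have hXk : Xm ^ k = 1 ∨ Xm ^ k = -1 := by
    rcases hX with h | h
    · left; have := congrArg (Subtype.val) h; simpa using this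
    · right; have := congrArg (Subtype.val) h; simpa using this
  have hf0 : f 0 = 1 := by simp [f]
  have hfk : f k = 1 := by
    rcases hXk with h | h <;> simp only [f, h] <;> simp
  have hfs : ∀ i, f (i + 1) = Xm.transpose * f i * Xm := by
    intro i; simp only [f, Matrix.conjTranspose_eq_transpose_of_trivial, pow_succ,
      Matrix.transpose_mul, Matrix.mul_assoc]
  let Q := ∑ i ∈ Finset.range k, f i
  have hQ : Xm.transpose * Q * Xm = Q := by
    have h1 : Xm.transpose * Q * Xm = ∑ i ∈ Finset.range k, f (i + 1) := by
      simp only [Q, hfs, Finset.mul_sum, Finset.sum_mul]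
    have h2 := Finset.sum_range_succ' f k
    rw [Finset.sum_range_succ, hf0, hfk] at h2
    rw [h1]; exact (add_right_cancel h2).symm
  have hQpos : Q.PosDef := by
    obtain ⟨j, rfl⟩ : ∃ j, k = j + 1 := ⟨k - 1, by omega⟩
    have : Q = 1 + ∑ i ∈ Finset.range j, f (i + 1) := by
      simp only [Q]; rw [Finset.sum_range_succ', hf0, add_comm]
    rw [this]
    exact Matrix.PosDef.one.add_posSemidef
      (Matrix.posSemidef_sum _ fun i _ => Matrix.posSemidef_conjTranspose_mul_self _)
  have hA : 0 < Q 0 0 := hQpos.diag_pos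
  have hD : 0 < Q.det := hQpos.det_pos
  have hsymm : Q 1 0 = Q 0 1 := by simpa using (hQpos.isHermitian.apply 1 0).symm
  rw [Matrix.det_fin_two, hsymm] at hD
  have hdet : X 0 0 * X 1 1 - X 0 1 * X 1 0 = 1 := by
    rw [← Matrix.det_fin_two]; exact X.2
  have q00 := congrFun (congrFun hQ 0) 0
  have q01 := congrFun (congrFun hQ 0) 1
  have q11 := congrFun (congrFun hQ 1) 1
  simp only [Matrix.mul_apply, Fin.sum_univ_two, Matrix.transpose_apply, hsymm, Xm] at q00 q01 q11
  have hX' := Matrix.eta_fin_two (X : Matrix (Fin 2) (Fin 2) ℝ)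
  generalize Q 0 0 = A at *
  generalize Q 0 1 = B at *
  generalize Q 1 1 = C at *
  generalize X 0 0 = p at *
  generalize X 0 1 = q at *
  generalize X 1 0 = s at *
  generalize X 1 1 = w at *
  have e1 : 2 * B * s = A * (w - p) := by
    linear_combination w * q00 - s * q01 - (A * p + B * s) * hdet
  have e2 : A * q = -(s * C) := by
    linear_combination w * q01 - s * q11 - (A * q + B * w) * hdet
  by_cases hs : s = 0
  · left
    subst hs
    have hq : q = 0 := by
      have : A * q = 0 := by linarith
      exact (mul_eq_zero.1 this).resolve_left hA.ne'
    have hw : w = p := by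
      have : A * (w - p) = 0 := by linarith
      linarith [(mul_eq_zero.1 this).resolve_left hA.ne']
    subst hq hw
    rcases mul_self_eq_one_iff.1 (show w * w = 1 by linarith) with rfl | rfl
    · left; ext i j; rw [hX']; fin_cases i <;> fin_cases j <;> simp
    · right; ext i j; rw [hX']; fin_cases i <;> fin_cases j <;> simp
  · right
    refine ⟨hs, ?_⟩
    have h1 : A ^ 2 * ((p + w) ^ 2 - 4) = -(4 * s ^ 2 * (A * C - B * B)) := by
      have : (p + w) ^ 2 - 4 = (w - p) ^ 2 + 4 * q * s := by linear_combination 4 * hdet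
      rw [this]
      linear_combination (-(A * (w - p)) - 2 * B * s) * e1 + 4 * A * s * e2
    have h2 : 0 < 4 * s ^ 2 * (A * C - B * B) := by positivity
    have h3 : 0 < A ^ 2 := by positivity
    by_contra hc
    nlinarith

theorem exists_isConj_rotPSL {X : SL(2, ℝ)} (h1 : X 1 0 ≠ 0) (h2 : (X 0 0 + X 1 1) ^ 2 < 4) :
    ∃ θ, 0 < θ ∧ θ < π ∧ IsConj (rotPSL θ) (QuotientGroup.mk X : PSL(2, ℝ)) := by
  have main : ∀ M : SL(2, ℝ), 0 < M 1 0 → (M 0 0 + M 1 1) ^ 2 < 4 →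
      ∃ θ, 0 < θ ∧ θ < π ∧ IsConj (rotPSL θ) (QuotientGroup.mk M : PSL(2, ℝ)) := by
    intro M hM hM2
    have hlt : |M 0 0 + M 1 1| < 2 := abs_lt_of_sq_lt_sq (by linarith) (by norm_num)
    rw [abs_lt] at hlt
    refine ⟨arccos ((M 0 0 + M 1 1) / 2), arccos_pos.2 (by linarith), ?_, isConj_mk ?_⟩
    · apply lt_of_le_of_ne (arccos_le_pi _)
      rw [Ne, arccos_eq_pi]; linarith
    · apply isConj_rotSL (arccos_pos.2 (by linarith)) _ _ hM
      · apply lt_of_le_of_ne (arccos_le_pi _)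
        rw [Ne, arccos_eq_pi]; linarith
      · rw [cos_arccos (by linarith) (by linarith)]; ring
  rcases lt_or_gt_of_ne h1 with h | h
  · have e : (QuotientGroup.mk X : PSL(2, ℝ)) = QuotientGroup.mk (-X) := mk_eq_mk_iff.2 (Or.inr rfl)
    rw [e]
    apply main
    · simpa using h
    · simp only [Matrix.SpecialLinearGroup.coe_neg, Matrix.neg_apply]; nlinarith
  · exact main X h h2

theorem finite_order {k : ℕ} (hk : 1 ≤ k) {x : PSL(2, ℝ)} (hx : x ^ k = 1) (hx1 : x ≠ 1) :
    ∃ a : ℤ, 0 < a ∧ a < k ∧ IsConj (rotPSL (a * (π / k))) x := by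
  obtain ⟨X, rfl⟩ := QuotientGroup.mk_surjective x
  have hXk : X ^ k = 1 ∨ X ^ k = -1 :=
    mk_eq_mk_iff.1 (show (QuotientGroup.mk 1 : PSL(2, ℝ)) = QuotientGroup.mk (X ^ k) from hx.symm)
  rcases trace_lt_of_pow hk X hXk with h | ⟨h1, h2⟩
  · exact (hx1 (mk_eq_mk_iff.2 h : (QuotientGroup.mk 1 : PSL(2, ℝ)) = QuotientGroup.mk X).symm).elim
  obtain ⟨θ, h0, hπ, hc⟩ := exists_isConj_rotPSL h1 h2
  have hk0 : (0 : ℝ) < k := by exact_mod_cast hk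
  have hrk : rotPSL (k * θ) = 1 := by
    rw [← rotPSL_pow]
    have := hc.pow k
    rw [hx] at this
    exact isConj_one_left.1 this
  have hsin : sin (k * θ) = 0 := by
    have := mk_eq_mk_iff.1 (show (QuotientGroup.mk 1 : PSL(2, ℝ)) = QuotientGroup.mk (rotSL (k * θ)) from hrk.symm)
    have e : sin (k * θ) = (rotSL (k * θ)) 1 0 := rfl
    rw [e]
    rcases this with h | h <;> simp [h]
  obtain ⟨n, hn⟩ := sin_eq_zero_iff.1 hsin
  have hθ : θ = n * (π / k) := by field_simp; linarith
  refine ⟨n, ?_, ?_, by rwa [← hθ]⟩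
  · have : (0 : ℝ) < n * π := by rw [hn]; positivity
    exact_mod_cast pos_of_mul_pos_left this pi_pos.le
  · have : (n : ℝ) * π < k * π := by rw [hn]; gcongr
    exact_mod_cast lt_of_mul_lt_mul_right this pi_pos.le

/-! ### The quasi-Burnside property -/

theorem isConj_zpow_s1 {G : Type*} [Group G] {x y : G} (h : IsConj x y) (n : ℤ) :
    IsConj (x ^ n) (y ^ n) := by
  obtain ⟨g, rfl⟩ := isConj_iff.1 h
  exact isConj_iff.2 ⟨g, conj_zpow.symm⟩

theorem quasiBurnside_of_one_or_neg_one {G : Type*} [Group G] {k l m n : ℕ}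
    (hk : k ∣ n) (hl : l ∣ n) (hm : m ∣ n) (r : (ZMod n)ˣ)
    (hr : (r : ZMod n) = 1 ∨ (r : ZMod n) = -1) : IsQuasiBurnsideWith k l m n r G := by
  intro ρ hρ x y z hxy hx hy hz
  have key : ∀ (ε : ℤ), (ρ : ZMod n) = (ε : ZMod n) → ∀ (j : ℕ), j ∣ n → ∀ w : G, w ^ j = 1 →
      w ^ ρ = w ^ ε := by
    intro ε hε j hj w hw
    have h1 : (n : ℤ) ∣ ε - ρ := (ZMod.intCast_eq_intCast_iff_dvd_sub _ _ _).1 hε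
    obtain ⟨t, ht⟩ := (Int.natCast_dvd_natCast.2 hj).trans h1
    have : ε = ρ + j * t := by linarith
    rw [this, zpow_add, zpow_mul, zpow_natCast, hw, one_zpow, mul_one]
  rcases hr with h | h
  · have e := key 1 (by rw [hρ, h]; simp)
    rw [e k hk x hx, e l hl y hy, e m hm z hz]
    simp only [zpow_one]
    exact ⟨x, y, z, hxy, IsConj.refl _, IsConj.refl _, IsConj.refl _⟩
  · have e := key (-1) (by rw [hρ, h]; simp)
    rw [e k hk x hx, e l hl y hy, e m hm z hz]
    simp only [zpow_neg, zpow_one]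
    refine ⟨y⁻¹ * x⁻¹ * y, y⁻¹, z⁻¹, ?_, ?_, IsConj.refl _, IsConj.refl _⟩
    · rw [← hxy]; group
    · exact isConj_iff.2 ⟨y⁻¹, by simp⟩

theorem quasiBurnside_of_spherical {k l m n : ℕ} (hk : 2 ≤ k) (hl : 2 ≤ l) (hm : 2 ≤ m)
    (r : (ZMod n)ˣ) (h : (1 : ℝ) ≤ 1 / k + 1 / l + 1 / m) :
    IsQuasiBurnsideWith k l m n r PSL(2, ℝ) := by
  intro ρ hρ x y z hxy hx hy hz
  by_cases x1 : x = 1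
  · subst x1
    rw [one_mul] at hxy
    subst hxy
    exact ⟨1, y ^ ρ, y ^ ρ, by simp, by simp, IsConj.refl _, IsConj.refl _⟩
  by_cases y1 : y = 1
  · subst y1
    rw [mul_one] at hxy
    subst hxy
    exact ⟨x ^ ρ, 1, x ^ ρ, by simp, IsConj.refl _, by simp, IsConj.refl _⟩
  by_cases z1 : z = 1
  · subst z1
    have : y = x⁻¹ := eq_inv_of_mul_eq_one_right hxy
    subst this
    exact ⟨x ^ ρ, x⁻¹ ^ ρ, 1, by simp, IsConj.refl _, IsConj.refl _, by simp⟩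
  obtain ⟨a, ha, ha', hxa⟩ := finite_order (by omega) hx x1
  obtain ⟨b, hb, hb', hyb⟩ := finite_order (by omega) hy y1
  -- Parametrizing `z⁻¹` instead of `z` gives `z ~ rotPSL (-c π / m)`.
  obtain ⟨c, hc, hc', hzc⟩ := finite_order (x := z⁻¹) (k := m) (by omega) (by simp [hz]) (by simpa)
  have hzc' : IsConj (rotPSL (-(c * (π / m)))) z := by
    have := isConj_zpow_s1 hzc (-1)
    simpa [rotPSL_neg] using this
  have frac : ∀ (n : ℕ) (a : ℤ), 2 ≤ n → 0 < a → a < n → ∃ t : ℝ, a * (π / n) = t * π ∧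
      1 / n ≤ t ∧ t ≤ 1 - 1 / n ∧ 0 < t ∧ t < 1 := by
    intro n a hn ha ha'
    have hn0 : (0 : ℝ) < n := by exact_mod_cast (by omega : 0 < n)
    have ha1 : (1 : ℝ) ≤ a := by exact_mod_cast ha
    have ha2 : (a : ℝ) ≤ n - 1 := by
      have : a ≤ n - 1 := by omega
      exact_mod_cast this
    refine ⟨a / n, by ring, by gcongr, ?_, by positivity, ?_⟩
    · rw [div_le_iff₀ hn0]; field_simp; linarith
    · rw [div_lt_one hn0]; linarith
  obtain ⟨t, et, t1, t2, t3, t4⟩ := frac k a hk ha ha'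
  obtain ⟨u, eu, u1, u2, u3, u4⟩ := frac l b hl hb hb'
  obtain ⟨v, ev, v1, v2, v3, v4⟩ := frac m c hm hc hc'
  rw [et] at hxa
  rw [eu] at hyb
  rw [ev] at hzc'
  have hπ := pi_pos
  have tri := triangle_necessary (by positivity) (by nlinarith) (by positivity) (by nlinarith)
    (by positivity) (by nlinarith) hxa hyb (hxy ▸ hzc')
  obtain ⟨j, hj⟩ : ∃ j : ℤ, t + u + v = j := by
    rcases tri with tri | tri
    · have : t + u + v ≤ 1 := by nlinarith
      exact ⟨1, by push_cast; linarith⟩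
    · have : 2 ≤ t + u + v := by nlinarith
      exact ⟨2, by push_cast; linarith⟩
  refine ⟨rotPSL (ρ * (t * π)), rotPSL (ρ * (u * π)), _, rfl, ?_, ?_, ?_⟩
  · rw [← rotPSL_zpow]; exact (isConj_zpow_s1 hxa ρ).symm
  · rw [← rotPSL_zpow]; exact (isConj_zpow_s1 hyb ρ).symm
  · have e : ρ * (t * π) + ρ * (u * π) = ρ * -(v * π) + (ρ * j : ℤ) * π := by
      push_cast; rw [← hj]; ring
    rw [← rotPSL_add, e, rotPSL_add_int_mul_pi, ← rotPSL_zpow]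
    exact (isConj_zpow_s1 hzc' ρ).symm

/-- For `r` prime to `k`, multiplication by `r` keeps nonzero residues nonzero. -/
theorem emod_mul_pos {r k a : ℤ} (hr : IsCoprime r k) (ha : 0 < a) (ha' : a < k) :
    0 < r * a % k := by
  apply lt_of_le_of_ne (Int.emod_nonneg _ (by omega))
  intro h
  have h1 : k ∣ r * a := Int.dvd_of_emod_eq_zero h.symm
  have h2 : k ∣ a := hr.symm.dvd_of_dvd_mul_left h1
  have := Int.le_of_dvd ha h2
  omega

theorem rotPSL_zpow_emod (k a r : ℤ) (hk : 0 < k) :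
    rotPSL (a / k * π) ^ r = rotPSL ((r * a % k : ℤ) / k * π) := by
  have hk0 : (k : ℝ) ≠ 0 := by exact_mod_cast hk.ne'
  rw [rotPSL_zpow, ← rotPSL_add_int_mul_pi ((r * a % k : ℤ) / k * π) (r * a / k)]
  congr 1
  have : (k : ℝ) * (r * a / k : ℤ) + (r * a % k : ℤ) = r * a := by
    exact_mod_cast Int.mul_ediv_add_emod (r * a) k
  field_simp
  linear_combination -this

theorem rotPSL_pow_eq_one (k : ℕ) (a : ℤ) (hk : 2 ≤ k) : rotPSL (a / (k : ℤ) * π) ^ k = 1 := by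
  have hk0 : (k : ℝ) ≠ 0 := by exact_mod_cast (by omega : k ≠ 0)
  rw [rotPSL_pow, ← rotPSL_int_mul_pi a]
  congr 1
  push_cast
  field_simp

theorem isConj_pow_eq_one {G : Type*} [Group G] {x y : G} (h : IsConj x y) {k : ℕ}
    (hx : x ^ k = 1) : y ^ k = 1 := by
  have := h.pow k
  rw [hx] at this
  exact isConj_one_right.1 this

theorem angleCond_of_quasiBurnside {k l m n : ℕ} (hk : 2 ≤ k) (hl : 2 ≤ l) (hm : 2 ≤ m)
    (r : (ZMod n)ˣ) (h : IsQuasiBurnsideWith k l m n r PSL(2, ℝ)) (ρ : ℤ)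
    (hρ : (ρ : ZMod n) = (r : ZMod n)) (ck : IsCoprime ρ k) (cl : IsCoprime ρ l)
    (cm : IsCoprime ρ m) : AngleCond k l m ρ := by
  intro a b c ha ha' hb hb' hc hc' hs
  have hπ := pi_pos
  have pos : ∀ (n : ℕ) (a : ℤ), 2 ≤ n → 0 < a → a < n → 0 < (a / (n : ℤ) * π : ℝ) ∧
      (a / (n : ℤ) * π : ℝ) < π := by
    intro n a hn h0 h1
    have hn0 : (0 : ℝ) < (n : ℤ) := by exact_mod_cast (by omega : 0 < n)
    have ha0 : (0 : ℝ) < a := by exact_mod_cast h0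
    have ha1 : (a : ℝ) / (n : ℤ) < 1 := by rw [div_lt_one hn0]; exact_mod_cast h1
    exact ⟨by positivity, by nlinarith⟩
  obtain ⟨x, y, hx, hy, hxy⟩ := triangle_sufficient (pos k a hk ha ha').1 (pos l b hl hb hb').1
    (pos m c hm hc hc').1 (by nlinarith)
  obtain ⟨x', y', z', hxy', hx', hy', hz'⟩ := h ρ hρ x y (x * y) rfl
    (isConj_pow_eq_one hx (rotPSL_pow_eq_one k a hk))
    (isConj_pow_eq_one hy (rotPSL_pow_eq_one l b hl))
    (isConj_pow_eq_one hxy (by rw [rotPSL_neg, inv_pow, rotPSL_pow_eq_one m c hm, inv_one]))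
  have hx2 := (isConj_zpow_s1 hx ρ).trans hx'
  have hy2 := (isConj_zpow_s1 hy ρ).trans hy'
  have hz2 := (isConj_zpow_s1 hxy ρ).trans hz'
  rw [rotPSL_zpow_emod _ _ _ (by omega)] at hx2 hy2
  rw [rotPSL_neg, inv_zpow, rotPSL_zpow_emod _ _ _ (by omega), ← rotPSL_neg, ← hxy'] at hz2
  have lt : ∀ (n : ℕ) (a : ℤ), 2 ≤ n → a % n < n := fun n a hn =>
    Int.emod_lt_of_pos _ (by omega)
  have pa := pos k _ hk (emod_mul_pos ck ha ha') (lt k _ hk)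
  have pb := pos l _ hl (emod_mul_pos cl hb hb') (lt l _ hl)
  have pc := pos m _ hm (emod_mul_pos cm hc hc') (lt m _ hm)
  rcases triangle_necessary pa.1 pa.2 pb.1 pb.2 pc.1 pc.2 hx2 hy2 hz2 with h | h
  · left; nlinarith
  · right; nlinarith

theorem neg_emod_of_pos {r k : ℤ} (hk : 2 ≤ k) (h : 1 ≤ r % k) : -r % k = k - r % k := by
  have hlt := Int.emod_lt_of_pos r (show 0 < k by omega)
  have e : -r = (k - r % k) + k * (-1 - r / k) := by
    have := Int.mul_ediv_add_emod r k
    linear_combination this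
  rw [e, Int.add_mul_emod_self_left, Int.emod_eq_of_lt] <;> omega

theorem AngleCond.neg {k l m r : ℤ} (h : AngleCond k l m r) (hk : 2 ≤ k) (hl : 2 ≤ l) (hm : 2 ≤ m)
    (ck : IsCoprime r k) (cl : IsCoprime r l) (cm : IsCoprime r m) : AngleCond k l m (-r) := by
  intro a b c ha ha' hb hb' hc hc' hs
  have key : ∀ n a : ℤ, 2 ≤ n → 0 < r * a % n →
      ((-r * a % n : ℤ) / n : ℝ) = 1 - (r * a % n : ℤ) / n := by
    intro n a hn h0
    have hn0 : (n : ℝ) ≠ 0 := by exact_mod_cast (by omega : n ≠ 0)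
    rw [neg_mul, neg_emod_of_pos hn h0]
    push_cast
    field_simp
  rw [key k a hk (emod_mul_pos ck ha ha'), key l b hl (emod_mul_pos cl hb hb'),
    key m c hm (emod_mul_pos cm hc hc')]
  rcases h a b c ha ha' hb hb' hc hc' hs with h | h
  · right; linarith
  · left; linarith

theorem psl2R_quasiBurnside_iff (k l m : ℕ) (hk : 2 ≤ k) (hl : 2 ≤ l) (hm : 2 ≤ m)
    (r : (ZMod (Nat.lcm k (Nat.lcm l m)))ˣ) :
    IsQuasiBurnsideWith k l m (Nat.lcm k (Nat.lcm l m)) r PSL(2, ℝ) ↔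
      ((1 : ℚ) ≤ 1 / k + 1 / l + 1 / m ∨
        (r : ZMod (Nat.lcm k (Nat.lcm l m))) = 1 ∨
        (r : ZMod (Nat.lcm k (Nat.lcm l m))) = -1) := by
  have dk : k ∣ Nat.lcm k (Nat.lcm l m) := Nat.dvd_lcm_left _ _
  have dl : l ∣ Nat.lcm k (Nat.lcm l m) := (Nat.dvd_lcm_left _ _).trans (Nat.dvd_lcm_right _ _)
  have dm : m ∣ Nat.lcm k (Nat.lcm l m) := (Nat.dvd_lcm_right _ _).trans (Nat.dvd_lcm_right _ _)
  constructor
  · intro h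
    by_contra! hcon
    obtain ⟨hhyp, hr1, hr2⟩ := hcon
    have hhypR : (1 / (k : ℤ) + 1 / (l : ℤ) + 1 / (m : ℤ) : ℝ) < 1 := by
      have := (Rat.cast_lt (K := ℝ)).2 hhyp
      push_cast at this ⊢
      exact this
    -- If `ρ` is `1` modulo each of `k`, `l`, `m`, then it is `1` modulo their lcm.
    have lcm_one : ∀ ρ : ℤ, ρ % k = 1 ∧ ρ % l = 1 ∧ ρ % m = 1 →
        (ρ : ZMod (Nat.lcm k (Nat.lcm l m))) = 1 := by
      rintro ρ ⟨h1, h2, h3⟩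
      have d : ∀ j : ℕ, ρ % j = 1 → j ∣ (ρ - 1).natAbs := by
        intro j hj
        rw [← Int.natCast_dvd]
        exact Int.dvd_self_sub_of_emod_eq hj
      have : ((Nat.lcm k (Nat.lcm l m) : ℕ) : ℤ) ∣ ρ - 1 :=
        Int.natCast_dvd.2 (Nat.lcm_dvd (d k h1) (Nat.lcm_dvd (d l h2) (d m h3)))
      rw [← sub_eq_zero]
      have := (ZMod.intCast_zmod_eq_zero_iff_dvd _ _).2 this
      exact_mod_cast this
    obtain ⟨ρ, hρ⟩ := ZMod.intCast_surjective (r : ZMod (Nat.lcm k (Nat.lcm l m)))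
    have cop : IsCoprime ρ (Nat.lcm k (Nat.lcm l m) : ℕ) := by
      have hu : IsUnit (ρ : ZMod (Nat.lcm k (Nat.lcm l m))) := by rw [hρ]; exact r.isUnit
      exact ((ZMod.coe_int_isUnit_iff_isCoprime _ _).1 hu).symm
    have ck : IsCoprime ρ k := cop.of_isCoprime_of_dvd_right (Int.natCast_dvd_natCast.2 dk)
    have cl : IsCoprime ρ l := cop.of_isCoprime_of_dvd_right (Int.natCast_dvd_natCast.2 dl)
    have cm : IsCoprime ρ m := cop.of_isCoprime_of_dvd_right (Int.natCast_dvd_natCast.2 dm)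
    have hk' : (2 : ℤ) ≤ k := by exact_mod_cast hk
    have hl' : (2 : ℤ) ≤ l := by exact_mod_cast hl
    have hm' : (2 : ℤ) ≤ m := by exact_mod_cast hm
    have hA := angleCond_of_quasiBurnside hk hl hm r h ρ hρ ck cl cm
    have hA' := hA.neg hk' hl' hm' ck cl cm
    have first := hA 1 1 1 one_pos (by omega) one_pos (by omega) one_pos (by omega)
      (by push_cast at hhypR ⊢; linarith)
    simp only [mul_one] at first
    rcases first with h1 | h1
    · apply hr1
      rw [← hρ]
      exact lcm_one ρ (hA.emod_eq_one hk' hl' hm' ck cl cm hhypR h1)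
    · apply hr2
      have key : ∀ n : ℤ, 2 ≤ n → IsCoprime ρ n → ((-ρ % n : ℤ) / n : ℝ) = 1 - (ρ % n : ℤ) / n := by
        intro n hn hc
        have hn0 : (n : ℝ) ≠ 0 := by exact_mod_cast (by omega : n ≠ 0)
        rw [neg_emod_of_pos hn (emod_pos_of_coprime hn hc)]
        push_cast
        field_simp
      have := lcm_one (-ρ) (hA'.emod_eq_one hk' hl' hm' ck.neg_left cl.neg_left cm.neg_left hhypR
        (by rw [key k hk' ck, key l hl' cl, key m hm' cm]; linarith))
      rw [← hρ, ← this]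
      push_cast; ring
  · rintro (h | h)
    · have h' := (Rat.cast_le (K := ℝ)).2 h
      push_cast at h'
      exact quasiBurnside_of_spherical hk hl hm r h'
    · exact quasiBurnside_of_one_or_neg_one dk dl dm r h
end

section
/- Let k, m ≥ 2 be integers and let r be a unit in ℤ/lcm(k,m)ℤ. Then every group is (k,m,r)-quasi-Honda if and only if at least one of the following holds: 2/k + 1/m ≥ 1; or r ∈ {1, -1} in ℤ/lcm(k,m)ℤ; or gcd(k,m) ≤ 2 and r* ∈ {1, -1} in ℤ/lcm(k,m)ℤ, where r* denotes the unique unit in ℤ/lcm(k,m)ℤ with r* ≡ r (mod k) and r* ≡ -r (mod m). -/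
/-!
The direction from right to left is elementary. If `r ≡ ±1` modulo `k` and modulo `m` (all four sign choices
allowed), then `z ^ ρ = z ^ (±1)` and `x ^ ρ = x ^ (±1)`, and the commutators `[x^(±1), u^(±1)]`
are conjugate to `z` or `z⁻¹` (`quasiHonda_of_signs`). If `k = 2`, then `x` inverts `z`, and
`[x, z^(-j) u] = z^(2j+1)` (`quasiHonda_two`). The remaining pairs with `2/k + 1/m ≥ 1` have
`k, m ≤ 4`, where every unit modulo `k` or modulo `m` is `±1`.

For the converse, two groups detect the failure: the unitary group `U(2)` and its quotient by the
centre. If `x ∈ U(2)` has eigenvalues `1, e^{iθ}`, then `tr [x, w]` has real part at least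
`2 cos θ` (`trace_comm_ge`), and conversely every `2 cos φ ∈ [2 cos θ, 2]` is the trace of some
commutator `z = [x, w]`, which has determinant `1` and so eigenvalues `e^{±iφ}` (`comm_sq`,
`exists_rot`). With `θ = 2πa/k`, `φ = 2πb/m` the quasi-Honda property therefore gives
`‖b/m‖ ≤ ‖a/k‖ → ‖rb/m‖ ≤ ‖ra/k‖`, where `‖·‖` is the distance to the nearest integer
(`cos_le_of_quasiHonda`). In the quotient by the centre, with `m = 2` and `φ = π/2`, it gives
`1/4 ≤ ‖a/k‖ → 1/4 ≤ ‖ra/k‖` (`cos_nonpos_of_quasiHonda`).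

These implications force `r ≡ ±1` modulo both `k` and `m`. The combinatorial input is that a
symmetric arc `{-t, …, t}` of `ℤ/n` with `1 ≤ t` and `2t + 3 ≤ n` is preserved only by the units
`±1` (`dist0_rigid`). For `m`, the arcs `{b : ‖b/m‖ ≤ ‖a/k‖}` are nested in `a`, and multiplication
by `r` carries the arc of `a` into the arc of `ra`; counting shows that the two coincide, and
`a = ⌊k/3⌋` gives an arc of suitable size (`rigid_m`). For `k`, the arc `{a : ‖a/k‖ < ‖b/m‖}` with
`b = ⌊m/3⌋` is used when `m ≥ 3`, and `{a : ‖a/k‖ < 1/4}` when `m = 2`.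
-/

/-- A group `G` is `(k,m,r)`-quasi-Honda (with `r` a unit of `ZMod n`, where
`n = lcm(k,m)`): for every integer representative `ρ` of `r` and all `x, u, z ∈ G`
with `[x,u] = z`, `x^k = 1` and `z^m = 1`, there is `w ∈ G` with `[x^ρ, w] ~ z^ρ`. -/
def IsQuasiHondaWith (k m n : ℕ) (r : (ZMod n)ˣ) (G : Type*) [Group G] : Prop :=
  ∀ ρ : ℤ, ((ρ : ZMod n) = (r : ZMod n)) →
    ∀ x u z : G, x * u * x⁻¹ * u⁻¹ = z → x ^ k = 1 → z ^ m = 1 →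
      ∃ w : G, IsConj (x ^ ρ * w * (x ^ ρ)⁻¹ * w⁻¹) (z ^ ρ)

universe u


/-! ### Symmetric arcs in `ℤ/n` -/

/-- `b` lies in the arc `{-t, …, t}` of `ℤ/n`. -/
def InArc (n : ℕ) (t : ℤ) (b : ZMod n) : Prop := ∃ v : ℤ, |v| ≤ t ∧ (v : ZMod n) = b

/-- If multiplication by `r = v`, `2 ≤ v ≤ t`, preserves the arc, then `t - v + 1` and
`t - v + 2` lie in the arc and leave it under `b ↦ b + r`. Dividing by `r`, they become distinct
elements leaving it under `c ↦ c + 1`; but `t` is the only one. -/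
lemma arc_aux {n : ℕ} {t v : ℤ} (hn : 2 * t + 3 ≤ n) (hv : 2 ≤ v) (hvt : v ≤ t)
    {r s : ZMod n} (hrs : r * s = 1) (hr : (v : ZMod n) = r)
    (h : ∀ b, InArc n t b ↔ InArc n t (r * b)) : False := by
  have hinv : ∀ b, r * (s * b) = b := fun b => by rw [← mul_assoc, hrs, one_mul]
  -- `2 * t + 3 ≤ n` keeps `t + 1` and `t + 2` from wrapping around into the arc
  have hout : ∀ w : ℤ, t < w → w ≤ t + 2 → ¬ InArc n t (w : ZMod n) := by
    rintro w h1 h2 ⟨v, hv, he⟩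
    rw [ZMod.intCast_eq_intCast_iff_dvd_sub] at he
    rw [abs_le] at hv
    have := Int.le_of_dvd (by omega) he
    omega
  -- the only element of the arc whose successor leaves the arc is `t`
  have hlast : ∀ c : ZMod n, InArc n t c → ¬ InArc n t (c + 1) → c = (t : ZMod n) := by
    rintro c ⟨w, hw, rfl⟩ hc
    by_contra hne
    have : w ≠ t := fun h => hne (by rw [h])
    rw [abs_le] at hw
    exact hc ⟨w + 1, by rw [abs_le]; omega, by push_cast; rfl⟩
  have key : ∀ i : ℤ, 1 ≤ i → i ≤ 2 → s * ((t - v + i : ℤ) : ZMod n) = (t : ZMod n) := by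
    intro i h1 h2
    apply hlast
    · rw [h, hinv]
      exact ⟨t - v + i, by rw [abs_le]; omega, rfl⟩
    · rw [h, mul_add, hinv, mul_one, ← hr, ← Int.cast_add]
      exact hout _ (by omega) (by omega)
  have e := congrArg (r * ·) ((key 1 (by norm_num) (by norm_num)).trans
    (key 2 (by norm_num) (by norm_num)).symm)
  simp only [hinv] at e
  rw [ZMod.intCast_eq_intCast_iff_dvd_sub] at e
  have := Int.le_of_dvd (by omega) e
  omega

lemma InArc.neg {n : ℕ} {t : ℤ} {b : ZMod n} (h : InArc n t b) : InArc n t (-b) := by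
  obtain ⟨v, hv, rfl⟩ := h
  exact ⟨-v, by rwa [abs_neg], by push_cast; rfl⟩

lemma arc_rigid {n : ℕ} {t : ℤ} (ht : 1 ≤ t) (hn : 2 * t + 3 ≤ n) (r : (ZMod n)ˣ)
    (h : ∀ b, InArc n t b ↔ InArc n t (r * b)) : (r : ZMod n) = 1 ∨ (r : ZMod n) = -1 := by
  obtain ⟨v, hv, hr⟩ : InArc n t (r : ZMod n) := by
    have := (h 1).1 ⟨1, by simpa using ht, by simp⟩
    simpa using this
  rw [abs_le] at hv
  have hne : Nontrivial (ZMod n) := by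
    have : Fact (1 < n) := ⟨by omega⟩
    infer_instance
  rcases lt_trichotomy v 0 with h0 | h0 | h0
  · rcases eq_or_ne v (-1) with h1 | h1
    · right; rw [← hr, h1]; simp
    · exfalso
      refine arc_aux (r := -r) (s := -(r⁻¹ : (ZMod n)ˣ)) (v := -v) hn (by omega) (by omega)
        (by simp) (by rw [← hr]; push_cast; rfl) fun b => ?_
      rw [h, neg_mul]
      exact ⟨fun h => h.neg, fun h => by simpa using h.neg⟩
  · exact absurd (by rw [← hr, h0]; simp) r.ne_zero
  · rcases eq_or_ne v 1 with h1 | h1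
    · left; rw [← hr, h1]; simp
    · exfalso
      exact arc_aux (r := r) (s := (r⁻¹ : (ZMod n)ˣ)) (v := v) hn (by omega) (by omega)
        (by simp) hr h

/-- The distance from `a` to `0` on the cycle `ℤ/n`, so that `dist0 a / n = ‖a/n‖`. -/
def dist0 {n : ℕ} (a : ZMod n) : ℕ := a.valMinAbs.natAbs

lemma inArc_iff {n : ℕ} [NeZero n] {t : ℕ} (hn : 2 * t + 3 ≤ n) (b : ZMod n) :
    InArc n t b ↔ dist0 b ≤ t := by
  unfold dist0
  constructor
  · rintro ⟨v, hv, rfl⟩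
    rw [abs_le] at hv
    have : (v : ZMod n).valMinAbs = v := by
      rw [ZMod.valMinAbs_spec]
      exact ⟨rfl, by constructor <;> omega⟩
    omega
  · intro h
    exact ⟨b.valMinAbs, by rw [abs_le]; omega, by simp⟩

lemma dist0_rigid {n : ℕ} {t : ℕ} (ht : 1 ≤ t) (hn : 2 * t + 3 ≤ n) (r : (ZMod n)ˣ)
    (h : ∀ b : ZMod n, dist0 b ≤ t ↔ dist0 ((r : ZMod n) * b) ≤ t) :
    (r : ZMod n) = 1 ∨ (r : ZMod n) = -1 := by
  have : NeZero n := ⟨by omega⟩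
  refine arc_rigid (t := t) (by omega) (by omega) r fun b => ?_
  rw [inArc_iff hn, inArc_iff hn, h]

lemma dist0_natCast {n c : ℕ} (h : 2 * c ≤ n) : dist0 (c : ZMod n) = c := by
  unfold dist0
  rw [ZMod.valMinAbs_natCast_of_le_half (by omega)]
  simp

lemma dist0_neg {n : ℕ} (a : ZMod n) : dist0 (-a) = dist0 a := ZMod.natAbs_valMinAbs_neg a

/-- For a unit of the finite ring `ℤ/n`, invariance in one direction gives both, since the inverse is
a power of the unit. -/
lemma iff_of_imp {n : ℕ} [NeZero n] (r : (ZMod n)ˣ) (P : ZMod n → Prop)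
    (h : ∀ b, P b → P (r * b)) (b : ZMod n) : P b ↔ P (r * b) := by
  refine ⟨h b, fun hb => ?_⟩
  have hpow : ∀ j : ℕ, ∀ c, P c → P ((r : ZMod n) ^ j * c) := by
    intro j
    induction j with
    | zero => intro c hc; simpa using hc
    | succ j ih => intro c hc; rw [pow_succ', mul_assoc]; exact h _ (ih c hc)
  have h1 := hpow (orderOf r - 1) _ hb
  rwa [← mul_assoc, ← pow_succ, Nat.sub_add_cancel (orderOf_pos r), ← Units.val_pow_eq_pow_val,
    pow_orderOf_eq_one, Units.val_one, one_mul] at h1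

/-- The moduli `n ≥ 2` with at most two units. -/
lemma unit_small {n : ℕ} (hn : n = 2 ∨ n = 3 ∨ n = 4 ∨ n = 6) (r : (ZMod n)ˣ) :
    (r : ZMod n) = 1 ∨ (r : ZMod n) = -1 := by
  have hr : IsUnit (r : ZMod n) := r.isUnit
  obtain ⟨x, hx⟩ : ∃ x : ZMod n, (r : ZMod n) * x = 1 := ⟨_, r.mul_inv⟩
  generalize (r : ZMod n) = y at *
  clear hr
  rcases hn with rfl | rfl | rfl | rfl <;> revert y x <;> decide

/-- The sets `B a = {b : ‖b/m‖ ≤ ‖a/k‖}` form a chain and `rm • B a ⊆ B (rk * a)`. Summing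
cardinalities over all `a` turns the inclusions into equalities, so each `B a` is invariant. -/
lemma rigid_m {k m : ℕ} (hk : 3 ≤ k) (hm : 2 ≤ m) (rk : (ZMod k)ˣ) (rm : (ZMod m)ˣ)
    (H : ∀ (a : ZMod k) (b : ZMod m), k * dist0 b ≤ m * dist0 a →
      k * dist0 ((rm : ZMod m) * b) ≤ m * dist0 ((rk : ZMod k) * a)) :
    (rm : ZMod m) = 1 ∨ (rm : ZMod m) = -1 := by
  by_cases hs : m = 2 ∨ m = 3 ∨ m = 4 ∨ m = 6
  · exact unit_small hs rm
  have hm5 : 5 ≤ m := by omega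
  have : NeZero k := ⟨by omega⟩
  have : NeZero m := ⟨by omega⟩
  classical
  let B : ZMod k → Finset (ZMod m) := fun a => {b | k * dist0 b ≤ m * dist0 a}
  have himg : ∀ a, (B a).image ((rm : ZMod m) * ·) ⊆ B (rk * a) := by
    intro a c hc
    obtain ⟨b, hb, rfl⟩ := Finset.mem_image.1 hc
    simp only [B, Finset.mem_filter, Finset.mem_univ, true_and] at hb ⊢
    exact H a b hb
  have hinj : ∀ a, ((B a).image ((rm : ZMod m) * ·)).card = (B a).card := fun a =>
    Finset.card_image_of_injective _ rm.isUnit.mul_right_injective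
  have hle : ∀ a ∈ Finset.univ, (B a).card ≤ (B (rk * a)).card := fun a _ => by
    rw [← hinj]; exact Finset.card_le_card (himg a)
  have hsum : ∑ a, (B a).card = ∑ a, (B (rk * a)).card :=
    (Fintype.sum_equiv (Units.mulLeft rk) _ _ (fun _ => rfl)).symm
  have hcard := (Finset.sum_eq_sum_iff_of_le hle).1 hsum
  -- `1/5 ≤ (k / 3) / k ≤ 1/3`, which puts the arc `B a₀` in the range of `dist0_rigid`
  set a₀ : ZMod k := ((k / 3 : ℕ) : ZMod k) with ha₀
  have hBeq : B (rk * a₀) = B a₀ := by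
    have hc := hcard a₀ (Finset.mem_univ _)
    rcases le_total (dist0 a₀) (dist0 ((rk : ZMod k) * a₀)) with h | h
    · refine (Finset.eq_of_subset_of_card_le (fun b hb => ?_) hc.ge).symm
      simp only [B, Finset.mem_filter, Finset.mem_univ, true_and] at hb ⊢
      exact hb.trans (Nat.mul_le_mul_left _ h)
    · refine Finset.eq_of_subset_of_card_le (fun b hb => ?_) hc.le
      simp only [B, Finset.mem_filter, Finset.mem_univ, true_and] at hb ⊢
      exact hb.trans (Nat.mul_le_mul_left _ h)
  have hd : dist0 a₀ = k / 3 := dist0_natCast (by omega)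
  have hB : ∀ b, b ∈ B a₀ ↔ dist0 b ≤ m * (k / 3) / k := by
    intro b
    simp only [B, Finset.mem_filter, Finset.mem_univ, true_and, hd]
    rw [Nat.le_div_iff_mul_le (by omega), mul_comm]
  have ht1 : 1 ≤ m * (k / 3) / k := by
    rw [Nat.le_div_iff_mul_le (by omega)]
    have : k ≤ 5 * (k / 3) := by omega
    nlinarith
  have ht2 : 3 * (m * (k / 3) / k) ≤ m := by
    have h1 := Nat.div_mul_le_self (m * (k / 3)) k
    have h2 : 3 * (k / 3) ≤ k := by omega
    by_contra hlt
    push Not at hlt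
    nlinarith
  refine dist0_rigid ht1 (by omega) rm (iff_of_imp rm (fun b => dist0 b ≤ _) fun b hb => ?_)
  rw [← hB] at hb ⊢
  rw [← hBeq]
  exact himg a₀ (Finset.mem_image_of_mem _ hb)

lemma rigid_k_of_threshold {k t : ℕ} (ht : 1 ≤ t) (hk : 2 * t + 3 ≤ k) (rk : (ZMod k)ˣ)
    (H : ∀ a : ZMod k, t < dist0 a → t < dist0 ((rk : ZMod k) * a)) :
    (rk : ZMod k) = 1 ∨ (rk : ZMod k) = -1 := by
  have : NeZero k := ⟨by omega⟩
  refine dist0_rigid ht hk rk fun a => ?_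
  have := iff_of_imp rk (fun a => t < dist0 a) H a
  simp only [← not_lt, this]

/-- Once `rm = ±1`, the set `{a : ‖a/k‖ < ‖b/m‖}` is invariant for each `b`. The case `k = m = 5` has
to be left out, because there `b = ⌊m/3⌋` gives only `{0}`. -/
lemma rigid_k {k m : ℕ} (hk : 3 ≤ k) (hm : 3 ≤ m) (hkm : k ≠ m)
    (rk : (ZMod k)ˣ) (rm : (ZMod m)ˣ)
    (hrm : (rm : ZMod m) = 1 ∨ (rm : ZMod m) = -1)
    (H : ∀ (a : ZMod k) (b : ZMod m), k * dist0 b ≤ m * dist0 a →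
      k * dist0 ((rm : ZMod m) * b) ≤ m * dist0 ((rk : ZMod k) * a)) :
    (rk : ZMod k) = 1 ∨ (rk : ZMod k) = -1 := by
  by_cases hs : k = 2 ∨ k = 3 ∨ k = 4 ∨ k = 6
  · exact unit_small hs rk
  have hk5 : 5 ≤ k := by omega
  set b₀ : ZMod m := ((m / 3 : ℕ) : ZMod m) with hb₀
  have hd : dist0 b₀ = m / 3 := dist0_natCast (by omega)
  have hd' : dist0 ((rm : ZMod m) * b₀) = m / 3 := by
    rcases hrm with h | h <;> simp [h, dist0_neg, hd]
  have hpos : 0 < k * (m / 3) := by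
    have : 0 < m / 3 := by omega
    positivity
  have hB : ∀ a : ZMod k, k * (m / 3) ≤ m * dist0 a ↔ (k * (m / 3) - 1) / m < dist0 a := by
    intro a
    rw [Nat.div_lt_iff_lt_mul (by omega), mul_comm m]
    omega
  have ht1 : 1 ≤ (k * (m / 3) - 1) / m := by
    rw [Nat.le_div_iff_mul_le (by omega)]
    have h1 : m < k * (m / 3) := by
      rcases eq_or_ne m 5 with rfl | h5
      · omega
      · have : m < 5 * (m / 3) := by omega
        nlinarith
    omega
  have ht2 : 3 * ((k * (m / 3) - 1) / m) < k := by
    have h1 := Nat.div_mul_le_self (k * (m / 3) - 1) m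
    have h2 : 3 * (m / 3) ≤ m := by omega
    by_contra hlt
    push Not at hlt
    have h3 : (k * (m / 3) - 1) / m * m < k * (m / 3) := by omega
    nlinarith
  refine rigid_k_of_threshold ht1 (by omega) rk fun a ha => ?_
  rw [← hB] at ha ⊢
  have := H a b₀ (by rwa [hd])
  rwa [hd'] at this

/-! ### Comparing cosines -/

lemma cos_dist0 {n : ℕ} [NeZero n] (v : ℤ) :
    Real.cos (2 * Real.pi * v / n) = Real.cos (2 * Real.pi * dist0 (v : ZMod n) / n) := by
  have hn : (n : ℝ) ≠ 0 := NeZero.ne _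
  have h1 : (v : ZMod n) = ((v : ZMod n).valMinAbs : ZMod n) := by simp
  obtain ⟨q, hq⟩ := (ZMod.intCast_eq_intCast_iff_dvd_sub _ _ _).1 h1.symm
  have h2 : (v : ℝ) = (v : ZMod n).valMinAbs + n * q := by
    have : v = (v : ZMod n).valMinAbs + n * q := by omega
    exact_mod_cast this
  have h3 : 2 * Real.pi * v / n = 2 * Real.pi * (v : ZMod n).valMinAbs / n + q * (2 * Real.pi) := by
    conv_lhs => rw [h2]
    field_simp
  rw [h3, Real.cos_add_int_mul_two_pi, dist0, Nat.cast_natAbs]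
  rcases abs_choice ((v : ZMod n).valMinAbs) with h | h <;> rw [h]
  rw [← Real.cos_neg]
  push_cast
  congr 1; ring

lemma dist0_angle_mem {n : ℕ} [NeZero n] (a : ZMod n) :
    2 * Real.pi * dist0 a / n ∈ Set.Icc 0 Real.pi := by
  have hn : (0 : ℝ) < n := by exact_mod_cast Nat.pos_of_ne_zero (NeZero.ne n)
  have h : 2 * dist0 a ≤ n := by
    have := ZMod.natAbs_valMinAbs_le a
    unfold dist0; omega
  have h' : (2 : ℝ) * dist0 a ≤ n := by exact_mod_cast h
  refine ⟨by positivity, ?_⟩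
  rw [div_le_iff₀ hn]
  nlinarith [Real.pi_pos]

lemma cos_le_cos_iff_dist0 {k m : ℕ} [NeZero k] [NeZero m] (a b : ℤ) :
    Real.cos (2 * Real.pi * a / k) ≤ Real.cos (2 * Real.pi * b / m) ↔
      k * dist0 (b : ZMod m) ≤ m * dist0 (a : ZMod k) := by
  have hk : (0 : ℝ) < k := by exact_mod_cast Nat.pos_of_ne_zero (NeZero.ne k)
  have hm : (0 : ℝ) < m := by exact_mod_cast Nat.pos_of_ne_zero (NeZero.ne m)
  rw [cos_dist0, cos_dist0, Real.strictAntiOn_cos.le_iff_ge (dist0_angle_mem _) (dist0_angle_mem _),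
    div_le_div_iff₀ hm hk, ← Nat.cast_le (α := ℝ)]
  push_cast
  constructor
  · intro h
    have : 0 < 2 * Real.pi := by positivity
    nlinarith
  · intro h
    have : 0 < 2 * Real.pi := by positivity
    nlinarith



/-! ### Commutators in `U(2)` -/

/-- The unitary group `U(2)`. -/
abbrev U2 : Type := Matrix.unitaryGroup (Fin 2) ℂ

/-- The diagonal matrix `diag(1, e^{iθ})`. -/
noncomputable def phaseU (θ : ℝ) : U2 :=
  ⟨!![1, 0; 0, (⟨Real.cos θ, Real.sin θ⟩ : ℂ)], by
    rw [Matrix.mem_unitaryGroup_iff]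
    ext i j
    have := Real.cos_sq_add_sin_sq θ
    fin_cases i <;> fin_cases j <;>
      simp [Matrix.mul_apply, Fin.sum_univ_two, Matrix.star_apply, Complex.ext_iff]
    constructor <;> nlinarith⟩

/-- The real rotation with cosine `c` and sine `s`. -/
noncomputable def rotU (c s : ℝ) (h : c ^ 2 + s ^ 2 = 1) : U2 :=
  ⟨!![(c : ℂ), -(s : ℂ); (s : ℂ), (c : ℂ)], by
    rw [Matrix.mem_unitaryGroup_iff]
    ext i j
    fin_cases i <;> fin_cases j <;>
      simp [Matrix.mul_apply, Fin.sum_univ_two, Matrix.star_apply, Complex.ext_iff] <;> nlinarith⟩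

lemma phaseU_pow (θ : ℝ) (n : ℕ) : phaseU θ ^ n = phaseU (n * θ) := by
  induction n with
  | zero =>
    ext i j
    fin_cases i <;> fin_cases j <;> simp [phaseU, Complex.ext_iff]
  | succ n ih =>
    rw [pow_succ, ih]
    ext i j
    fin_cases i <;> fin_cases j <;>
      simp [phaseU, Complex.ext_iff, add_mul, Real.cos_add, Real.sin_add]
    ring

lemma phaseU_eq_one {θ : ℝ} (h : Real.cos θ = 1) : phaseU θ = 1 := by
  have hs : Real.sin θ = 0 := by nlinarith [Real.cos_sq_add_sin_sq θ]
  ext i j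
  fin_cases i <;> fin_cases j <;> simp [phaseU, Complex.ext_iff, h, hs]

lemma trace_comm (θ : ℝ) (w : U2) :
    Matrix.trace ((phaseU θ * w * (phaseU θ)⁻¹ * w⁻¹ : U2) : Matrix (Fin 2) (Fin 2) ℂ) =
      Complex.normSq (w.1 0 0) + Complex.normSq (w.1 1 1) +
        (⟨Real.cos θ, -Real.sin θ⟩ : ℂ) * Complex.normSq (w.1 0 1) +
        (⟨Real.cos θ, Real.sin θ⟩ : ℂ) * Complex.normSq (w.1 1 0) := by
  have hcs := Real.cos_sq_add_sin_sq θ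
  have hi : ∀ v : U2, ((v⁻¹ : U2) : Matrix (Fin 2) (Fin 2) ℂ) = Matrix.conjTranspose v.1 := fun _ => rfl
  simp only [Submonoid.coe_mul, hi, phaseU, Matrix.trace, Matrix.diag_apply, Fin.sum_univ_two,
    Matrix.mul_apply, Matrix.conjTranspose_apply]
  simp [Complex.ext_iff, Complex.normSq_apply]
  constructor
  · linear_combination ((w.1 1 1).re ^ 2 + (w.1 1 1).im ^ 2) * hcs
  · ring

/-- The trace is `∑ i j, d i * conj (d j) * |w i j| ^ 2` with `d = (1, e^{iθ})`; every coefficient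
`d i * conj (d j)` has real part at least `cos θ` and the rows of `w` have norm `1`. -/
lemma trace_comm_ge (θ : ℝ) (w : U2) :
    2 * Real.cos θ ≤ (Matrix.trace
      ((phaseU θ * w * (phaseU θ)⁻¹ * w⁻¹ : U2) : Matrix (Fin 2) (Fin 2) ℂ)).re := by
  have hw := Matrix.mem_unitaryGroup_iff.1 w.2
  have h0 := congrArg Complex.re (congrFun (congrFun hw 0) 0)
  have h1 := congrArg Complex.re (congrFun (congrFun hw 1) 1)
  simp [Matrix.mul_apply, Fin.sum_univ_two, Matrix.star_apply] at h0 h1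
  have hc := Real.cos_le_one θ
  rw [trace_comm]
  have p0 := mul_nonneg (sub_nonneg.2 hc) (Complex.normSq_nonneg (w.1 0 0))
  have p1 := mul_nonneg (sub_nonneg.2 hc) (Complex.normSq_nonneg (w.1 1 1))
  simp [Complex.normSq_apply] at p0 p1 ⊢
  linear_combination p0 + p1 - Real.cos θ * h0 - Real.cos θ * h1

/-- The trace of the commutator with a rotation, together with the Cayley–Hamilton relation, in which
the determinant is `1`. -/
lemma comm_sq {θ c s t : ℝ} (h : c ^ 2 + s ^ 2 = 1)
    (ht : c ^ 2 + s ^ 2 * Real.cos θ = t) :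
    let z : Matrix (Fin 2) (Fin 2) ℂ :=
      ((phaseU θ * rotU c s h * (phaseU θ)⁻¹ * (rotU c s h)⁻¹ : U2) : Matrix (Fin 2) (Fin 2) ℂ)
    z.trace = ((2 * t : ℝ) : ℂ) ∧ z * z = ((2 * t : ℝ) : ℂ) • z - 1 := by
  intro z
  have hcs := Real.cos_sq_add_sin_sq θ
  have htr : z.trace = ((2 * t : ℝ) : ℂ) := by
    subst ht
    rw [trace_comm]
    simp [rotU, Complex.ext_iff]
    simp [← Complex.ofReal_pow, ← Complex.ofReal_cos]
    ring
  have hdet : z.det = 1 := by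
    have h1 : ∀ v : U2, (v : Matrix (Fin 2) (Fin 2) ℂ).det * (v⁻¹ : U2).1.det = 1 := by
      intro v
      rw [← Matrix.det_mul]
      simp
    simp only [z, Submonoid.coe_mul, Matrix.det_mul]
    linear_combination (h1 (rotU c s h)) * ((phaseU θ).1.det * ((phaseU θ)⁻¹ : U2).1.det) + h1 (phaseU θ)
  refine ⟨htr, ?_⟩
  have h2 : z.trace = z 0 0 + z 1 1 := by simp [Matrix.trace, Fin.sum_univ_two]
  rw [Matrix.det_fin_two] at hdet
  rw [← htr, h2]
  ext i j
  fin_cases i <;> fin_cases j <;> simp [Matrix.mul_apply, Fin.sum_univ_two]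
  · linear_combination -hdet
  · ring
  · ring
  · linear_combination -hdet

/-- Powers of a matrix of determinant `1` and trace `2 cos φ`, in Chebyshev form. -/
lemma sin_smul_pow {z : Matrix (Fin 2) (Fin 2) ℂ} {φ : ℝ}
    (hz : z * z = ((2 * Real.cos φ : ℝ) : ℂ) • z - 1) (n : ℕ) :
    ((Real.sin φ : ℝ) : ℂ) • z ^ n =
      ((Real.sin (n * φ) : ℝ) : ℂ) • z - ((Real.sin ((n - 1) * φ) : ℝ) : ℂ) • (1 : Matrix (Fin 2) (Fin 2) ℂ) := by
  induction n with
  | zero => simp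
  | succ n ih =>
    rw [pow_succ, ← smul_mul_assoc, ih, sub_mul, smul_mul_assoc, hz, smul_mul_assoc, one_mul]
    have e : Real.sin ((n + 1 : ℝ) * φ) = 2 * Real.cos φ * Real.sin (n * φ) - Real.sin ((n - 1) * φ) := by
      rw [add_mul, sub_mul, one_mul, Real.sin_add, Real.sin_sub]; ring
    push_cast [e, add_sub_cancel_right]
    module

/-- The recurrence has order two, so consecutive powers are treated together. -/
lemma trace_pow_pair {z : Matrix (Fin 2) (Fin 2) ℂ} {φ : ℝ}
    (htr : z.trace = ((2 * Real.cos φ : ℝ) : ℂ))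
    (hz : z * z = ((2 * Real.cos φ : ℝ) : ℂ) • z - 1) (n : ℕ) :
    (z ^ n).trace = ((2 * Real.cos (n * φ) : ℝ) : ℂ) ∧ (z ^ (n + 1)).trace = ((2 * Real.cos ((n + 1 : ℕ) * φ) : ℝ) : ℂ) := by
  induction n with
  | zero => simpa using htr
  | succ n ih =>
    refine ⟨ih.2, ?_⟩
    have e : z ^ (n + 1 + 1) = ((2 * Real.cos φ : ℝ) : ℂ) • z ^ (n + 1) - z ^ n := by
      rw [pow_succ, pow_succ, mul_assoc, hz, mul_sub, mul_one, mul_smul_comm]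
    rw [e, Matrix.trace_sub, Matrix.trace_smul, ih.1, ih.2, smul_eq_mul]
    norm_cast
    have h1 : ((n + 1 + 1 : ℕ) : ℝ) * φ = (n + 1 : ℕ) * φ + φ := by push_cast; ring
    have h2 : (n : ℝ) * φ = (n + 1 : ℕ) * φ - φ := by push_cast; ring
    rw [h1, h2, Real.cos_add, Real.cos_sub]; ring


/-! ### Consequences of the quasi-Honda property -/

lemma quasiHonda_of_uLift {k m n : ℕ} {r : (ZMod n)ˣ} {G : Type} [Group G]
    (H : IsQuasiHondaWith k m n r (ULift.{u} G)) : IsQuasiHondaWith k m n r G := by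
  intro ρ hρ x y z h1 h2 h3
  obtain ⟨w, hw⟩ := H ρ hρ ⟨x⟩ ⟨y⟩ ⟨z⟩ (ULift.ext _ _ h1) (ULift.ext _ _ h2) (ULift.ext _ _ h3)
  exact ⟨w.down, (MulEquiv.ulift : ULift.{u} G ≃* G).toMonoidHom.map_isConj hw⟩

/-- Every `2t ∈ [2 cos θ, 2]` is the trace of a commutator of `phaseU θ` with a rotation. -/
lemma exists_rot {θ t : ℝ} (h1 : Real.cos θ ≤ t) (h2 : t ≤ 1) :
    ∃ c s : ℝ, c ^ 2 + s ^ 2 = 1 ∧ c ^ 2 + s ^ 2 * Real.cos θ = t := by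
  rcases eq_or_ne (Real.cos θ) 1 with h | h
  · exact ⟨1, 0, by norm_num, by rw [h] at h1; linarith⟩
  · have hlt : 0 < 1 - Real.cos θ := sub_pos.2 (lt_of_le_of_ne (Real.cos_le_one θ) h)
    refine ⟨√((t - Real.cos θ) / (1 - Real.cos θ)), √((1 - t) / (1 - Real.cos θ)), ?_, ?_⟩ <;>
    rw [Real.sq_sqrt (div_nonneg (by linarith) hlt.le),
      Real.sq_sqrt (div_nonneg (by linarith) hlt.le)] <;> field_simp <;> ring

lemma cos_nat_mul_congr {θ φ : ℝ} (h : Real.cos θ = Real.cos φ) (n : ℕ) :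
    Real.cos (n * θ) = Real.cos (n * φ) := by
  have h1 := Polynomial.Chebyshev.T_real_cos θ n
  have h2 := Polynomial.Chebyshev.T_real_cos φ n
  rw [h] at h1
  exact_mod_cast h1.symm.trans h2

lemma trace_eq_of_isConj {x y : U2} (h : IsConj x y) : x.1.trace = y.1.trace := by
  obtain ⟨g, rfl⟩ := isConj_iff.1 h
  rw [Submonoid.coe_mul, Matrix.trace_mul_comm, ← Submonoid.coe_mul]
  simp

/-- The test in `U(2)`: take `x = diag(1, e^{iθ})` and `z = [x, u]` of trace `2 cos φ`. Then `z ^ ρ` has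
trace `2 cos (ρφ)`, and a commutator of `x ^ ρ` has trace of real part at least `2 cos (ρθ)`. -/
lemma cos_le_of_quasiHonda {k m n : ℕ} {r : (ZMod n)ˣ} (H : IsQuasiHondaWith k m n r U2)
    {ρ : ℕ} (hρ : (ρ : ZMod n) = r) {θ φ : ℝ} (hθ : Real.cos (k * θ) = 1)
    (hφ : Real.cos (m * φ) = 1) (h : Real.cos θ ≤ Real.cos φ) :
    Real.cos (ρ * θ) ≤ Real.cos (ρ * φ) := by
  rcases eq_or_ne (Real.cos θ) (Real.cos φ) with he | hne
  · exact (cos_nat_mul_congr he ρ).le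
  -- `z ^ m = 1` is obtained below after dividing by `sin φ`
  by_cases hs : Real.sin φ = 0
  · have hc : Real.cos φ = Real.cos 0 := by
      rw [Real.cos_zero]
      rcases Real.sin_eq_zero_iff_cos_eq.1 hs with h1 | h1
      · exact h1
      · exact absurd (le_antisymm h (h1 ▸ Real.neg_one_le_cos θ)) hne
    rw [cos_nat_mul_congr hc ρ, mul_zero, Real.cos_zero]
    exact Real.cos_le_one _
  obtain ⟨c, s, hcs, ht⟩ := exists_rot h (Real.cos_le_one φ)
  obtain ⟨htr, hz⟩ := comm_sq hcs ht
  obtain ⟨w, hw⟩ := H ρ (by simpa using hρ) (phaseU θ) (rotU c s hcs) _ rfl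
    (by rw [phaseU_pow, phaseU_eq_one hθ]) (by
      have h1 := sin_smul_pow hz m
      have h2 : Real.sin (m * φ) = 0 := Real.sin_eq_zero_iff_cos_eq.2 (Or.inl hφ)
      have h3 : Real.sin ((m - 1) * φ) = -Real.sin φ := by
        rw [sub_mul, one_mul, Real.sin_sub, h2, hφ]; ring
      rw [h2, h3] at h1
      apply Subtype.ext
      have hs' : ((Real.sin φ : ℝ) : ℂ) ≠ 0 := by exact_mod_cast hs
      apply smul_right_injective _ hs'
      simpa using h1)
  have h1 := trace_eq_of_isConj hw
  have h2 := trace_comm_ge (ρ * θ) w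
  rw [← phaseU_pow, ← zpow_natCast, h1, zpow_natCast, SubmonoidClass.coe_pow, (trace_pow_pair htr hz ρ).1,
    Complex.ofReal_re] at h2
  linarith

/-- Central elements of `U(2)` are scalar, so multiplying by one scales the trace. -/
lemma center_scalar {c : U2} (hc : c ∈ Subgroup.center U2) (q : Matrix (Fin 2) (Fin 2) ℂ) :
    (q * c.1).trace = q.trace * c.1 0 0 := by
  rw [Subgroup.mem_center_iff] at hc
  have h1 := congrArg Subtype.val (hc (phaseU Real.pi))
  have h2 := congrArg Subtype.val (hc (rotU 0 1 (by norm_num)))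
  have h01 := congrFun (congrFun h1 0) 1
  have h10 := congrFun (congrFun h1 1) 0
  have h11 := congrFun (congrFun h2 0) 1
  simp [phaseU, rotU, Matrix.mul_apply, Fin.sum_univ_two, Complex.ext_iff] at h01 h10 h11
  have e01 : c.1 0 1 = 0 := by apply Complex.ext <;> simp <;> linarith
  have e10 : c.1 1 0 = 0 := by apply Complex.ext <;> simp <;> linarith
  have e11 : c.1 1 1 = c.1 0 0 := by apply Complex.ext <;> linarith
  simp [Matrix.trace, Matrix.mul_apply, Fin.sum_univ_two, e01, e10, e11]
  ring

/-- The test in `U(2)` modulo its centre for `m = 2`: a commutator `z` of trace `0` satisfies `z² = -1`,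
so it is an involution in the quotient, and for odd `ρ` every scalar multiple of `z ^ ρ` has trace `0`. -/
lemma cos_nonpos_of_quasiHonda {k n : ℕ} {r : (ZMod n)ˣ}
    (H : IsQuasiHondaWith k 2 n r (U2 ⧸ Subgroup.center U2))
    {ρ : ℕ} (hodd : Odd ρ) (hρ : (ρ : ZMod n) = r) {θ : ℝ} (hθ : Real.cos (k * θ) = 1)
    (h : Real.cos θ ≤ 0) : Real.cos (ρ * θ) ≤ 0 := by
  obtain ⟨c, s, hcs, ht⟩ := exists_rot (t := Real.cos (Real.pi / 2)) (by simpa using h)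
    (Real.cos_le_one _)
  obtain ⟨htr, hz⟩ := comm_sq hcs ht
  set z : U2 := phaseU θ * rotU c s hcs * (phaseU θ)⁻¹ * (rotU c s hcs)⁻¹ with hzdef
  obtain ⟨w, hw⟩ := H ρ (by simpa using hρ) (phaseU θ : U2) (rotU c s hcs : U2) (z : U2) rfl
    (by rw [← QuotientGroup.mk_pow, phaseU_pow, phaseU_eq_one hθ]; rfl) (by
      rw [← QuotientGroup.mk_pow, QuotientGroup.eq_one_iff, Subgroup.mem_center_iff]
      intro g
      apply Subtype.ext
      have : (z ^ 2).1 = -1 := by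
        rw [SubmonoidClass.coe_pow, sq, hz]; simp
      simp only [Submonoid.coe_mul, this]
      simp)
  obtain ⟨w, rfl⟩ := QuotientGroup.mk_surjective w
  obtain ⟨g, hg⟩ := isConj_iff.1 hw
  obtain ⟨g, rfl⟩ := QuotientGroup.mk_surjective g
  rw [zpow_natCast, zpow_natCast] at hg
  have hg' : ((z ^ ρ : U2) : U2 ⧸ Subgroup.center U2) =
      (g * (phaseU θ ^ ρ * w * (phaseU θ ^ ρ)⁻¹ * w⁻¹) * g⁻¹ : U2) := hg.symm
  rw [QuotientGroup.eq] at hg'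
  have h1 := center_scalar hg' (z ^ ρ).1
  obtain ⟨j, hj⟩ := hodd
  have h0 : ((z ^ ρ : U2).1).trace = 0 := by
    have h3 : (ρ : ℝ) * (Real.pi / 2) = Real.pi / 2 + j * Real.pi := by
      rw [hj]; push_cast; ring
    have h4 : Real.cos ((ρ : ℝ) * (Real.pi / 2)) = 0 := by
      rw [h3, Real.cos_add_nat_mul_pi]; simp
    rw [SubmonoidClass.coe_pow, (trace_pow_pair htr hz ρ).1, h4]; simp
  rw [h0, zero_mul, ← Submonoid.coe_mul, mul_inv_cancel_left] at h1
  have h2 := trace_comm_ge (ρ * θ) w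
  rw [← phaseU_pow, trace_eq_of_isConj (isConj_iff.2 ⟨g, rfl⟩), h1, Complex.zero_re] at h2
  linarith

/-! ### The cases in which every group is quasi-Honda -/

lemma zpow_eq_of_cast_eq {G : Type*} [Group G] {x : G} {k : ℕ} (hx : x ^ k = 1) {ρ e : ℤ}
    (h : (ρ : ZMod k) = (e : ZMod k)) : x ^ ρ = x ^ e := by
  obtain ⟨q, hq⟩ := (ZMod.intCast_eq_intCast_iff_dvd_sub _ _ _).1 h.symm
  have : ρ = e + k * q := by omega
  rw [this, zpow_add, zpow_mul, zpow_natCast, hx, one_zpow, mul_one]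

lemma intCast_eq_castHom {k n : ℕ} (hkn : k ∣ n) {ρ : ℤ} {r : ZMod n} (h : (ρ : ZMod n) = r) :
    (ρ : ZMod k) = ZMod.castHom hkn (ZMod k) r := by
  rw [← h, map_intCast]

lemma quasiHonda_of_signs {k m n : ℕ} (hkn : k ∣ n) (hmn : m ∣ n) (r : (ZMod n)ˣ)
    (h1 : ZMod.castHom hkn (ZMod k) r = 1 ∨ ZMod.castHom hkn (ZMod k) r = -1)
    (h2 : ZMod.castHom hmn (ZMod m) r = 1 ∨ ZMod.castHom hmn (ZMod m) r = -1)
    (G : Type*) [Group G] : IsQuasiHondaWith k m n r G := by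
  intro ρ hρ x y z hz hx hzm
  rw [← intCast_eq_castHom hkn hρ] at h1
  rw [← intCast_eq_castHom hmn hρ] at h2
  have hx1 : x ^ ρ = x ∨ x ^ ρ = x⁻¹ := by
    refine h1.imp (fun h => ?_) (fun h => ?_)
    · simpa using zpow_eq_of_cast_eq (e := 1) hx (by simpa using h)
    · simpa using zpow_eq_of_cast_eq (e := -1) hx (by simpa using h)
  have hz1 : z ^ ρ = z ∨ z ^ ρ = z⁻¹ := by
    refine h2.imp (fun h => ?_) (fun h => ?_)
    · simpa using zpow_eq_of_cast_eq (e := 1) hzm (by simpa using h)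
    · simpa using zpow_eq_of_cast_eq (e := -1) hzm (by simpa using h)
  simp only [isConj_iff]
  rcases hx1 with ex | ex <;> rcases hz1 with ez | ez <;> rw [ex, ez, ← hz]
  · exact ⟨y, 1, by group⟩
  · exact ⟨y⁻¹, y, by group⟩
  · exact ⟨y⁻¹, y * x, by group⟩
  · exact ⟨y, x, by group⟩

/-- Here `x` is an involution inverting `z`, and `ρ = 2j + 1` is odd. -/
lemma quasiHonda_two {m n : ℕ} (hn : 2 ∣ n) (r : (ZMod n)ˣ) (G : Type*) [Group G] :
    IsQuasiHondaWith 2 m n r G := by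
  intro ρ hρ x y z hz hx _
  have h1 := unit_small (Or.inl rfl) (Units.map (ZMod.castHom hn (ZMod 2)).toMonoidHom r)
  have h2 : (ρ : ZMod 2) = ((1 : ℤ) : ZMod 2) := by
    have h3 : (-1 : ZMod 2) = 1 := by decide
    rw [intCast_eq_castHom hn hρ, Int.cast_one]
    rw [h3, or_self] at h1
    exact h1
  have hxρ : x ^ ρ = x := by simpa using zpow_eq_of_cast_eq hx h2
  obtain ⟨j, hj⟩ := (ZMod.intCast_eq_intCast_iff_dvd_sub _ _ _).1 h2.symm
  have hρj : ρ = j + 1 + j := by push_cast at hj; omega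
  have hinv : x⁻¹ = x := inv_eq_of_mul_eq_one_left (by rw [← sq, hx])
  have hsc : SemiconjBy x z⁻¹ z := by
    rw [SemiconjBy, ← hz, hinv]
    simp only [mul_inv_rev, inv_inv, hinv, mul_assoc]
  have hscj := hsc.zpow_right j
  refine ⟨z ^ (-j) * y, ?_⟩
  have : x ^ ρ * (z ^ (-j) * y) * (x ^ ρ)⁻¹ * (z ^ (-j) * y)⁻¹ = z ^ ρ := by
    have h4 : x * z ^ (-j) = z ^ j * x := by rw [zpow_neg, ← inv_zpow]; exact hscj
    rw [hxρ, hρj, zpow_add, zpow_add, zpow_one]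
    calc x * (z ^ (-j) * y) * x⁻¹ * (z ^ (-j) * y)⁻¹
        = (x * z ^ (-j)) * y * x⁻¹ * y⁻¹ * z ^ j := by group
      _ = z ^ j * (x * y * x⁻¹ * y⁻¹) * z ^ j := by rw [h4]; group
      _ = z ^ j * z * z ^ j := by rw [hz]
  rw [this]

lemma small_of_le {k m : ℕ} (hk : 3 ≤ k) (hm : 2 ≤ m) (h : (1 : ℚ) ≤ 2 / k + 1 / m) :
    k ≤ 4 ∧ m ≤ 3 := by
  have hk' : (0 : ℚ) < k := by exact_mod_cast (by omega : 0 < k)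
  have hm' : (0 : ℚ) < m := by exact_mod_cast (by omega : 0 < m)
  rw [div_add_div _ _ hk'.ne' hm'.ne', le_div_iff₀ (by positivity)] at h
  have h' : k * m ≤ 2 * m + k := by
    have : (k : ℚ) * m ≤ 2 * m + k := by linarith
    exact_mod_cast this
  constructor <;> by_contra hc <;> push Not at hc <;> nlinarith

/-! ### The converse -/

lemma signs_of_quasiHonda {k m : ℕ} (hk : 3 ≤ k) (hm : 2 ≤ m) (r : (ZMod (Nat.lcm k m))ˣ)
    (H1 : IsQuasiHondaWith k m (Nat.lcm k m) r U2)
    (H2 : IsQuasiHondaWith k m (Nat.lcm k m) r (U2 ⧸ Subgroup.center U2)) :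
    (ZMod.castHom (Nat.dvd_lcm_left k m) (ZMod k) r = 1 ∨
      ZMod.castHom (Nat.dvd_lcm_left k m) (ZMod k) r = -1) ∧
    (ZMod.castHom (Nat.dvd_lcm_right k m) (ZMod m) r = 1 ∨
      ZMod.castHom (Nat.dvd_lcm_right k m) (ZMod m) r = -1) := by
  have : NeZero k := ⟨by omega⟩
  have : NeZero m := ⟨by omega⟩
  have : NeZero (Nat.lcm k m) := ⟨Nat.lcm_ne_zero (by omega) (by omega)⟩
  obtain ⟨ρ, hρ⟩ : ∃ ρ : ℕ, (ρ : ZMod (Nat.lcm k m)) = r := ⟨_, ZMod.natCast_zmod_val _⟩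
  set rk : (ZMod k)ˣ := Units.map (ZMod.castHom (Nat.dvd_lcm_left k m) (ZMod k)).toMonoidHom r
    with hrk
  set rm : (ZMod m)ˣ := Units.map (ZMod.castHom (Nat.dvd_lcm_right k m) (ZMod m)).toMonoidHom r
    with hrm
  have erk : (rk : ZMod k) = ((ρ : ℤ) : ZMod k) :=
    (intCast_eq_castHom (Nat.dvd_lcm_left k m) (by simpa using hρ)).symm
  have erm : (rm : ZMod m) = ((ρ : ℤ) : ZMod m) :=
    (intCast_eq_castHom (Nat.dvd_lcm_right k m) (by simpa using hρ)).symm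
  change ((rk : ZMod k) = 1 ∨ (rk : ZMod k) = -1) ∧ ((rm : ZMod m) = 1 ∨ (rm : ZMod m) = -1)
  have hper : ∀ (n : ℕ) [NeZero n] (v : ℤ), Real.cos (n * (2 * Real.pi * v / n)) = 1 := by
    intro n _ v
    have hn : (n : ℝ) ≠ 0 := NeZero.ne _
    rw [mul_div_cancel₀ _ hn, mul_comm, Real.cos_int_mul_two_pi]
  have hmul : ∀ (n : ℕ) (v : ℤ),
      (ρ : ℝ) * (2 * Real.pi * v / n) = 2 * Real.pi * ((ρ * v : ℤ) : ℝ) / n := by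
    intro n v; push_cast; ring
  have T1 : ∀ (a : ZMod k) (b : ZMod m), k * dist0 b ≤ m * dist0 a →
      k * dist0 ((rm : ZMod m) * b) ≤ m * dist0 ((rk : ZMod k) * a) := by
    intro a b h
    obtain ⟨a, rfl⟩ := ZMod.intCast_surjective a
    obtain ⟨b, rfl⟩ := ZMod.intCast_surjective b
    have h1 := cos_le_of_quasiHonda H1 hρ (hper k a) (hper m b) ((cos_le_cos_iff_dist0 a b).2 h)
    rw [hmul, hmul, cos_le_cos_iff_dist0] at h1
    rw [erk, erm, ← Int.cast_mul, ← Int.cast_mul]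
    exact h1
  have hm1 := rigid_m hk hm rk rm T1
  refine ⟨?_, hm1⟩
  rcases eq_or_ne k m with rfl | hkm
  · exact hm1
  rcases Nat.lt_or_ge 2 m with hm3 | hm2
  · exact rigid_k hk hm3 hkm rk rm hm1 T1
  obtain rfl : m = 2 := by omega
  by_cases hs : k = 2 ∨ k = 3 ∨ k = 4 ∨ k = 6
  · exact unit_small hs rk
  have hodd : Odd ρ := by
    have h3 : (-1 : ZMod 2) = 1 := by decide
    rw [h3, or_self, erm] at hm1
    rw [← ZMod.natCast_eq_one_iff_odd]
    simpa using hm1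
  -- `cos (2πv/k) ≤ 0` is compared with a quarter turn, the angle `2π·1/4`
  have hquarter : ∀ v : ℤ, Real.cos (2 * Real.pi * v / k) ≤ 0 ↔
      (k - 1) / 4 < dist0 (v : ZMod k) := by
    intro v
    have h1 := cos_le_cos_iff_dist0 (k := k) (m := 4) v 1
    have h2 : Real.cos (2 * Real.pi * (1 : ℤ) / (4 : ℕ)) = 0 := by
      rw [← Real.cos_pi_div_two]; congr 1; push_cast; ring
    have h3 : dist0 ((1 : ℤ) : ZMod 4) = 1 := by decide
    rw [h2, h3] at h1
    rw [h1]
    omega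
  refine rigid_k_of_threshold (t := (k - 1) / 4) (by omega) (by omega) rk fun a ha => ?_
  obtain ⟨a, rfl⟩ := ZMod.intCast_surjective a
  rw [← hquarter] at ha
  have h1 := cos_nonpos_of_quasiHonda H2 hodd hρ (hper k a) ha
  rw [hmul, hquarter] at h1
  rwa [erk, ← Int.cast_mul]

theorem every_group_quasiHonda_iff (k m : ℕ) (hk : 2 ≤ k) (hm : 2 ≤ m)
    (r : (ZMod (Nat.lcm k m))ˣ) :
    (∀ (G : Type u) [Group G], IsQuasiHondaWith k m (Nat.lcm k m) r G) ↔
      ((1 : ℚ) ≤ 2 / k + 1 / m ∨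
        ((r : ZMod (Nat.lcm k m)) = 1 ∨ (r : ZMod (Nat.lcm k m)) = -1) ∨
        (Nat.gcd k m ≤ 2 ∧
          ∃ rstar : (ZMod (Nat.lcm k m))ˣ,
            ZMod.castHom (Nat.dvd_lcm_left k m) (ZMod k) (rstar : ZMod (Nat.lcm k m)) =
              ZMod.castHom (Nat.dvd_lcm_left k m) (ZMod k) (r : ZMod (Nat.lcm k m)) ∧
            ZMod.castHom (Nat.dvd_lcm_right k m) (ZMod m) (rstar : ZMod (Nat.lcm k m)) =
              - ZMod.castHom (Nat.dvd_lcm_right k m) (ZMod m) (r : ZMod (Nat.lcm k m)) ∧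
            ((rstar : ZMod (Nat.lcm k m)) = 1 ∨ (rstar : ZMod (Nat.lcm k m)) = -1))) := by
  constructor
  · intro H
    by_cases hE : (1 : ℚ) ≤ 2 / k + 1 / m
    · exact Or.inl hE
    right
    have hk3 : 3 ≤ k := by
      by_contra hlt
      obtain rfl : k = 2 := by omega
      apply hE
      have : (0 : ℚ) ≤ 1 / m := by positivity
      norm_num at this ⊢
    obtain ⟨h1, h2⟩ := signs_of_quasiHonda hk3 hm r (quasiHonda_of_uLift (H (ULift.{u} U2)))
      (quasiHonda_of_uLift (H (ULift.{u} (U2 ⧸ Subgroup.center U2))))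
    -- residues modulo `lcm k m` are determined by those modulo `k` and `m`
    have hlcm : ∀ e : ℤ, ZMod.castHom (Nat.dvd_lcm_left k m) (ZMod k) r = (e : ZMod k) →
        ZMod.castHom (Nat.dvd_lcm_right k m) (ZMod m) r = (e : ZMod m) →
        (r : ZMod (Nat.lcm k m)) = (e : ZMod (Nat.lcm k m)) := by
      intro e he1 he2
      obtain ⟨ρ, hρ⟩ := ZMod.intCast_surjective (r : ZMod (Nat.lcm k m))
      rw [← intCast_eq_castHom _ hρ, ZMod.intCast_eq_intCast_iff_dvd_sub] at he1 he2
      rw [← hρ, ZMod.intCast_eq_intCast_iff_dvd_sub]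
      have := Int.coe_lcm_dvd he1 he2
      simpa [Int.lcm] using this
    have hgcd : ∀ e : ℤ, (e = 1 ∨ e = -1) →
        ZMod.castHom (Nat.dvd_lcm_left k m) (ZMod k) r = (e : ZMod k) →
        ZMod.castHom (Nat.dvd_lcm_right k m) (ZMod m) r = ((-e : ℤ) : ZMod m) →
        Nat.gcd k m ≤ 2 := by
      intro e he he1 he2
      obtain ⟨ρ, hρ⟩ := ZMod.intCast_surjective (r : ZMod (Nat.lcm k m))
      rw [← intCast_eq_castHom _ hρ, ZMod.intCast_eq_intCast_iff_dvd_sub] at he1 he2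
      have g1 := (Int.natCast_dvd_natCast.2 (Nat.gcd_dvd_left k m)).trans he1
      have g2 := (Int.natCast_dvd_natCast.2 (Nat.gcd_dvd_right k m)).trans he2
      have g3 := dvd_sub g1 g2
      have g4 : ((Nat.gcd k m : ℕ) : ℤ) ∣ 2 := by
        rcases he with rfl | rfl
        · have : (1 - ρ - (-1 - ρ) : ℤ) = 2 := by ring
          rwa [this] at g3
        · have : (-1 - ρ - (- -1 - ρ) : ℤ) = -2 := by ring
          rwa [this, dvd_neg] at g3
      exact_mod_cast Int.le_of_dvd (by norm_num) g4
    rcases h1 with h1 | h1 <;> rcases h2 with h2 | h2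
    · exact Or.inl (Or.inl (by simpa using hlcm 1 (by simpa using h1) (by simpa using h2)))
    · refine Or.inr ⟨hgcd 1 (Or.inl rfl) (by simpa using h1) (by simpa using h2), 1, ?_, ?_,
        Or.inl rfl⟩
      · rw [h1, Units.val_one, map_one]
      · rw [h2, Units.val_one, map_one, neg_neg]
    · refine Or.inr ⟨hgcd (-1) (Or.inr rfl) (by simpa using h1) (by simpa using h2), -1, ?_, ?_,
        Or.inr (by simp)⟩
      · rw [h1, Units.val_neg, Units.val_one, map_neg, map_one]
      · rw [h2, Units.val_neg, Units.val_one, map_neg, map_one]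
    · exact Or.inl (Or.inr (by simpa using hlcm (-1) (by simpa using h1) (by simpa using h2)))
  · rintro (hE | hr | ⟨-, s, hs1, hs2, hs⟩) G _
    · rcases eq_or_ne k 2 with rfl | hk2
      · exact quasiHonda_two (Nat.dvd_lcm_left 2 m) r G
      · have hsm := small_of_le (by omega) hm hE
        exact quasiHonda_of_signs (Nat.dvd_lcm_left k m) (Nat.dvd_lcm_right k m) r
          (unit_small (by omega) (Units.map (ZMod.castHom _ (ZMod k)).toMonoidHom r))
          (unit_small (by omega) (Units.map (ZMod.castHom _ (ZMod m)).toMonoidHom r)) G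
    · refine quasiHonda_of_signs (Nat.dvd_lcm_left k m) (Nat.dvd_lcm_right k m) r ?_ ?_ G <;>
        exact hr.imp (fun h => by rw [h, map_one]) (fun h => by rw [h, map_neg, map_one])
    · refine quasiHonda_of_signs (Nat.dvd_lcm_left k m) (Nat.dvd_lcm_right k m) r ?_ ?_ G
      · rw [← hs1]
        exact hs.imp (fun h => by rw [h, map_one]) (fun h => by rw [h, map_neg, map_one])
      · rw [← neg_eq_iff_eq_neg.2 hs2]
        exact hs.symm.imp (fun h => by rw [h, map_neg, map_one, neg_neg])
          (fun h => by rw [h, map_one])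
end
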